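/- Let J : (0,1) → ℝ be nonconstant and continuously differentiable, satisfying condition V_α for some 0 < α < 1/s, where s ∈ ℕ and s ≥ 3. Let n₁(J) = sup{n ∈ ℕ : Σ_{j=1}^{n}(J(j/(n+1)) − J̄_n)² = 0}, where J̄_n = (1/n)Σ_{j=1}^{n} J(j/(n+1)). Fix positive constants e, E and reals r, k with k > 2 and 0 < r < k. Then there exists a constant ℰ₅ > 0 depending only on e, E, r, k and J, α, s such that: for every n > n₁(J) and all reals e₁,…,e_n with Σ_{i=1}^{n}|e_i − ē|^r ≥ e·n and Σ_{i=1}^{n}|e_i − ē|^k ≤ E·n, the matrix A with entries a_{ij} = e_i·J(j/(n+1)) satisfies ‖ℱ_A − e_{1,A}‖ ≤ ℰ₅·(log n)²·n^{−1+((4/k)−1)⁺+((4/s)−1)⁺}. -/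

import Mathlib

open Finset MeasureTheory

/-- Density of the standard normal distribution. -/
noncomputable def gaussD (x : ℝ) : ℝ := (Real.sqrt (2 * Real.pi))⁻¹ * Real.exp (-(x ^ 2) / 2)

/-- Distribution function of the standard normal distribution. -/
noncomputable def gaussCDF (x : ℝ) : ℝ := ∫ t in Set.Iic x, gaussD t

section RankDefs

variable {m : ℕ}

/-- Row mean `a_{i·}`. -/
noncomputable def rowMean (A : Matrix (Fin m) (Fin m) ℝ) (i : Fin m) : ℝ := (∑ j, A i j) / (m : ℝ)

/-- Column mean `a_{·j}`. -/
noncomputable def colMean (A : Matrix (Fin m) (Fin m) ℝ) (j : Fin m) : ℝ := (∑ i, A i j) / (m : ℝ)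

/-- Grand mean `a_{··}`. -/
noncomputable def totMean (A : Matrix (Fin m) (Fin m) ℝ) : ℝ := (∑ i, ∑ j, A i j) / (m : ℝ) ^ 2

/-- Centered entries `a_{ij} − a_{i·} − a_{·j} + a_{··}`. -/
noncomputable def ctr (A : Matrix (Fin m) (Fin m) ℝ) (i j : Fin m) : ℝ :=
  A i j - rowMean A i - colMean A j + totMean A

/-- `σ_A²`. -/
noncomputable def sigma2 (A : Matrix (Fin m) (Fin m) ℝ) : ℝ :=
  (∑ i, ∑ j, ctr A i j ^ 2) / ((m : ℝ) - 1)

/-- `σ_A`. -/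
noncomputable def sdev (A : Matrix (Fin m) (Fin m) ℝ) : ℝ := Real.sqrt (sigma2 A)

/-- Standardized matrix `Â = (â_{ij})`. -/
noncomputable def hatM (A : Matrix (Fin m) (Fin m) ℝ) : Matrix (Fin m) (Fin m) ℝ :=
  fun i j => ctr A i j / sdev A

/-- `μ_A = n·a_{··}`. -/
noncomputable def muM (A : Matrix (Fin m) (Fin m) ℝ) : ℝ := (m : ℝ) * totMean A

/-- The linear rank statistic `T_A(π) = Σ_i a_{iπ(i)}`. -/
noncomputable def rankT (A : Matrix (Fin m) (Fin m) ℝ) (π : Equiv.Perm (Fin m)) : ℝ :=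
  ∑ i, A i (π i)

/-- Expectation with respect to the uniform distribution on permutations. -/
noncomputable def permExp (f : Equiv.Perm (Fin m) → ℝ) : ℝ :=
  (∑ π : Equiv.Perm (Fin m), f π) / (Nat.factorial m : ℝ)

/-- The standardized rank statistic `𝒯_A = (T_A − μ_A)/σ_A`. -/
noncomputable def rankTstd (A : Matrix (Fin m) (Fin m) ℝ) (π : Equiv.Perm (Fin m)) : ℝ :=
  (rankT A π - muM A) / sdev A

/-- `F_A`, the distribution function of `T_A`. -/
noncomputable def Fr (A : Matrix (Fin m) (Fin m) ℝ) (z : ℝ) : ℝ :=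
  permExp (fun π => if rankT A π ≤ z then (1 : ℝ) else 0)

/-- `ℱ_A`, the distribution function of `𝒯_A`. -/
noncomputable def Fstd (A : Matrix (Fin m) (Fin m) ℝ) (z : ℝ) : ℝ :=
  permExp (fun π => if rankTstd A π ≤ z then (1 : ℝ) else 0)

/-- `β_A = Σ_{i,j} |â_{ij}|³`. -/
noncomputable def betaM (A : Matrix (Fin m) (Fin m) ℝ) : ℝ := ∑ i, ∑ j, |hatM A i j| ^ 3

/-- `δ_A = Σ_{i,j} |â_{ij}|⁴`. -/
noncomputable def deltaM (A : Matrix (Fin m) (Fin m) ℝ) : ℝ := ∑ i, ∑ j, |hatM A i j| ^ 4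

/-- `η_A = Σ_{i,j} |â_{ij}|⁵`. -/
noncomputable def etaM (A : Matrix (Fin m) (Fin m) ℝ) : ℝ := ∑ i, ∑ j, |hatM A i j| ^ 5

/-- `D_A = (δ_A/n)^{1/2}`. -/
noncomputable def DM (A : Matrix (Fin m) (Fin m) ℝ) : ℝ := Real.sqrt (deltaM A / (m : ℝ))

/-- `E_A = (η_A/n)^{1/3}`. -/
noncomputable def EM (A : Matrix (Fin m) (Fin m) ℝ) : ℝ := (etaM A / (m : ℝ)) ^ ((1 : ℝ) / 3)

/-- `λ_{1,A} = (1/n)Σ_{i,j} â_{ij}³`. -/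
noncomputable def lam1 (A : Matrix (Fin m) (Fin m) ℝ) : ℝ := (∑ i, ∑ j, hatM A i j ^ 3) / (m : ℝ)

/-- `λ_{2,A}`. -/
noncomputable def lam2 (A : Matrix (Fin m) (Fin m) ℝ) : ℝ :=
  (∑ i, ∑ j, hatM A i j ^ 4) / (m : ℝ) + 3 / (m : ℝ)
    - 3 / (m : ℝ) ^ 2 *
        ∑ i, ∑ j, ∑ k, (hatM A i j ^ 2 * hatM A i k ^ 2 + hatM A i j ^ 2 * hatM A k j ^ 2)

/-- First-order Edgeworth expansion `e_{1,A}`. -/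
noncomputable def edge1 (A : Matrix (Fin m) (Fin m) ℝ) (x : ℝ) : ℝ :=
  gaussCDF x - gaussD x * (lam1 A / 6) * (x ^ 2 - 1)

/-- Second-order Edgeworth expansion `e_{2,A}`. -/
noncomputable def edge2 (A : Matrix (Fin m) (Fin m) ℝ) (x : ℝ) : ℝ :=
  gaussCDF x - gaussD x *
    (lam1 A / 6 * (x ^ 2 - 1) + lam2 A / 24 * (x ^ 3 - 3 * x)
      + lam1 A ^ 2 / 72 * (x ^ 5 - 10 * x ^ 3 + 15 * x))

/-- `k`-th iterated difference `Δ_y^k G`. -/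
noncomputable def Δiter (y : ℝ) (k : ℕ) (G : ℝ → ℝ) : ℝ → ℝ :=
  (fun (G : ℝ → ℝ) (z : ℝ) => G (z + y) - G z)^[k] G

/-- The interpolating polynomial `P_y^k(x; z, F)` of `F` at the points `z, z+y, …, z+ky`. -/
noncomputable def interp (y : ℝ) (k : ℕ) (z : ℝ) (F : ℝ → ℝ) (x : ℝ) : ℝ :=
  F z + ∑ s ∈ Finset.Icc 1 k,
    Δiter y s F z * ∏ i ∈ Finset.Icc 1 s, (x - z - ((i : ℝ) - 1) * y) / ((i : ℝ) * y)

end RankDefs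

/-- Condition `V_α`: `|J'(t)| ≤ Γ (t(1−t))^{−1−α}` on `(0,1)` for some `Γ > 0`. -/
def condV (J : ℝ → ℝ) (α : ℝ) : Prop :=
  ∃ Γ : ℝ, 0 < Γ ∧ ∀ t ∈ Set.Ioo (0 : ℝ) 1, |deriv J t| ≤ Γ * (t * (1 - t)) ^ (-1 - α)

/-- `n₁(J)`, the largest `n` for which the approximating scores
`J(j/(n+1))`, `j = 1, …, n`, are all equal. -/
noncomputable def nOne (J : ℝ → ℝ) : ℕ :=
  sSup {n : ℕ | ∑ j ∈ Finset.Icc 1 n,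
    (J ((j : ℝ) / ((n : ℝ) + 1))
      - (∑ j' ∈ Finset.Icc 1 n, J ((j' : ℝ) / ((n : ℝ) + 1))) / (n : ℝ)) ^ 2 = 0}

lemma gaussD_eq (x : ℝ) : gaussD x = ProbabilityTheory.gaussianPDFReal 0 1 x := by
  unfold gaussD ProbabilityTheory.gaussianPDFReal
  simp

lemma gaussD_cont : Continuous gaussD := by
  unfold gaussD; fun_prop

lemma gaussD_pos (x : ℝ) : 0 < gaussD x := by
  unfold gaussD; positivity

lemma gaussD_integrable : Integrable gaussD := by
  have := ProbabilityTheory.integrable_gaussianPDFReal 0 1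
  rwa [← (funext gaussD_eq)] at this

lemma gaussD_integral : ∫ x, gaussD x = 1 := by
  have := ProbabilityTheory.integral_gaussianPDFReal_eq_one 0 (v := 1) (by simp)
  rwa [← (funext gaussD_eq)] at this

lemma gaussD_neg (x : ℝ) : gaussD (-x) = gaussD x := by
  unfold gaussD; simp

lemma gaussCDF_sub (a b : ℝ) : gaussCDF b - gaussCDF a = ∫ t in a..b, gaussD t := by
  unfold gaussCDF
  rw [intervalIntegral.integral_Iic_sub_Iic gaussD_integrable.integrableOn
    gaussD_integrable.integrableOn]

lemma gaussCDF_hasDerivAt (x : ℝ) : HasDerivAt gaussCDF (gaussD x) x := by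
  have h : gaussCDF = fun b => gaussCDF 0 + ∫ t in (0:ℝ)..b, gaussD t := by
    funext b
    rw [← gaussCDF_sub]; ring
  rw [h]
  exact ((intervalIntegral.integral_hasDerivAt_right (gaussD_cont.intervalIntegrable _ _)
    (gaussD_cont.stronglyMeasurableAtFilter _ _) gaussD_cont.continuousAt)).const_add _

lemma gaussCDF_mono : Monotone gaussCDF :=
  monotone_of_hasDerivAt_nonneg gaussCDF_hasDerivAt (fun x => (gaussD_pos x).le)

lemma gaussCDF_nonneg (x : ℝ) : 0 ≤ gaussCDF x :=
  setIntegral_nonneg measurableSet_Iic (fun t _ => (gaussD_pos t).le)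

lemma gaussCDF_compl (x : ℝ) : 1 - gaussCDF x = ∫ t in Set.Ioi x, gaussD t := by
  rw [← gaussD_integral, gaussCDF, ← Set.compl_Iic,
    ← integral_add_compl (measurableSet_Iic (a := x)) gaussD_integrable]
  ring

lemma gaussCDF_neg (x : ℝ) : gaussCDF (-x) = 1 - gaussCDF x := by
  rw [gaussCDF_compl, gaussCDF]
  have h := integral_comp_neg_Iic (-x) gaussD
  simpa [gaussD_neg] using h

lemma gaussCDF_le_one (x : ℝ) : gaussCDF x ≤ 1 := by
  have := gaussCDF_nonneg (-x)
  rw [gaussCDF_neg] at this; linarith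

lemma gaussCDF_zero : gaussCDF 0 = 1 / 2 := by
  have := gaussCDF_neg 0
  rw [neg_zero] at this; linarith

lemma gaussD_le (x : ℝ) : gaussD x ≤ Real.exp (-(x^2)/2) := by
  unfold gaussD
  have h1 : 1 ≤ Real.sqrt (2 * Real.pi) := by
    rw [Real.one_le_sqrt]; nlinarith [Real.pi_gt_three]
  have : (Real.sqrt (2 * Real.pi))⁻¹ ≤ 1 := inv_le_one_of_one_le₀ h1
  exact mul_le_of_le_one_left (Real.exp_pos _).le this

/-- Gaussian tail bound. -/
lemma gaussCDF_tail (a : ℝ) (ha : 0 ≤ a) : 1 - gaussCDF a ≤ 2 * Real.exp (-(a^2)/4) := by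
  rw [gaussCDF_compl]
  have hi : Integrable (fun t : ℝ => (Real.sqrt (2 * Real.pi))⁻¹ * Real.exp (-(a^2)/4) *
      Real.exp (-(1/4) * t^2)) := (integrable_exp_neg_mul_sq (by norm_num)).const_mul _
  calc ∫ t in Set.Ioi a, gaussD t
      ≤ ∫ t in Set.Ioi a, (Real.sqrt (2 * Real.pi))⁻¹ * Real.exp (-(a^2)/4) *
          Real.exp (-(1/4) * t^2) := by
        apply setIntegral_mono_on gaussD_integrable.integrableOn hi.integrableOn measurableSet_Ioi
        intro t ht
        have ht' : a < t := ht
        unfold gaussD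
        rw [mul_assoc, ← Real.exp_add]
        gcongr
        nlinarith
    _ ≤ ∫ t, (Real.sqrt (2 * Real.pi))⁻¹ * Real.exp (-(a^2)/4) * Real.exp (-(1/4) * t^2) :=
        setIntegral_le_integral hi (Filter.Eventually.of_forall fun t => by positivity)
    _ = (Real.sqrt (2 * Real.pi))⁻¹ * Real.exp (-(a^2)/4) * Real.sqrt (Real.pi / (1/4)) := by
        rw [integral_const_mul, integral_gaussian]
    _ = ((Real.sqrt (2 * Real.pi))⁻¹ * Real.sqrt (Real.pi / (1/4))) * Real.exp (-(a^2)/4) := by ring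
    _ ≤ 2 * Real.exp (-(a^2)/4) := by
        gcongr
        rw [← Real.sqrt_inv, ← Real.sqrt_mul (by positivity)]
        apply Real.sqrt_le_iff.mpr
        refine ⟨by norm_num, ?_⟩
        have := Real.pi_pos
        field_simp
        norm_num

/-- Fourier transform of the Gaussian, real form. -/
lemma integral_cos_gauss (b : ℝ) (hb : 0 < b) (x : ℝ) :
    ∫ t : ℝ, Real.cos (t * x) * Real.exp (-b * t^2) =
      Real.sqrt (Real.pi / b) * Real.exp (-(x^2) / (4*b)) := by
  have h := fourierIntegral_gaussian (b := (b:ℂ)) (by simpa using hb) (x : ℂ)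
  have hintg : Integrable (fun t : ℝ => Complex.exp (Complex.I * x * t) * Complex.exp (-b * t^2)) := by
    have := integrable_cexp_quadratic (b := (b:ℂ)) (by simpa using hb) (Complex.I * x) 0
    refine this.congr (Filter.Eventually.of_forall fun t => ?_)
    simp only
    rw [← Complex.exp_add]; congr 1; ring
  have h2 := congrArg Complex.re h
  have h3 : (∫ t : ℝ, Complex.exp (Complex.I * x * t) * Complex.exp (-b * t^2)).re
      = ∫ t : ℝ, (Complex.exp (Complex.I * x * t) * Complex.exp (-b * t^2)).re := by
    exact (integral_re hintg).symm
  rw [h3] at h2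
  have h4 : ∀ t : ℝ, (Complex.exp (Complex.I * x * t) * Complex.exp (-b * t^2)).re
      = Real.cos (t * x) * Real.exp (-b * t^2) := by
    intro t
    have e1 : Complex.exp (-b * t^2) = ((Real.exp (-b*t^2) : ℝ) : ℂ) := by push_cast; rfl
    have e2 : Complex.exp (Complex.I * x * t) = Complex.exp (((t * x : ℝ):ℂ) * Complex.I) := by
      congr 1; push_cast; ring
    rw [e1, e2, Complex.re_mul_ofReal, Complex.exp_ofReal_mul_I_re]
  simp only [h4] at h2
  rw [h2]
  have e1 : ((Real.pi : ℂ) / b) ^ (1/2 : ℂ) = ((Real.sqrt (Real.pi / b) : ℝ) : ℂ) := by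
    rw [Real.sqrt_eq_rpow, Complex.ofReal_cpow (by positivity)]
    push_cast; rfl
  have e2 : Complex.exp (-(x:ℂ)^2 / (4 * b)) = ((Real.exp (-(x^2) / (4*b)) : ℝ) : ℂ) := by
    push_cast; rfl
  rw [e1, e2, ← Complex.ofReal_mul, Complex.ofReal_re]

lemma integrable_cos_gauss (b : ℝ) (hb : 0 < b) (x : ℝ) :
    Integrable (fun t : ℝ => Real.cos (t * x) * Real.exp (-b * t^2)) := by
  refine (integrable_exp_neg_mul_sq hb).mono' (by fun_prop) (Filter.Eventually.of_forall fun t => ?_)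
  rw [norm_mul, Real.norm_eq_abs, Real.norm_eq_abs, Real.abs_exp]
  exact mul_le_of_le_one_left (Real.exp_pos _).le (Real.abs_cos_le_one _)

lemma integrable_sinc_gauss (b : ℝ) (hb : 0 < b) (x : ℝ) :
    Integrable (fun t : ℝ => Real.exp (-b * t^2) * (Real.sin (t * x) / t)) := by
  refine ((integrable_exp_neg_mul_sq hb).mul_const |x|).mono'
    (by measurability) (Filter.Eventually.of_forall fun t => ?_)
  rw [norm_mul, Real.norm_eq_abs, Real.norm_eq_abs, Real.abs_exp]
  refine mul_le_mul_of_nonneg_left ?_ (Real.exp_pos _).le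
  rw [abs_div]
  by_cases ht : t = 0
  · simp [ht]
  · rw [div_le_iff₀ (abs_pos.mpr ht), ← abs_mul, mul_comm]
    rw [mul_comm x t]
    exact Real.abs_sin_le_abs

lemma gaussCDF_sin (ε : ℝ) (hε : 0 < ε) (x : ℝ) :
    gaussCDF (x / ε) = 1/2 + (2 * Real.pi)⁻¹ *
      ∫ t : ℝ, Real.exp (-(ε^2/2) * t^2) * (Real.sin (t * x) / t) := by
  set b := ε^2/2 with hbdef
  have hb : 0 < b := by positivity
  have hd : ∀ x₀ : ℝ, HasDerivAt
      (fun x => ∫ t : ℝ, Real.exp (-b * t^2) * (Real.sin (t * x) / t))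
      (∫ t : ℝ, Real.cos (t * x₀) * Real.exp (-b * t^2)) x₀ := by
    intro x₀
    refine (hasDerivAt_integral_of_dominated_loc_of_deriv_le (s := Set.univ) Filter.univ_mem
      (bound := fun t => Real.exp (-b * t^2))
      (F' := fun x t => Real.cos (t * x) * Real.exp (-b * t^2))
      ?_ (integrable_sinc_gauss b hb x₀) ?_ ?_ (integrable_exp_neg_mul_sq hb) ?_).2
    · exact Filter.Eventually.of_forall fun x => (integrable_sinc_gauss b hb x).aestronglyMeasurable
    · exact (integrable_cos_gauss b hb x₀).aestronglyMeasurable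
    · refine Filter.Eventually.of_forall fun t x _ => ?_
      rw [norm_mul, Real.norm_eq_abs, Real.norm_eq_abs, Real.abs_exp]
      exact mul_le_of_le_one_left (Real.exp_pos _).le (Real.abs_cos_le_one _)
    · have h0 : ∀ᵐ t : ℝ, t ≠ 0 := by
        simp [ae_iff]
      filter_upwards [h0] with t ht x _
      have h1 : HasDerivAt (fun x : ℝ => t * x) t x := by
        simpa using (hasDerivAt_id x).const_mul t
      have := ((h1.sin).div_const t).const_mul (Real.exp (-b * t^2))
      refine this.congr_deriv ?_
      field_simp
  have hd1 : ∀ x₀ : ℝ, HasDerivAt (fun x => gaussCDF (x / ε) - (1/2 + (2 * Real.pi)⁻¹ *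
      ∫ t : ℝ, Real.exp (-b * t^2) * (Real.sin (t * x) / t))) 0 x₀ := by
    intro x₀
    have h1 := (gaussCDF_hasDerivAt (x₀ / ε)).comp x₀ ((hasDerivAt_id x₀).div_const ε)
    have h2 := ((hd x₀).const_mul (2 * Real.pi)⁻¹).const_add (1/2)
    have h3 := h1.sub h2
    refine h3.congr_deriv ?_
    rw [integral_cos_gauss b hb]
    unfold gaussD
    have e1 : Real.sqrt (Real.pi / b) = Real.sqrt (2 * Real.pi) / ε := by
      rw [hbdef]
      rw [show Real.pi / (ε^2/2) = (2 * Real.pi) / ε^2 by field_simp]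
      rw [Real.sqrt_div (by positivity), Real.sqrt_sq hε.le]
    have e2 : -(x₀ / ε)^2/2 = -(x₀^2)/(4*b) := by rw [hbdef]; field_simp; norm_num
    rw [e1, e2]
    have hp := Real.sqrt_pos.mpr (show (0:ℝ) < 2 * Real.pi by positivity)
    have hpp := Real.mul_self_sqrt (show (0:ℝ) ≤ 2 * Real.pi by positivity)
    set q := Real.sqrt (2 * Real.pi)
    rw [← hpp]
    field_simp
    simp
  have hc := is_const_of_deriv_eq_zero (fun x => (hd1 x).differentiableAt) (fun x => (hd1 x).deriv) x 0
  simp only [zero_div, gaussCDF_zero, mul_zero, Real.sin_zero, integral_zero, add_zero, sub_self] at hc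
  linarith

lemma integrable_abs_gauss (b : ℝ) (hb : 0 < b) :
    Integrable (fun t : ℝ => |t| * Real.exp (-b * t^2)) := by
  have := (integrable_mul_exp_neg_mul_sq hb).norm
  refine this.congr (Filter.Eventually.of_forall fun t => ?_)
  simp

lemma integrable_sq_gauss (b : ℝ) (hb : 0 < b) :
    Integrable (fun t : ℝ => t^2 * Real.exp (-b * t^2)) := by
  have := integrable_rpow_mul_exp_neg_mul_sq hb (s := 2) (by norm_num)
  simpa using this

lemma integrable_t_sin_gauss (b : ℝ) (hb : 0 < b) (x : ℝ) :
    Integrable (fun t : ℝ => t * Real.sin (t * x) * Real.exp (-b * t^2)) := by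
  refine (integrable_abs_gauss b hb).mono' (by fun_prop) (Filter.Eventually.of_forall fun t => ?_)
  rw [norm_mul, norm_mul, Real.norm_eq_abs, Real.norm_eq_abs, Real.norm_eq_abs, Real.abs_exp]
  refine mul_le_mul_of_nonneg_right ?_ (Real.exp_pos _).le
  exact mul_le_of_le_one_right (abs_nonneg _) (Real.abs_sin_le_one _)

lemma integrable_sq_cos_gauss (b : ℝ) (hb : 0 < b) (x : ℝ) :
    Integrable (fun t : ℝ => t^2 * Real.cos (t * x) * Real.exp (-b * t^2)) := by
  refine (integrable_sq_gauss b hb).mono' (by fun_prop) (Filter.Eventually.of_forall fun t => ?_)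
  rw [norm_mul, norm_mul, Real.norm_eq_abs, Real.norm_eq_abs, Real.norm_eq_abs, Real.abs_exp,
    abs_of_nonneg (sq_nonneg t)]
  refine mul_le_mul_of_nonneg_right ?_ (Real.exp_pos _).le
  exact mul_le_of_le_one_right (sq_nonneg _) (Real.abs_cos_le_one _)

lemma integrable_t_cos_gauss (b : ℝ) (hb : 0 < b) (x : ℝ) :
    Integrable (fun t : ℝ => t * Real.cos (t * x) * Real.exp (-b * t^2)) := by
  refine (integrable_abs_gauss b hb).mono' (by fun_prop) (Filter.Eventually.of_forall fun t => ?_)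
  rw [norm_mul, norm_mul, Real.norm_eq_abs, Real.norm_eq_abs, Real.norm_eq_abs, Real.abs_exp]
  refine mul_le_mul_of_nonneg_right ?_ (Real.exp_pos _).le
  exact mul_le_of_le_one_right (abs_nonneg _) (Real.abs_cos_le_one _)

lemma integrable_sin_gauss (b : ℝ) (hb : 0 < b) (x : ℝ) :
    Integrable (fun t : ℝ => Real.sin (t * x) * Real.exp (-b * t^2)) := by
  refine (integrable_exp_neg_mul_sq hb).mono' (by fun_prop) (Filter.Eventually.of_forall fun t => ?_)
  rw [norm_mul, Real.norm_eq_abs, Real.norm_eq_abs, Real.abs_exp]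
  exact mul_le_of_le_one_left (Real.exp_pos _).le (Real.abs_sin_le_one _)

lemma integral_sq_cos_gauss (b : ℝ) (hb : 0 < b) (x : ℝ) :
    ∫ t : ℝ, t^2 * Real.cos (t * x) * Real.exp (-b * t^2) =
      (1/(2*b)) * (1 - x^2/(2*b)) * (Real.sqrt (Real.pi / b) * Real.exp (-(x^2) / (4*b))) := by
  rw [← integral_cos_gauss b hb x]
  have hE : ∀ t : ℝ, HasDerivAt (fun t : ℝ => Real.exp (-b * t^2))
      (Real.exp (-b * t^2) * (-b * (2 * t))) t := by
    intro t
    have := ((hasDerivAt_pow 2 t).const_mul (-b)).exp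
    simpa using this
  have hl : ∀ t : ℝ, HasDerivAt (fun t : ℝ => t * x) x t := by
    intro t; simpa using (hasDerivAt_id t).mul_const x
  have h1 : ∫ t : ℝ, (x * (Real.cos (t * x) * Real.exp (-b * t^2))
      - 2 * b * (t * Real.sin (t * x) * Real.exp (-b * t^2))) = 0 := by
    refine integral_eq_zero_of_hasDerivAt_of_integrable
      (f := fun t : ℝ => Real.sin (t * x) * Real.exp (-b * t^2)) ?_ ?_ ?_
    · intro t
      refine ((hl t).sin.mul (hE t)).congr_deriv ?_
      ring
    · exact ((integrable_cos_gauss b hb x).const_mul _).sub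
        ((integrable_t_sin_gauss b hb x).const_mul _)
    · exact integrable_sin_gauss b hb x
  have h2 : ∫ t : ℝ, (Real.cos (t * x) * Real.exp (-b * t^2)
      - x * (t * Real.sin (t * x) * Real.exp (-b * t^2))
      - 2 * b * (t^2 * Real.cos (t * x) * Real.exp (-b * t^2))) = 0 := by
    refine integral_eq_zero_of_hasDerivAt_of_integrable
      (f := fun t : ℝ => t * Real.cos (t * x) * Real.exp (-b * t^2)) ?_ ?_ ?_
    · intro t
      refine (((hasDerivAt_id t).mul (hl t).cos).mul (hE t)).congr_deriv ?_
      simp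
      ring
    · exact ((integrable_cos_gauss b hb x).sub
        ((integrable_t_sin_gauss b hb x).const_mul _)).sub
        ((integrable_sq_cos_gauss b hb x).const_mul _)
    · exact integrable_t_cos_gauss b hb x
  rw [integral_sub ((integrable_cos_gauss b hb x).const_mul _)
        ((integrable_t_sin_gauss b hb x).const_mul _), integral_const_mul, integral_const_mul] at h1
  have hsp := integral_sub ((integrable_cos_gauss b hb x).sub
        ((integrable_t_sin_gauss b hb x).const_mul x))
        ((integrable_sq_cos_gauss b hb x).const_mul (2*b))
  simp only [Pi.sub_apply] at hsp
  rw [hsp,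
      integral_sub (integrable_cos_gauss b hb x)
        ((integrable_t_sin_gauss b hb x).const_mul _), integral_const_mul, integral_const_mul] at h2
  set C := ∫ t : ℝ, Real.cos (t * x) * Real.exp (-b * t^2)
  set S := ∫ t : ℝ, t * Real.sin (t * x) * Real.exp (-b * t^2)
  set Q := ∫ t : ℝ, t^2 * Real.cos (t * x) * Real.exp (-b * t^2)
  have hS : S = x * C / (2*b) := by field_simp; linarith
  have hQ : Q = (C - x * S) / (2*b) := by field_simp; linarith
  rw [hQ, hS]; field_simp

/-- Characteristic function of the uniform average of `T`. -/
noncomputable def fch {Ω : Type*} [Fintype Ω] (T : Ω → ℝ) (t : ℝ) : ℂ :=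
  (∑ ω, Complex.exp (Complex.I * t * T ω)) / (Fintype.card Ω : ℂ)

/-- Fourier transform of the first-order Edgeworth expansion. -/
noncomputable def gch (l : ℝ) (t : ℝ) : ℂ :=
  Complex.exp (-(t:ℂ)^2/2) * (1 - Complex.I * t^3 * l / 6)

lemma fch_re {Ω : Type*} [Fintype Ω] (T : Ω → ℝ) (t : ℝ) :
    (fch T t).re = (∑ ω, Real.cos (t * T ω)) / (Fintype.card Ω : ℝ) := by
  unfold fch
  rw [← Complex.ofReal_natCast, Complex.div_ofReal_re, Complex.re_sum]
  congr 1
  refine Finset.sum_congr rfl fun ω _ => ?_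
  rw [← Complex.exp_ofReal_mul_I_re]
  congr 2; push_cast; ring

lemma fch_im {Ω : Type*} [Fintype Ω] (T : Ω → ℝ) (t : ℝ) :
    (fch T t).im = (∑ ω, Real.sin (t * T ω)) / (Fintype.card Ω : ℝ) := by
  unfold fch
  rw [← Complex.ofReal_natCast, Complex.div_ofReal_im, Complex.im_sum]
  congr 1
  refine Finset.sum_congr rfl fun ω _ => ?_
  rw [← Complex.exp_ofReal_mul_I_im]
  congr 2; push_cast; ring

lemma gch_eq (l t : ℝ) : gch l t =
    ((Real.exp (-t^2/2) : ℝ) : ℂ) * (1 - Complex.I * ((t^3 * l / 6 : ℝ) : ℂ)) := by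
  unfold gch; push_cast; ring

lemma gch_re (l t : ℝ) : (gch l t).re = Real.exp (-t^2/2) := by
  rw [gch_eq, Complex.re_ofReal_mul, Complex.sub_re, Complex.I_mul_re, Complex.ofReal_im]; simp

lemma gch_im (l t : ℝ) : (gch l t).im = - Real.exp (-t^2/2) * (t^3 * l / 6) := by
  rw [gch_eq, Complex.im_ofReal_mul, Complex.sub_im, Complex.I_mul_im, Complex.ofReal_re]; simp

lemma im_bound (z t : ℝ) (w : ℂ) :
    |Real.sin (t*z) * w.re - Real.cos (t*z) * w.im| ≤ ‖w‖ := by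
  apply abs_le_of_sq_le_sq _ (norm_nonneg _)
  rw [← Complex.normSq_eq_norm_sq, Complex.normSq_apply]
  nlinarith [Real.sin_sq_add_cos_sq (t*z), sq_nonneg (Real.cos (t*z) * w.re + Real.sin (t*z) * w.im)]

/-- Smoothed Edgeworth expansion. -/
noncomputable def Gsm (l τ z : ℝ) : ℝ :=
  gaussCDF (z/τ) - (l/6) * τ⁻¹^3 * (gaussD (z/τ) * ((z/τ)^2 - 1))

lemma smooth_diff {Ω : Type*} [Fintype Ω] [Nonempty Ω] (T : Ω → ℝ) (l ε z : ℝ) (hε : 0 < ε)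
    (b : ℝ → ℝ) (hb : Integrable b)
    (hbd : ∀ t : ℝ, t ≠ 0 → Real.exp (-(ε^2/2) * t^2) * ‖fch T t - gch l t‖ / |t| ≤ b t) :
    |(∑ ω, gaussCDF ((z - T ω)/ε)) / (Fintype.card Ω : ℝ) - Gsm l (Real.sqrt (1+ε^2)) z|
      ≤ ∫ t, b t := by
  set N : ℝ := (Fintype.card Ω : ℝ) with hN
  have hNpos : 0 < N := by rw [hN]; exact_mod_cast Fintype.card_pos
  set τ := Real.sqrt (1+ε^2) with hτ
  have hτ2 : τ^2 = 1 + ε^2 := Real.sq_sqrt (by positivity)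
  have hτpos : 0 < τ := Real.sqrt_pos.mpr (by positivity)
  have hτb : 0 < τ^2/2 := by positivity
  have hεb : 0 < ε^2/2 := by positivity
  let r : ℝ → ℝ := fun t =>
    (∑ ω, Real.exp (-(ε^2/2) * t^2) * (Real.sin (t * (z - T ω)) / t)) / N
      - Real.exp (-(τ^2/2) * t^2) * (Real.sin (t * z) / t)
      - (l/6) * (t^2 * Real.cos (t * z) * Real.exp (-(τ^2/2) * t^2))
  have i1 : Integrable (fun t : ℝ =>
      (∑ ω, Real.exp (-(ε^2/2) * t^2) * (Real.sin (t * (z - T ω)) / t)) / N) :=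
    (integrable_finsetSum _ (fun ω _ => integrable_sinc_gauss _ hεb (z - T ω))).div_const _
  have i2 := integrable_sinc_gauss _ hτb z
  have i3 := (integrable_sq_cos_gauss _ hτb z).const_mul (l/6)
  have hr : ∫ t, r t = (2 * Real.pi) *
      ((∑ ω, gaussCDF ((z - T ω)/ε)) / N - Gsm l τ z) := by
    have e1 : ∫ t, r t = (∫ t : ℝ,
      (∑ ω, Real.exp (-(ε^2/2) * t^2) * (Real.sin (t * (z - T ω)) / t)) / N)
      - (∫ t : ℝ, Real.exp (-(τ^2/2) * t^2) * (Real.sin (t * z) / t))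
      - (∫ t : ℝ, (l/6) * (t^2 * Real.cos (t * z) * Real.exp (-(τ^2/2) * t^2))) := by
      rw [← integral_sub i1 i2]
      exact integral_sub (i1.sub i2) i3
    rw [e1, integral_div, integral_finsetSum _ (fun ω _ => integrable_sinc_gauss _ hεb (z - T ω)),
      integral_const_mul, integral_sq_cos_gauss _ hτb]
    have hpi := Real.pi_pos
    have e2 : ∀ ω, ∫ t : ℝ, Real.exp (-(ε^2/2) * t^2) * (Real.sin (t * (z - T ω)) / t)
        = (2 * Real.pi) * (gaussCDF ((z - T ω)/ε) - 1/2) := by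
      intro ω
      rw [gaussCDF_sin ε hε (z - T ω), add_sub_cancel_left, mul_inv_cancel_left₀ (by positivity)]
    have e3 : ∫ t : ℝ, Real.exp (-(τ^2/2) * t^2) * (Real.sin (t * z) / t)
        = (2 * Real.pi) * (gaussCDF (z/τ) - 1/2) := by
      rw [gaussCDF_sin τ hτpos z, add_sub_cancel_left, mul_inv_cancel_left₀ (by positivity)]
    simp only [e2, e3]
    rw [← Finset.mul_sum, Finset.sum_sub_distrib, Finset.sum_const, Finset.card_univ, nsmul_eq_mul]
    have e4 : Real.sqrt (Real.pi / (τ^2/2)) = Real.sqrt (2 * Real.pi) / τ := by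
      rw [show Real.pi / (τ^2/2) = (2 * Real.pi) / τ^2 by field_simp]
      rw [Real.sqrt_div (by positivity), Real.sqrt_sq hτpos.le]
    have e5 : -(z^2)/(4*(τ^2/2)) = -(z / τ)^2/2  := by field_simp; norm_num
    rw [e4, e5, ← hN]
    unfold Gsm gaussD
    have hp := Real.sqrt_pos.mpr (show (0:ℝ) < 2 * Real.pi by positivity)
    have hpp := Real.mul_self_sqrt (show (0:ℝ) ≤ 2 * Real.pi by positivity)
    set q := Real.sqrt (2 * Real.pi)
    rw [← hpp]
    field_simp
    ring
  have hrb : ∀ᵐ t : ℝ, ‖r t‖ ≤ b t := by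
    have h0 : ∀ᵐ t : ℝ, t ≠ 0 := by simp [ae_iff]
    filter_upwards [h0] with t ht
    refine le_trans ?_ (hbd t ht)
    have e : r t = Real.exp (-(ε^2/2) * t^2) * (Real.sin (t*z) * (fch T t - gch l t).re
        - Real.cos (t*z) * (fch T t - gch l t).im) / t := by
      rw [Complex.sub_re, Complex.sub_im, fch_re, fch_im, gch_re, gch_im]
      simp only [r]
      have e0 : Real.exp (-(τ^2/2) * t^2) = Real.exp (-(ε^2/2) * t^2) * Real.exp (-t^2/2) := by
        rw [← Real.exp_add, hτ2]; congr 1; ring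
      rw [e0]
      have e1 : ∑ ω, Real.exp (-(ε^2/2) * t^2) * (Real.sin (t * (z - T ω)) / t)
         = Real.exp (-(ε^2/2) * t^2) / t * (Real.sin (t*z) * ∑ ω, Real.cos (t * T ω)
            - Real.cos (t*z) * ∑ ω, Real.sin (t * T ω)) := by
        rw [Finset.mul_sum, Finset.mul_sum, ← Finset.sum_sub_distrib, Finset.mul_sum]
        refine Finset.sum_congr rfl fun ω _ => ?_
        rw [mul_sub t, Real.sin_sub]; ring
      rw [e1, ← hN]
      field_simp
      ring
    rw [e, Real.norm_eq_abs, abs_div, abs_mul, Real.abs_exp]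
    gcongr
    exact im_bound z t _
  have h := norm_integral_le_of_norm_le hb hrb
  rw [hr, Real.norm_eq_abs, abs_mul, abs_of_pos (by positivity)] at h
  have : 1 ≤ 2 * Real.pi := by nlinarith [Real.pi_gt_three]
  nlinarith [abs_nonneg ((∑ ω, gaussCDF ((z - T ω)/ε)) / N - Gsm l τ z)]

lemma slow_var (R R' : ℝ → ℝ) (hR : ∀ x, HasDerivAt R (R' x) x) (C : ℝ)
    (hC : ∀ x, |R' x| * (1 + |x|) ≤ C) (z w : ℝ) (hw : 1/2 ≤ w) (hw1 : w ≤ 1) :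
    |R (z * w) - R z| ≤ 2 * C * (1 - w) := by
  have hC0 : 0 ≤ C := le_trans (by positivity) (hC 0)
  have key : ‖R (z * w) - R z‖ ≤ (2 * C / (1 + |z|)) * ‖z * w - z‖ := by
    apply Convex.norm_image_sub_le_of_norm_hasDerivWithin_le (s := Set.uIcc z (z*w)) (f' := R')
      (fun x _ => (hR x).hasDerivWithinAt) _ (convex_uIcc _ _) Set.left_mem_uIcc Set.right_mem_uIcc
    intro x hx
    have hxz : |z| / 2 ≤ |x| := by
      rcases Set.mem_uIcc.mp hx with ⟨h1, h2⟩ | ⟨h1, h2⟩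
      · rcases le_total 0 z with hz | hz
        · rw [abs_of_nonneg hz, abs_of_nonneg (hz.trans h1)]; linarith
        · have : x ≤ 0 := h2.trans (mul_nonpos_of_nonpos_of_nonneg hz (by linarith))
          rw [abs_of_nonpos hz, abs_of_nonpos this]; nlinarith
      · rcases le_total 0 z with hz | hz
        · have : 0 ≤ x := le_trans (mul_nonneg hz (by linarith)) h1
          rw [abs_of_nonneg hz, abs_of_nonneg this]; nlinarith
        · rw [abs_of_nonpos hz, abs_of_nonpos (h2.trans hz)]; linarith
    rw [Real.norm_eq_abs, le_div_iff₀ (by positivity)]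
    have := hC x
    have h3 := abs_nonneg (R' x)
    nlinarith
  have e : ‖z * w - z‖ = |z| * (1 - w) := by
    rw [Real.norm_eq_abs, show z * w - z = -(z * (1 - w)) by ring, abs_neg, abs_mul,
      abs_of_nonneg (by linarith : (0:ℝ) ≤ 1 - w)]
  rw [e, Real.norm_eq_abs] at key
  refine key.trans ?_
  have h1 : 0 ≤ 1 - w := by linarith
  have : |z| / (1 + |z|) ≤ 1 := by rw [div_le_one (by positivity)]; linarith
  calc 2 * C / (1 + |z|) * (|z| * (1 - w)) = 2 * C * (1 - w) * (|z| / (1 + |z|)) := by ring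
    _ ≤ 2 * C * (1 - w) * 1 := by gcongr
    _ = _ := by ring

lemma gauss_poly (x : ℝ) : Real.exp (-(x^2)/2) * (1 + x^2/2 + x^4/8) ≤ 1 := by
  have h := Real.quadratic_le_exp_of_nonneg (show (0:ℝ) ≤ x^2/2 by positivity)
  have h2 : Real.exp (-(x^2)/2) * Real.exp (x^2/2) = 1 := by
    rw [← Real.exp_add]; simp; ring
  rw [← h2]
  gcongr
  nlinarith

lemma gaussD_bd (x B : ℝ) (c : ℝ) (hc : 0 ≤ c) (hB : B ≤ c * (1 + x^2/2 + x^4/8)) :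
    gaussD x * B ≤ c := by
  have h1 := gaussD_le x
  have h2 := gauss_poly x
  have h3 := (gaussD_pos x).le
  have : 0 ≤ 1 + x^2/2 + x^4/8 := by positivity
  calc gaussD x * B ≤ gaussD x * (c * (1 + x^2/2 + x^4/8)) := by gcongr
    _ ≤ Real.exp (-(x^2)/2) * (c * (1 + x^2/2 + x^4/8)) := by gcongr
    _ = c * (Real.exp (-(x^2)/2) * (1 + x^2/2 + x^4/8)) := by ring
    _ ≤ c * 1 := by gcongr
    _ = c := by ring

/-- The first Edgeworth correction polynomial times the density. -/
noncomputable def gP (x : ℝ) : ℝ := gaussD x * (x^2 - 1)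

lemma gaussD_hasDerivAt (x : ℝ) : HasDerivAt gaussD (-(x * gaussD x)) x := by
  unfold gaussD
  have h : HasDerivAt (fun x : ℝ => -(x^2)/2) (-x) x := by
    refine (((hasDerivAt_pow 2 x).neg).div_const 2).congr_deriv ?_
    simp
    ring
  refine ((h.exp).const_mul _).congr_deriv ?_
  ring

lemma gP_hasDerivAt (x : ℝ) : HasDerivAt gP (gaussD x * (3 * x - x^3)) x := by
  unfold gP
  refine ((gaussD_hasDerivAt x).mul ((hasDerivAt_pow 2 x).sub_const 1)).congr_deriv ?_
  simp
  ring

lemma gP_deriv_bd (x : ℝ) : |gaussD x * (3 * x - x^3)| * (1 + |x|) ≤ 16 := by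
  rw [abs_mul, abs_of_pos (gaussD_pos x), mul_assoc]
  apply gaussD_bd _ _ _ (by norm_num)
  have h1 : |3 * x - x^3| ≤ 3 * |x| + |x|^3 := by
    refine (abs_sub _ _).trans ?_
    rw [abs_mul, abs_pow]; norm_num
  have hx := abs_nonneg x
  have e2 : x^2 = |x|^2 := (sq_abs x).symm
  have e4 : x^4 = |x|^4 := by rw [← abs_pow]; exact (abs_of_nonneg (by positivity)).symm
  rw [e2, e4]
  set y := |x|
  calc |3 * x - x^3| * (1 + y) ≤ (3 * y + y^3) * (1 + y) := by gcongr
    _ ≤ _ := by nlinarith [sq_nonneg (y-1), sq_nonneg (y^2-y), sq_nonneg (y^2)]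

lemma gP_bd (x : ℝ) : |gP x| ≤ 2 := by
  unfold gP
  rw [abs_mul, abs_of_pos (gaussD_pos x)]
  apply gaussD_bd _ _ _ (by norm_num)
  rw [abs_le]; constructor <;> nlinarith [sq_nonneg x, sq_nonneg (x^2)]

lemma gaussD_one (x : ℝ) : |gaussD x| * (1 + |x|) ≤ 2 := by
  rw [abs_of_pos (gaussD_pos x)]
  apply gaussD_bd _ _ _ (by norm_num)
  have e2 : x^2 = |x|^2 := (sq_abs x).symm
  nlinarith [sq_nonneg (|x|-1), sq_nonneg (x^2)]

lemma lip_of_bd (R R' : ℝ → ℝ) (hR : ∀ x, HasDerivAt R (R' x) x) (C : ℝ)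
    (hC : ∀ x, |R' x| * (1 + |x|) ≤ C) (x y : ℝ) : |R x - R y| ≤ C * |x - y| := by
  have := Convex.norm_image_sub_le_of_norm_hasDerivWithin_le (s := Set.univ) (f := R) (f' := R')
    (C := C) (x := y) (y := x)
    (fun x _ => (hR x).hasDerivWithinAt) (fun x _ => by
      rw [Real.norm_eq_abs]; have := hC x; nlinarith [abs_nonneg x, abs_nonneg (R' x)])
    convex_univ trivial trivial
  simpa using this

/-- The Edgeworth expansion with parameter `l`. -/
noncomputable def Gedge (l z : ℝ) : ℝ := gaussCDF z - gaussD z * (l/6) * (z^2 - 1)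

lemma Gedge_eq (l z : ℝ) : Gedge l z = gaussCDF z - (l/6) * gP z := by
  unfold Gedge gP; ring

lemma Gsm_close (l ε z : ℝ) (hl : |l| ≤ 1) (hε : 0 < ε) (hε1 : ε ≤ 1) :
    |Gsm l (Real.sqrt (1+ε^2)) z - Gedge l z| ≤ 20 * ε := by
  set τ := Real.sqrt (1+ε^2) with hτ
  have hτ2 : τ^2 = 1 + ε^2 := Real.sq_sqrt (by positivity)
  have hτpos : 0 < τ := Real.sqrt_pos.mpr (by positivity)
  have hτ1 : 1 ≤ τ := by nlinarith
  have hτε : τ ≤ 1 + ε := by nlinarith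
  have hw1 : τ⁻¹ ≤ 1 := inv_le_one_of_one_le₀ hτ1
  have hwm : τ⁻¹ * τ = 1 := inv_mul_cancel₀ hτpos.ne'
  set w := τ⁻¹ with hw
  have hwpos : 0 < w := inv_pos.mpr hτpos
  have hwε : 1 - w ≤ ε := by nlinarith
  have hwh : 1/2 ≤ w := by nlinarith
  have hzw : z / τ = z * w := div_eq_mul_inv _ _
  have e1 : Gsm l τ z - Gedge l z = (gaussCDF (z*w) - gaussCDF z)
      - (l/6) * (w^3 * (gP (z*w) - gP z) - (1 - w^3) * gP z) := by
    rw [Gedge_eq]; unfold Gsm gP; rw [hzw]; ring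
  have b1 := slow_var gaussCDF gaussD gaussCDF_hasDerivAt 2 gaussD_one z w hwh hw1
  have b2 := slow_var gP _ gP_hasDerivAt 16 gP_deriv_bd z w hwh hw1
  have b3 := gP_bd z
  have hw3 : w^3 ≤ 1 := pow_le_one₀ hwpos.le hw1
  have hw3' : 1 - w^3 ≤ 3 * ε := by nlinarith [sq_nonneg w]
  have b4 : |w^3 * (gP (z*w) - gP z)| ≤ 32 * ε := by
    rw [abs_mul, abs_of_pos (by positivity : 0 < w^3)]
    calc w^3 * |gP (z*w) - gP z| ≤ 1 * |gP (z*w) - gP z| := by gcongr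
      _ ≤ 32 * ε := by nlinarith
  have b5 : |(1 - w^3) * gP z| ≤ 6 * ε := by
    rw [abs_mul, abs_of_nonneg (by linarith)]
    nlinarith [abs_nonneg (gP z)]
  have b6 : |(l/6) * (w^3 * (gP (z*w) - gP z) - (1 - w^3) * gP z)| ≤ (1/6) * (38 * ε) := by
    rw [abs_mul, abs_div]
    gcongr
    · norm_num
    · exact (abs_sub _ _).trans (by linarith)
  rw [e1]
  refine (abs_sub _ _).trans ?_
  linarith

lemma Gedge_lip (l x y : ℝ) (hl : |l| ≤ 1) : |Gedge l x - Gedge l y| ≤ 5 * |x - y| := by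
  have b1 := lip_of_bd gaussCDF gaussD gaussCDF_hasDerivAt 2 gaussD_one x y
  have b2 := lip_of_bd gP _ gP_hasDerivAt 16 gP_deriv_bd x y
  have e : Gedge l x - Gedge l y = (gaussCDF x - gaussCDF y) - (l/6) * (gP x - gP y) := by
    rw [Gedge_eq, Gedge_eq]; ring
  have b3 : |(l/6) * (gP x - gP y)| ≤ (1/6) * (16 * |x - y|) := by
    rw [abs_mul, abs_div]
    gcongr
    norm_num
  rw [e]
  refine (abs_sub _ _).trans ?_
  linarith [abs_nonneg (x-y)]

/-- Smoothing inequality with a Gaussian kernel. -/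
theorem smoothing_ineq {Ω : Type*} [Fintype Ω] [Nonempty Ω] (T : Ω → ℝ) (l ε a z : ℝ)
    (hl : |l| ≤ 1) (hε : 0 < ε) (hε1 : ε ≤ 1) (ha : 0 ≤ a)
    (b : ℝ → ℝ) (hb : Integrable b)
    (hbd : ∀ t : ℝ, t ≠ 0 → Real.exp (-(ε^2/2) * t^2) * ‖fch T t - gch l t‖ / |t| ≤ b t) :
    |(∑ ω, if T ω ≤ z then (1:ℝ) else 0) / (Fintype.card Ω : ℝ) - Gedge l z|
      ≤ (∫ t, b t) + 2 * Real.exp (-(a^2)/4) + 5 * (a * ε) + 20 * ε := by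
  set N : ℝ := (Fintype.card Ω : ℝ) with hN
  have hNpos : 0 < N := by rw [hN]; exact_mod_cast Fintype.card_pos
  have htail := gaussCDF_tail a ha
  have hs := fun z => abs_le.mp (smooth_diff T l ε z hε b hb hbd)
  have hc := fun z => abs_le.mp (Gsm_close l ε z hl hε hε1)
  have up : (∑ ω, if T ω ≤ z then (1:ℝ) else 0) / N ≤
      (∑ ω, gaussCDF ((z + a * ε - T ω)/ε)) / N + (1 - gaussCDF a) := by
    rw [← sub_le_iff_le_add', ← sub_div, div_le_iff₀ hNpos, ← Finset.sum_sub_distrib]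
    have : ∑ ω : Ω, (1 - gaussCDF a) = (1 - gaussCDF a) * N := by
      rw [Finset.sum_const, Finset.card_univ, nsmul_eq_mul, mul_comm]
    rw [← this]
    apply Finset.sum_le_sum
    intro ω _
    split_ifs with h
    · have : gaussCDF a ≤ gaussCDF ((z + a * ε - T ω)/ε) := gaussCDF_mono (by
        rw [le_div_iff₀ hε]; linarith)
      linarith
    · have := gaussCDF_nonneg ((z + a * ε - T ω)/ε)
      have := gaussCDF_le_one a
      linarith
  have lo : (∑ ω, gaussCDF ((z - a * ε - T ω)/ε)) / N ≤
      (∑ ω, if T ω ≤ z then (1:ℝ) else 0) / N + (1 - gaussCDF a) := by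
    rw [← sub_le_iff_le_add', ← sub_div, div_le_iff₀ hNpos, ← Finset.sum_sub_distrib]
    have : ∑ ω : Ω, (1 - gaussCDF a) = (1 - gaussCDF a) * N := by
      rw [Finset.sum_const, Finset.card_univ, nsmul_eq_mul, mul_comm]
    rw [← this]
    apply Finset.sum_le_sum
    intro ω _
    split_ifs with h
    · have := gaussCDF_le_one ((z - a * ε - T ω)/ε)
      have := gaussCDF_le_one a
      linarith
    · have : gaussCDF ((z - a * ε - T ω)/ε) ≤ gaussCDF (-a) := gaussCDF_mono (by
        rw [div_le_iff₀ hε]; push Not at h; linarith)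
      rw [gaussCDF_neg] at this
      linarith
  have haε : 0 ≤ a * ε := by positivity
  have l1 := abs_le.mp (Gedge_lip l (z + a*ε) z hl)
  have l2 := abs_le.mp (Gedge_lip l (z - a*ε) z hl)
  rw [show z + a * ε - z = a * ε by ring, abs_of_nonneg haε] at l1
  rw [show z - a * ε - z = -(a * ε) by ring, abs_neg, abs_of_nonneg haε] at l2
  have s1 := hs (z + a*ε)
  have s2 := hs (z - a*ε)
  have c1 := hc (z + a*ε)
  have c2 := hc (z - a*ε)
  rw [abs_le]
  constructor
  · linarith [s2.1, c2.1, l2.1]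
  · linarith [s1.2, c1.2, l1.2]

lemma swapS {n : ℕ} {R : Type*} [CommRing R] (c h : Fin n → R) (F : Equiv.Perm (Fin n) → R) :
    (n : R) * ∑ π : Equiv.Perm (Fin n), (∑ i, c i * h (π i)) * F π
      = ∑ π : Equiv.Perm (Fin n), ∑ i, ∑ k, c i * h (π k) * F (π * Equiv.swap i k) := by
  have key : ∀ i k : Fin n, ∑ π : Equiv.Perm (Fin n), c i * h (π k) * F (π * Equiv.swap i k)
      = ∑ π : Equiv.Perm (Fin n), c i * h (π i) * F π := by
    intro i k
    refine Fintype.sum_equiv (Equiv.mulRight (Equiv.swap i k)) _ _ ?_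
    intro π
    simp [Equiv.Perm.mul_apply]
  have e1 : ∑ π : Equiv.Perm (Fin n), ∑ i, ∑ k, c i * h (π k) * F (π * Equiv.swap i k)
      = ∑ i, ∑ k : Fin n, ∑ π : Equiv.Perm (Fin n), c i * h (π k) * F (π * Equiv.swap i k) := by
    rw [Finset.sum_comm]
    refine Finset.sum_congr rfl fun i _ => ?_
    rw [Finset.sum_comm]
  rw [e1]
  simp_rw [key]
  simp only [Finset.sum_const, Finset.card_univ, Fintype.card_fin, nsmul_eq_mul, Finset.mul_sum]
  rw [Finset.sum_comm]
  refine Finset.sum_congr rfl fun i _ => ?_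
  simp_rw [Finset.sum_mul, Finset.mul_sum]

lemma meanS {n : ℕ} {R : Type*} [CommRing R] (c h : Fin n → R) :
    (n : R) * ∑ π : Equiv.Perm (Fin n), (∑ i, c i * h (π i))
      = (Fintype.card (Equiv.Perm (Fin n)) : R) * ((∑ i, c i) * ∑ i, h i) := by
  have := swapS c h (fun _ => 1)
  simp only [mul_one] at this
  rw [this]
  have : ∀ π : Equiv.Perm (Fin n), ∑ i, ∑ k, c i * h (π k) = (∑ i, c i) * ∑ i, h i := by
    intro π
    rw [Finset.sum_mul]
    refine Finset.sum_congr rfl fun i _ => ?_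
    rw [← Finset.mul_sum, Equiv.sum_comp π h]
  simp [this]

/-- the statistic -/
noncomputable def Tst {n : ℕ} (x w : Fin n → ℝ) (π : Equiv.Perm (Fin n)) : ℝ := ∑ i, x i * w (π i)

lemma Tst_swap {n : ℕ} (x w : Fin n → ℝ) (π : Equiv.Perm (Fin n)) (i k : Fin n) :
    Tst x w (π * Equiv.swap i k) = Tst x w π - (x i - x k) * (w (π i) - w (π k)) := by
  unfold Tst
  by_cases hik : i = k
  · subst hik; simp
  have hk : k ∈ (Finset.univ.erase i) := by simp [Ne.symm hik]
  rw [← Finset.add_sum_erase _ _ (Finset.mem_univ i), ← Finset.add_sum_erase _ _ hk,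
    ← Finset.add_sum_erase _ (fun i => x i * w (π i)) (Finset.mem_univ i),
    ← Finset.add_sum_erase _ (fun i => x i * w (π i)) hk]
  have : ∑ j ∈ (Finset.univ.erase i).erase k, x j * w ((π * Equiv.swap i k) j)
      = ∑ j ∈ (Finset.univ.erase i).erase k, x j * w (π j) := by
    refine Finset.sum_congr rfl fun j hj => ?_
    simp only [Finset.mem_erase, Finset.mem_univ, and_true] at hj
    rw [Equiv.Perm.mul_apply, Equiv.swap_apply_of_ne_of_ne hj.2 hj.1]
  rw [this]
  simp only [Equiv.Perm.mul_apply, Equiv.swap_apply_left, Equiv.swap_apply_right]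
  ring

/-- double sum of a product -/
lemma dsum {n : ℕ} (a b : Fin n → ℝ) : ∑ i, ∑ k, a i * b k = (∑ i, a i) * ∑ k, b k := by
  rw [Finset.sum_mul_sum]

lemma secondmom {n : ℕ} (u v : Fin n → ℝ) :
    (n : ℝ) * (n - 1) * ∑ π, Tst u v π ^ 2 = Fintype.card (Equiv.Perm (Fin n)) *
      ((∑ i, u i)^2 * (∑ i, v i)^2 - (∑ i, u i^2) * (∑ i, v i)^2
        - (∑ i, u i)^2 * (∑ i, v i^2) + n * ((∑ i, u i^2) * (∑ i, v i^2))) := by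
  have h1 := swapS u v (Tst u v)
  have h2 : ∀ π : Equiv.Perm (Fin n), ∑ i, ∑ k, u i * v (π k) * Tst u v (π * Equiv.swap i k)
      = ((∑ i, u i) * (∑ i, v i)) * Tst u v π - ((∑ i, v i) * Tst (fun i => u i^2) v π
         - (∑ i, u i^2) * (∑ i, v i^2) - Tst u v π ^2
         + (∑ i, u i) * Tst u (fun i => v i^2) π) := by
    intro π
    have a1 : ∀ i k, u i * v (π k) * Tst u v (π * Equiv.swap i k) =
        u i * (v (π k) * Tst u v π) - ((u i^2 * v (π i)) * v (π k) - u i^2 * v (π k)^2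
          - (u i * v (π i)) * (u k * v (π k)) + u i * (u k * v (π k)^2)) := by
      intro i k; rw [Tst_swap]; ring
    simp_rw [a1, Finset.sum_sub_distrib, Finset.sum_add_distrib, Finset.sum_sub_distrib, dsum]
    have e1 : ∑ k, v (π k) = ∑ k, v k := Equiv.sum_comp π v
    have e2 : ∑ k, v (π k)^2 = ∑ k, v k^2 := Equiv.sum_comp π (fun k => v k^2)
    rw [← Finset.sum_mul, e1, e2]
    simp only [Tst]
    ring
  simp_rw [h2] at h1
  have h3 : ∀ π : Equiv.Perm (Fin n), (∑ i, u i * v (π i)) * Tst u v π = Tst u v π ^ 2 := by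
    intro π; simp only [Tst]; ring
  simp_rw [h3] at h1
  simp_rw [Finset.sum_sub_distrib, Finset.sum_add_distrib, Finset.sum_sub_distrib,
    ← Finset.mul_sum] at h1
  have m1 := meanS u v
  have m2 := meanS (fun i => u i^2) v
  have m3 := meanS u (fun i => v i^2)
  change (n:ℝ) * ∑ π, Tst u v π = _ at m1
  change (n:ℝ) * ∑ π, Tst (fun i => u i^2) v π = _ at m2
  change (n:ℝ) * ∑ π, Tst u (fun i => v i^2) π = _ at m3
  simp only [Finset.sum_const, Finset.card_univ, nsmul_eq_mul] at h1
  linear_combination (n:ℝ) * h1 + ((∑ i, u i) * (∑ i, v i)) * m1 - (∑ i, v i) * m2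
    - (∑ i, u i) * m3

/-- mean of pair sums -/
lemma pairsum {n : ℕ} (hn : 0 < n) (a b : Fin n → ℝ) :
    ∑ π : Equiv.Perm (Fin n), ∑ i, ∑ k, (a i + a k) * (b (π i) + b (π k))
      = Fintype.card (Equiv.Perm (Fin n)) * (4 * ((∑ i, a i) * ∑ i, b i)) := by
  have h : ∀ π : Equiv.Perm (Fin n), ∑ i, ∑ k, (a i + a k) * (b (π i) + b (π k))
      = 2 * (n * ∑ i, a i * b (π i)) + 2 * ((∑ i, a i) * ∑ i, b i) := by
    intro π
    have a1 : ∀ i k, (a i + a k) * (b (π i) + b (π k)) =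
        ((a i * b (π i)) * 1 + a i * b (π k)) + (b (π i) * a k + 1 * (a k * b (π k))) := by
      intro i k; ring
    simp_rw [a1, Finset.sum_add_distrib, dsum]
    have e1 : ∑ k, b (π k) = ∑ k, b k := Equiv.sum_comp π b
    rw [e1]; simp; ring
  simp_rw [h, Finset.sum_add_distrib, ← Finset.mul_sum, meanS a b]
  simp only [Finset.sum_const, Finset.card_univ, nsmul_eq_mul]
  ring

noncomputable def ph {n : ℕ} (x w : Fin n → ℝ) (t : ℝ) (π : Equiv.Perm (Fin n)) : ℂ :=
  Complex.exp (Complex.I * t * Tst x w π)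

/-- exchange difference -/
noncomputable def dl {n : ℕ} (x w : Fin n → ℝ) (π : Equiv.Perm (Fin n)) (i k : Fin n) : ℝ :=
  (x i - x k) * (w (π i) - w (π k))

lemma ph_norm {n : ℕ} (x w : Fin n → ℝ) (t : ℝ) (π : Equiv.Perm (Fin n)) : ‖ph x w t π‖ = 1 := by
  unfold ph
  rw [show Complex.I * t * Tst x w π = ((t * Tst x w π : ℝ) : ℂ) * Complex.I by push_cast; ring]
  exact Complex.norm_exp_ofReal_mul_I _

lemma ph_swap {n : ℕ} (x w : Fin n → ℝ) (t : ℝ) (π : Equiv.Perm (Fin n)) (i k : Fin n) :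
    ph x w t (π * Equiv.swap i k)
      = ph x w t π * Complex.exp (((-(t * dl x w π i k) : ℝ) : ℂ) * Complex.I) := by
  unfold ph
  rw [← Complex.exp_add, Tst_swap]
  congr 1
  unfold dl
  push_cast; ring

lemma exp1 (θ : ℝ) : ‖Complex.exp ((θ : ℂ) * Complex.I) - 1‖ ≤ |θ| := by
  have := Real.norm_exp_I_mul_ofReal_sub_one_le (x := θ)
  rwa [mul_comm, Real.norm_eq_abs] at this

lemma exp3 (θ : ℝ) : ‖Complex.exp ((θ : ℂ) * Complex.I) - 1 - θ * Complex.I + θ^2/2‖ ≤ 4 * |θ|^3 := by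
  rcases le_total |θ| 1 with h | h
  · have := Complex.exp_bound (x := (θ : ℂ) * Complex.I) (by simpa using h) (n := 3) (by norm_num)
    have e : ∑ m ∈ Finset.range 3, ((θ : ℂ) * Complex.I)^m / (m.factorial : ℂ)
        = 1 + θ * Complex.I - θ^2/2 := by
      simp [Finset.sum_range_succ, Nat.factorial]
      rw [mul_pow, Complex.I_sq]; ring
    rw [e] at this
    have e2 : Complex.exp ((θ : ℂ) * Complex.I) - 1 - θ * Complex.I + θ^2/2
      = Complex.exp ((θ : ℂ) * Complex.I) - (1 + θ * Complex.I - θ^2/2) := by ring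
    rw [e2]
    refine this.trans ?_
    simp [Nat.factorial]
    have : 0 ≤ |θ|^3 := by positivity
    nlinarith
  · have h1 := exp1 θ
    have : ‖Complex.exp ((θ : ℂ) * Complex.I) - 1 - θ * Complex.I + θ^2/2‖ ≤ |θ| + |θ| + |θ|^2/2 := by
      refine (norm_add_le _ _).trans (add_le_add ((norm_sub_le _ _).trans (add_le_add h1 ?_)) ?_)
      · simp
      · simp
    refine this.trans ?_
    have a1 : |θ|^2 ≤ |θ|^3 := by
      rw [pow_succ |θ| 2]; nlinarith [sq_nonneg |θ|]
    have a2 : |θ| ≤ |θ|^2 := by nlinarith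
    nlinarith

lemma swapPh {n : ℕ} (x w c h : Fin n → ℝ) (t : ℝ) (h0 : (∑ i, c i) * (∑ i, h i) = 0) :
    (n : ℂ) * ∑ π, (Tst c h π : ℂ) * ph x w t π
      = ∑ π, ph x w t π * ∑ i, ∑ k, ((c i * h (π k) : ℝ) : ℂ) *
        (Complex.exp (((-(t * dl x w π i k) : ℝ) : ℂ) * Complex.I) - 1) := by
  have h1 := swapS (fun i => (c i : ℂ)) (fun i => (h i : ℂ)) (ph x w t)
  have h2 : ∀ π, (Tst c h π : ℂ) = ∑ i, (c i : ℂ) * (h (π i) : ℂ) := by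
    intro π; unfold Tst; push_cast; rfl
  simp_rw [h2]
  rw [h1]
  refine Finset.sum_congr rfl fun π _ => ?_
  have h3 : ∑ i, ∑ k, ((c i * h (π k) : ℝ) : ℂ) = 0 := by
    have : ∑ i, ∑ k, c i * h (π k) = 0 := by
      rw [dsum, Equiv.sum_comp π h, h0]
    exact_mod_cast congrArg (fun z : ℝ => (z : ℂ)) this
  simp_rw [mul_sub, Finset.sum_sub_distrib, mul_one]
  rw [h3, sub_zero, Finset.mul_sum]
  refine Finset.sum_congr rfl fun i _ => ?_
  rw [Finset.mul_sum]
  refine Finset.sum_congr rfl fun k _ => ?_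
  rw [ph_swap]; push_cast; ring

/-- generic bound on a weighted pair sum -/
lemma pairbd {n : ℕ} (x w c h a b : Fin n → ℝ) (p : ℕ)
    (h1 : ∀ i k, |c i| * |x i - x k|^p ≤ a i + a k)
    (h2 : ∀ i k, |h k| * |w i - w k|^p ≤ b i + b k) :
    ∑ π : Equiv.Perm (Fin n), ∑ i, ∑ k, |c i * h (π k)| * |dl x w π i k|^p
      ≤ Fintype.card (Equiv.Perm (Fin n)) * (4 * ((∑ i, a i) * ∑ i, b i)) := by
  rcases Nat.eq_zero_or_pos n with hn | hn
  · subst hn; simp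
  rw [← pairsum hn]
  refine Finset.sum_le_sum fun π _ => Finset.sum_le_sum fun i _ => Finset.sum_le_sum fun k _ => ?_
  have : |c i * h (π k)| * |dl x w π i k|^p
     = (|c i| * |x i - x k|^p) * (|h (π k)| * |w (π i) - w (π k)|^p) := by
    unfold dl; rw [abs_mul, abs_mul, mul_pow]; ring
  rw [this]
  exact mul_le_mul (h1 i k) (h2 _ _) (by positivity) (le_trans (by positivity) (h1 i k))

lemma e13 (a b : ℝ) : |a|^3 * |a - b|^1 ≤ 2 * a^4 + 2 * b^4 := by
  have h1 : |a - b| ≤ |a| + |b| := abs_sub a b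
  have e1 : a^4 = |a|^4 := by rw [← abs_pow]; exact (abs_of_nonneg (by positivity)).symm
  have e2 : b^4 = |b|^4 := by rw [← abs_pow]; exact (abs_of_nonneg (by positivity)).symm
  rw [e1, e2, pow_one]
  have : |a|^3 * |a-b| ≤ |a|^3 * (|a|+|b|) := by gcongr
  have h3 : |a|^3 * |b| ≤ |a|^4 + |b|^4 := by
    rcases le_total |a| |b| with h | h
    · have : |a|^3 * |b| ≤ |b|^3 * |b| := by gcongr
      nlinarith [pow_nonneg (abs_nonneg a) 4]
    · have : |a|^3 * |b| ≤ |a|^3 * |a| := by gcongr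
      nlinarith [pow_nonneg (abs_nonneg b) 4]
  nlinarith [pow_nonneg (abs_nonneg b) 4]

lemma e11 (a b : ℝ) : |a| * |a - b|^1 ≤ 2 * a^2 + 2 * b^2 := by
  have h1 : |a - b| ≤ |a| + |b| := abs_sub a b
  rw [← sq_abs a, ← sq_abs b, pow_one]
  have : |a| * |a-b| ≤ |a| * (|a|+|b|) := by gcongr
  nlinarith [sq_nonneg (|a| - |b|), sq_nonneg |a|, sq_nonneg |b|]

lemma e31 (a b : ℝ) : |a| * |a - b|^3 ≤ 8 * a^4 + 8 * b^4 := by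
  have h1 : |a - b| ≤ |a| + |b| := abs_sub a b
  have e1 : a^4 = |a|^4 := by rw [← abs_pow]; exact (abs_of_nonneg (by positivity)).symm
  have e2 : b^4 = |b|^4 := by rw [← abs_pow]; exact (abs_of_nonneg (by positivity)).symm
  rw [e1, e2]
  have ha := abs_nonneg a
  have hb := abs_nonneg b
  have : |a| * |a-b|^3 ≤ |a| * (|a|+|b|)^3 := by gcongr
  refine this.trans ?_
  rcases le_total |a| |b| with h | h
  · have : |a| * (|a|+|b|)^3 ≤ |b| * (|b|+|b|)^3 := by gcongr
    nlinarith [pow_nonneg ha 4]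
  · have : |a| * (|a|+|b|)^3 ≤ |a| * (|a|+|a|)^3 := by gcongr
    nlinarith [pow_nonneg hb 4]

/-- first order bound -/
lemma firstbd {n : ℕ} (x w c h a b : Fin n → ℝ) (t : ℝ) (h0 : (∑ i, c i) * (∑ i, h i) = 0)
    (h1 : ∀ i k, |c i| * |x i - x k|^1 ≤ a i + a k)
    (h2 : ∀ i k, |h k| * |w i - w k|^1 ≤ b i + b k) :
    (n : ℝ) * ‖∑ π, (Tst c h π : ℂ) * ph x w t π‖
      ≤ |t| * (Fintype.card (Equiv.Perm (Fin n)) * (4 * ((∑ i, a i) * ∑ i, b i))) := by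
  have e := congrArg norm (swapPh x w c h t h0)
  rw [norm_mul, Complex.norm_natCast] at e
  rw [e]
  refine le_trans ?_ (mul_le_mul_of_nonneg_left (pairbd x w c h a b 1 h1 h2) (abs_nonneg t))
  rw [Finset.mul_sum]
  refine (norm_sum_le _ _).trans (Finset.sum_le_sum fun π _ => ?_)
  rw [norm_mul, ph_norm, one_mul, Finset.mul_sum]
  refine (norm_sum_le _ _).trans (Finset.sum_le_sum fun i _ => ?_)
  rw [Finset.mul_sum]
  refine (norm_sum_le _ _).trans (Finset.sum_le_sum fun k _ => ?_)
  rw [norm_mul, Complex.norm_real, Real.norm_eq_abs]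
  have := exp1 (-(t * dl x w π i k))
  rw [abs_neg, abs_mul] at this
  calc |c i * h (π k)| * _ ≤ |c i * h (π k)| * (|t| * |dl x w π i k|) := by gcongr
    _ = _ := by ring

lemma sumd1 {n : ℕ} (x w : Fin n → ℝ) (hx : ∑ i, x i = 0) (hw : ∑ i, w i = 0)
    (π : Equiv.Perm (Fin n)) :
    ∑ i, ∑ k, x i * w (π k) * dl x w π i k
      = -((∑ i, x i^2) * (∑ i, w i^2)) - Tst x w π ^ 2 := by
  have a1 : ∀ i k, x i * w (π k) * dl x w π i k =
        ((x i^2 * w (π i)) * w (π k) - x i^2 * w (π k)^2)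
          - (x i * w (π i)) * (x k * w (π k)) + x i * (x k * w (π k)^2) := by
    intro i k; unfold dl; ring
  simp_rw [a1, Finset.sum_add_distrib, Finset.sum_sub_distrib, dsum]
  have e1 : ∑ k, w (π k) = ∑ k, w k := Equiv.sum_comp π w
  have e2 : ∑ k, w (π k)^2 = ∑ k, w k^2 := Equiv.sum_comp π (fun k => w k^2)
  rw [e1, e2, hx, hw]
  simp only [Tst]; ring

lemma sumd2 {n : ℕ} (x w : Fin n → ℝ) (hx : ∑ i, x i = 0) (hw : ∑ i, w i = 0)
    (π : Equiv.Perm (Fin n)) :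
    ∑ i, ∑ k, x i * w (π k) * dl x w π i k ^ 2
      = (∑ i, x i^3) * (∑ i, w i^3) - 2 * (∑ i, w i^2) * Tst (fun i => x i^3) w π
        - 2 * (∑ i, x i^2) * Tst x (fun i => w i^3) π
        - 4 * (Tst x w π * Tst (fun i => x i^2) (fun i => w i^2) π)
        + 5 * (Tst x (fun i => w i^2) π * Tst (fun i => x i^2) w π) := by
  have a1 : ∀ i k, x i * w (π k) * dl x w π i k ^ 2 =
        (((x i^3 * w (π i)^2) * w (π k) + (-2 * (x i^3 * w (π i))) * w (π k)^2)
        + (x i^3 * w (π k)^3 + (-2 * (x i^2 * w (π i)^2)) * (x k * w (π k))))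
        + ((4 * (x i^2 * w (π i))) * (x k * w (π k)^2) + (-2 * x i^2) * (x k * w (π k)^3))
        + (((x i * w (π i)^2) * (x k^2 * w (π k)) + (-2 * (x i * w (π i))) * (x k^2 * w (π k)^2))
          + x i * (x k^2 * w (π k)^3)) := by
    intro i k; unfold dl; ring
  simp_rw [a1, Finset.sum_add_distrib, dsum, ← Finset.mul_sum]
  have e1 : ∑ k, w (π k) = ∑ k, w k := Equiv.sum_comp π w
  have e2 : ∑ k, w (π k)^2 = ∑ k, w k^2 := Equiv.sum_comp π (fun k => w k^2)
  have e3 : ∑ k, w (π k)^3 = ∑ k, w k^3 := Equiv.sum_comp π (fun k => w k^3)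
  rw [e1, e2, e3, hx, hw]
  simp only [Tst]; ring

lemma expand {n : ℕ} (x w : Fin n → ℝ) (hx : ∑ i, x i = 0) (t : ℝ) :
    ‖(n : ℂ) * ∑ π, (Tst x w π : ℂ) * ph x w t π
      - ∑ π, ph x w t π * (-(t * Complex.I) * ((∑ i, ∑ k, x i * w (π k) * dl x w π i k : ℝ) : ℂ)
        - t^2/2 * ((∑ i, ∑ k, x i * w (π k) * dl x w π i k ^2 : ℝ) : ℂ))‖
      ≤ 1024 * |t|^3 * (Fintype.card (Equiv.Perm (Fin n)) * ((∑ i, x i^4) * ∑ i, w i^4)) := by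
  rw [swapPh x w x w t (by rw [hx, zero_mul]), ← Finset.sum_sub_distrib]
  have hp := pairbd x w x w (fun i => 8 * x i^4) (fun i => 8 * w i^4) 3 (fun i k => e31 _ _)
    (fun i k => by rw [abs_sub_comm (w i)]; linarith [e31 (w k) (w i)])
  rw [← Finset.mul_sum, ← Finset.mul_sum] at hp
  have hp2 := mul_le_mul_of_nonneg_left hp (show 0 ≤ 4 * |t|^3 by positivity)
  refine le_trans ?_ (hp2.trans (le_of_eq (by ring)))
  rw [Finset.mul_sum]
  refine (norm_sum_le _ _).trans (Finset.sum_le_sum fun π _ => ?_)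
  rw [← mul_sub, norm_mul, ph_norm, one_mul]
  push_cast
  simp_rw [Finset.mul_sum, ← Finset.sum_sub_distrib]
  refine (norm_sum_le _ _).trans (Finset.sum_le_sum fun i _ => ?_)
  refine (norm_sum_le _ _).trans (Finset.sum_le_sum fun k _ => ?_)
  have h3 := exp3 (-(t * dl x w π i k))
  rw [abs_neg, abs_mul] at h3
  calc _ = ‖((x i * w (π k) : ℝ) : ℂ) * (Complex.exp (((-(t * dl x w π i k) : ℝ) : ℂ) * Complex.I) - 1
        - ((-(t * dl x w π i k) : ℝ) : ℂ) * Complex.I + ((-(t * dl x w π i k) : ℝ) : ℂ)^2/2)‖ := by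
        congr 1; push_cast; ring
    _ ≤ |x i * w (π k)| * (4 * (|t| * |dl x w π i k|)^3) := by
        rw [norm_mul, Complex.norm_real, Real.norm_eq_abs]; gcongr
    _ = _ := by ring

lemma normbd {n : ℕ} (x w : Fin n → ℝ) (t : ℝ) (G : Equiv.Perm (Fin n) → ℝ) :
    ‖∑ π, (G π : ℂ) * ph x w t π‖ ≤ ∑ π, |G π| := by
  refine (norm_sum_le _ _).trans (Finset.sum_le_sum fun π _ => ?_)
  rw [norm_mul, ph_norm, mul_one, Complex.norm_real, Real.norm_eq_abs]

lemma cs_sq {n : ℕ} (w : Fin n → ℝ) : (∑ i, w i^2)^2 ≤ n * ∑ i, w i^4 := by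
  have := sq_sum_le_card_mul_sum_sq (s := Finset.univ) (f := fun i => w i^2)
  simp only [Finset.card_univ, Fintype.card_fin] at this
  refine this.trans (le_of_eq ?_)
  congr 1
  exact Finset.sum_congr rfl fun i _ => by ring

set_option maxHeartbeats 2000000 in
lemma ode_raw {n : ℕ} (hn : 2 ≤ n) (x w : Fin n → ℝ) (hx : ∑ i, x i = 0) (hw : ∑ i, w i = 0)
    (hXW : (∑ i, x i^2) * (∑ i, w i^2) = n - 1) (t : ℝ) :
    ‖(n : ℂ) * Complex.I * (∑ π, (Tst x w π : ℂ) * ph x w t π) + n * t * ∑ π, ph x w t π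
      + Complex.I * (t^2/2) * (((∑ i, x i^3) * (∑ i, w i^3) : ℝ) : ℂ) * ∑ π, ph x w t π‖
    ≤ 1100 * (Fintype.card (Equiv.Perm (Fin n)) * ((∑ i, x i^4) * (∑ i, w i^4) + 1))
        * (|t| + |t|^3) := by
  set N : ℝ := (Fintype.card (Equiv.Perm (Fin n)) : ℝ) with hN
  have hNpos : 0 < N := by rw [hN]; exact_mod_cast Fintype.card_pos
  have hn1 : (2:ℝ) ≤ n := by exact_mod_cast hn
  set X2 := ∑ i, x i^2 with hX2
  set W2 := ∑ i, w i^2 with hW2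
  set X4 := ∑ i, x i^4 with hX4
  set W4 := ∑ i, w i^4 with hW4
  have X2n : 0 ≤ X2 := Finset.sum_nonneg fun i _ => by positivity
  have W2n : 0 ≤ W2 := Finset.sum_nonneg fun i _ => by positivity
  have X4n : 0 ≤ X4 := Finset.sum_nonneg fun i _ => by positivity
  have W4n : 0 ≤ W4 := Finset.sum_nonneg fun i _ => by positivity
  set P := X4 * W4 with hP
  have Pn : 0 ≤ P := by positivity
  -- S31
  have b31 : W2 * ‖∑ π, (Tst (fun i => x i^3) w π : ℂ) * ph x w t π‖ ≤ 16 * |t| * N * P := by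
    have h := firstbd x w (fun i => x i^3) w (fun i => 2 * x i^4) (fun i => 2 * w i^2) t
      (by rw [hw, mul_zero]) (fun i k => by rw [abs_pow]; exact e13 _ _)
      (fun i k => by rw [abs_sub_comm (w i)]; linarith [e11 (w k) (w i)])
    rw [← Finset.mul_sum, ← Finset.mul_sum] at h
    have h2 := mul_le_mul_of_nonneg_left h W2n
    have h3 : |t| * (N * (4 * (2 * X4 * (2 * W2)))) * W2 ≤ n * (16 * |t| * N * P) := by
      have := cs_sq w
      calc _ = 16 * |t| * N * X4 * W2^2 := by ring
        _ ≤ 16 * |t| * N * X4 * (n * W4) := by gcongr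
        _ = _ := by ring
    have h4 : (n:ℝ) * (W2 * ‖∑ π, (Tst (fun i => x i^3) w π : ℂ) * ph x w t π‖) ≤ n * (16 * |t| * N * P) := by
      refine le_trans (le_of_eq (by ring)) (h2.trans (le_trans (le_of_eq (by ring)) h3))
    exact le_of_mul_le_mul_left h4 (by linarith)
  have b13 : X2 * ‖∑ π, (Tst x (fun i => w i^3) π : ℂ) * ph x w t π‖ ≤ 16 * |t| * N * P := by
    have h := firstbd x w x (fun i => w i^3) (fun i => 2 * x i^2) (fun i => 2 * w i^4) t
      (by rw [hx, zero_mul]) (fun i k => e11 _ _)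
      (fun i k => by rw [abs_sub_comm (w i), abs_pow]; linarith [e13 (w k) (w i)])
    rw [← Finset.mul_sum, ← Finset.mul_sum] at h
    have h2 := mul_le_mul_of_nonneg_left h X2n
    have h3 : |t| * (N * (4 * (2 * X2 * (2 * W4)))) * X2 ≤ n * (16 * |t| * N * P) := by
      have := cs_sq x
      calc _ = 16 * |t| * N * W4 * X2^2 := by ring
        _ ≤ 16 * |t| * N * W4 * (n * X4) := by gcongr
        _ = _ := by ring
    have h4 : (n:ℝ) * (X2 * ‖∑ π, (Tst x (fun i => w i^3) π : ℂ) * ph x w t π‖) ≤ n * (16 * |t| * N * P) := by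
      refine le_trans (le_of_eq (by ring)) (h2.trans (le_trans (le_of_eq (by ring)) h3))
    exact le_of_mul_le_mul_left h4 (by linarith)
  have mT : ∑ π, Tst x w π ^ 2 = N := by
    have h := secondmom x w
    rw [hx, hw, ← hX2, ← hW2, hXW, ← hN] at h
    have : (n:ℝ) * (n-1) ≠ 0 := by
      have : (0:ℝ) < n * (n-1) := by apply mul_pos <;> linarith
      exact this.ne'
    apply mul_left_cancel₀ this
    rw [h]; ring
  have p4 : ∀ y : Fin n → ℝ, ∑ i, (y i^2)^2 = ∑ i, y i^4 := fun y =>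
    Finset.sum_congr rfl fun i _ => by ring
  have hnn : (0:ℝ) < n * (n-1) := by apply mul_pos <;> linarith
  have m22 : ∑ π, Tst (fun i => x i^2) (fun i => w i^2) π ^ 2 ≤ N * (1 + P) := by
    have h := secondmom (fun i => x i^2) (fun i => w i^2)
    simp only [p4] at h
    rw [← hX2, ← hW2, ← hX4, ← hW4, ← hN] at h
    refine le_of_mul_le_mul_left (h.trans_le ?_) hnn
    have e : X2^2 * W2^2 = (n-1)^2 := by rw [← hXW]; ring
    rw [e]
    have h1 : 0 ≤ X4 * W2^2 := by positivity
    have h2 : 0 ≤ X2^2 * W4 := by positivity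
    calc N * (((n:ℝ)-1)^2 - X4 * W2^2 - X2^2 * W4 + n * P)
        ≤ N * (n * (n-1) * (1 + P)) := by
          gcongr
          have : 0 ≤ P * (n * (n - 2)) := mul_nonneg Pn (mul_nonneg (by linarith) (by linarith))
          nlinarith
      _ = _ := by ring
  have m21 : (n-1) * ∑ π, Tst (fun i => x i^2) w π ^ 2 ≤ N * (X4 * W2) := by
    have h := secondmom (fun i => x i^2) w
    simp only [p4] at h
    rw [← hX2, ← hW2, ← hX4, ← hN, hw] at h
    refine le_of_mul_le_mul_left (a := (n:ℝ)) ?_ (by linarith)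
    rw [← mul_assoc, h]
    have h1 : 0 ≤ N * (X2^2 * W2) := by positivity
    nlinarith
  have m12 : (n-1) * ∑ π, Tst x (fun i => w i^2) π ^ 2 ≤ N * (X2 * W4) := by
    have h := secondmom x (fun i => w i^2)
    simp only [p4] at h
    rw [← hX2, ← hW2, ← hW4, ← hN, hx] at h
    refine le_of_mul_le_mul_left (a := (n:ℝ)) ?_ (by linarith)
    rw [← mul_assoc, h]
    have h1 : 0 ≤ N * (X2 * W2^2) := by positivity
    nlinarith
  have c1 : ∑ π, |Tst x w π * Tst (fun i => x i^2) (fun i => w i^2) π| ≤ N * (1 + P) := by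
    have : ∀ π, |Tst x w π * Tst (fun i => x i^2) (fun i => w i^2) π| ≤
        (Tst x w π ^2 + Tst (fun i => x i^2) (fun i => w i^2) π ^2) / 2 := by
      intro π
      rw [abs_mul]
      nlinarith [sq_nonneg (|Tst x w π| - |Tst (fun i => x i^2) (fun i => w i^2) π|),
        sq_abs (Tst x w π), sq_abs (Tst (fun i => x i^2) (fun i => w i^2) π)]
    refine (Finset.sum_le_sum fun π _ => this π).trans ?_
    rw [← Finset.sum_div, Finset.sum_add_distrib, mT]
    nlinarith [mul_nonneg hNpos.le Pn]
  have c2 : ∑ π, |Tst x (fun i => w i^2) π * Tst (fun i => x i^2) w π| ≤ N * (1 + P) := by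
    have h := Finset.sum_mul_sq_le_sq_mul_sq Finset.univ
      (fun π => |Tst x (fun i => w i^2) π|) (fun π => |Tst (fun i => x i^2) w π|)
    simp only [sq_abs, ← abs_mul] at h
    refine abs_le_of_sq_le_sq' ?_ (by positivity) |>.2
    set A := ∑ π, |Tst x (fun i => w i^2) π * Tst (fun i => x i^2) w π|
    have hm : ((n:ℝ)-1) * ((n-1) * A^2) ≤ (n-1) * (N^2 * P) := by
      calc ((n:ℝ)-1) * ((n-1) * A^2)
        ≤ (n-1) * ((n-1) * ((∑ π, Tst x (fun i => w i^2) π ^ 2) * ∑ π, Tst (fun i => x i^2) w π ^ 2)) := by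
            have : (0:ℝ) ≤ n - 1 := by linarith
            gcongr
        _ = ((n-1) * ∑ π, Tst x (fun i => w i^2) π ^ 2) * ((n-1) * ∑ π, Tst (fun i => x i^2) w π ^ 2) := by ring
        _ ≤ (N * (X2 * W4)) * (N * (X4 * W2)) := by
            have : (0:ℝ) ≤ n - 1 := by linarith
            refine mul_le_mul m12 m21 (mul_nonneg this (Finset.sum_nonneg fun _ _ => sq_nonneg _)) (by positivity)
        _ = (X2 * W2) * (N^2 * P) := by rw [hP]; ring
        _ = _ := by rw [hXW]
    have hm2 := le_of_mul_le_mul_left hm (by linarith)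
    have hA : A^2 ≤ (n-1) * A^2 := by nlinarith [sq_nonneg A]
    calc A^2 ≤ N^2 * P := hA.trans hm2
      _ ≤ N^2 * (1+P)^2 := by gcongr; nlinarith
      _ = _ := by ring
  -- assemble
  have hE := expand x w hx t
  rw [← hN, ← hX4, ← hW4, ← hP] at hE
  simp_rw [sumd1 x w hx hw, sumd2 x w hx hw] at hE
  rw [← hX2, ← hW2, hXW] at hE
  set S0 := ∑ π, ph x w t π with hS0
  set ST := ∑ π, (Tst x w π : ℂ) * ph x w t π with hST
  set s31 := ∑ π, (Tst (fun i => x i^3) w π : ℂ) * ph x w t π with hs31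
  set s13 := ∑ π, (Tst x (fun i => w i^3) π : ℂ) * ph x w t π with hs13
  have d0 : ‖S0‖ ≤ N := by
    refine (norm_sum_le _ _).trans ?_
    simp [ph_norm, hN]
  have dT := normbd x w t (fun π => Tst x w π ^ 2)
  have d1 := (normbd x w t (fun π => Tst x w π * Tst (fun i => x i^2) (fun i => w i^2) π)).trans c1
  have d2 := (normbd x w t (fun π => Tst x (fun i => w i^2) π * Tst (fun i => x i^2) w π)).trans c2
  simp only [abs_of_nonneg (sq_nonneg (Tst x w _))] at dT
  rw [mT] at dT
  set sTT := ∑ π, ((Tst x w π ^ 2 : ℝ) : ℂ) * ph x w t π with hsTT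
  set sA := ∑ π, ((Tst x w π * Tst (fun i => x i^2) (fun i => w i^2) π : ℝ) : ℂ) * ph x w t π with hsA
  set sB := ∑ π, ((Tst x (fun i => w i^2) π * Tst (fun i => x i^2) w π : ℝ) : ℂ) * ph x w t π with hsB
  set X3W3 := (∑ i, x i^3) * (∑ i, w i^3) with hX3
  have key : ∑ π, ph x w t π * (-(t * Complex.I) * ((-((n:ℝ)-1) - Tst x w π ^2 : ℝ) : ℂ)
        - t^2/2 * ((X3W3 - 2 * W2 * Tst (fun i => x i^3) w π
        - 2 * X2 * Tst x (fun i => w i^3) π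
        - 4 * (Tst x w π * Tst (fun i => x i^2) (fun i => w i^2) π)
        + 5 * (Tst x (fun i => w i^2) π * Tst (fun i => x i^2) w π) : ℝ) : ℂ))
      = t * Complex.I * ((n - 1) * S0 + sTT) - t^2/2 * (X3W3 * S0 - 2 * W2 * s31 - 2 * X2 * s13
        - 4 * sA + 5 * sB) := by
    simp only [hS0, hsTT, hs31, hs13, hsA, hsB, Finset.mul_sum, ← Finset.sum_add_distrib,
      ← Finset.sum_sub_distrib]
    refine Finset.sum_congr rfl fun π _ => ?_
    push_cast; ring
  rw [key] at hE
  set R := (n : ℂ) * ST - (t * Complex.I * ((n - 1) * S0 + sTT) - t^2/2 * (X3W3 * S0 - 2 * W2 * s31 - 2 * X2 * s13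
        - 4 * sA + 5 * sB)) with hR
  have fin : (n : ℂ) * Complex.I * ST + n * t * S0 + Complex.I * (t^2/2) * (X3W3 : ℂ) * S0
      = Complex.I * R + (t * S0 - t * sTT) + Complex.I * (t^2/2) * (2 * (W2 * s31) + 2 * (X2 * s13) + 4 * sA - 5 * sB) := by
    rw [hR]; linear_combination (t * ((n-1) * S0 + sTT)) * Complex.I_sq
  rw [fin]
  have q1 : ‖Complex.I * R‖ ≤ 1024 * |t|^3 * (N * P) := by
    rw [norm_mul, Complex.norm_I, one_mul]; exact hE
  have q2 : ‖(t:ℂ) * S0 - t * sTT‖ ≤ |t| * N + |t| * N := by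
    refine (norm_sub_le _ _).trans (add_le_add ?_ ?_) <;>
    · rw [norm_mul, Complex.norm_real, Real.norm_eq_abs]; gcongr
  have q3 : ‖2 * (W2 * s31) + 2 * (X2 * s13) + 4 * sA - 5 * sB‖ ≤ 2 * (16 * |t| * N * P) + 2 * (16 * |t| * N * P)
      + 4 * (N * (1+P)) + 5 * (N * (1+P)) := by
    refine (norm_sub_le _ _).trans (add_le_add ((norm_add_le _ _).trans (add_le_add ((norm_add_le _ _).trans
      (add_le_add ?_ ?_)) ?_)) ?_)
    · rw [norm_mul, norm_mul, Complex.norm_real, Real.norm_of_nonneg W2n]; norm_num; exact b31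
    · rw [norm_mul, norm_mul, Complex.norm_real, Real.norm_of_nonneg X2n]; norm_num; exact b13
    · rw [norm_mul]; norm_num; exact d1
    · rw [norm_mul]; norm_num; exact d2
  have q4 : ‖Complex.I * ((t:ℂ)^2/2) * (2 * (W2 * s31) + 2 * (X2 * s13) + 4 * sA - 5 * sB)‖ ≤
      |t|^2/2 * (2 * (16 * |t| * N * P) + 2 * (16 * |t| * N * P)
      + 4 * (N * (1+P)) + 5 * (N * (1+P))) := by
    rw [norm_mul, norm_mul, Complex.norm_I, one_mul, norm_div, norm_pow, Complex.norm_real, Real.norm_eq_abs]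
    norm_num
    gcongr
  refine (norm_add_le _ _).trans ((add_le_add ((norm_add_le _ _).trans (add_le_add q1 q2)) q4).trans ?_)
  have ht := abs_nonneg t
  set τ := |t|
  have hNP : 0 ≤ N * P := by positivity
  have t2 : τ^2 ≤ τ + τ^3 := by nlinarith [mul_nonneg ht (sq_nonneg (τ - 1)), pow_nonneg ht 3]
  have t3 : 0 ≤ τ^3 := by positivity
  have f1 := mul_le_mul_of_nonneg_left t2 hNP
  have f2 := mul_le_mul_of_nonneg_left t2 hNpos.le
  have g1 : 0 ≤ N * P * τ := by positivity
  have g2 : 0 ≤ N * P * τ^3 := by positivity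
  have g3 : 0 ≤ N * τ := by positivity
  have g4 : 0 ≤ N * τ^3 := by positivity
  nlinarith

lemma fch_hasDerivAt {n : ℕ} (x w : Fin n → ℝ) (t : ℝ) :
    HasDerivAt (fch (Tst x w))
      (Complex.I * (∑ π, (Tst x w π : ℂ) * ph x w t π) / (Fintype.card (Equiv.Perm (Fin n)) : ℂ)) t := by
  unfold fch
  have h : ∀ π : Equiv.Perm (Fin n), HasDerivAt (fun t : ℝ => Complex.exp (Complex.I * t * Tst x w π))
      (Complex.I * ((Tst x w π : ℂ) * ph x w t π)) t := by
    intro π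
    have h1 : HasDerivAt (fun t : ℝ => (t : ℂ)) 1 t := Complex.ofRealCLM.hasDerivAt
    have h2 := ((h1.const_mul Complex.I).mul_const (Tst x w π : ℂ)).cexp
    refine h2.congr_deriv ?_
    unfold ph; ring
  have h3 := (HasDerivAt.fun_sum (u := Finset.univ) fun π _ => h π).div_const
    (Fintype.card (Equiv.Perm (Fin n)) : ℂ)
  refine h3.congr_deriv ?_
  rw [← Finset.mul_sum]

lemma cs3 {n : ℕ} (x : Fin n → ℝ) : (∑ i, x i^3)^2 ≤ (∑ i, x i^2) * ∑ i, x i^4 := by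
  have h := Finset.sum_mul_sq_le_sq_mul_sq Finset.univ x (fun i => x i^2)
  have e1 : ∑ i, x i * x i^2 = ∑ i, x i^3 := Finset.sum_congr rfl fun i _ => by ring
  have e2 : ∑ i, (x i^2)^2 = ∑ i, x i^4 := Finset.sum_congr rfl fun i _ => by ring
  rwa [e1, e2] at h

lemma lam_sq {n : ℕ} (hn : 2 ≤ n) (x w : Fin n → ℝ)
    (hXW : (∑ i, x i^2) * (∑ i, w i^2) = n - 1) :
    ((∑ i, x i^3) * (∑ i, w i^3) / n)^2 ≤ (∑ i, x i^4) * (∑ i, w i^4) / n := by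
  have hn1 : (2:ℝ) ≤ n := by exact_mod_cast hn
  have X4n : 0 ≤ ∑ i, x i^4 := Finset.sum_nonneg fun i _ => by positivity
  have W4n : 0 ≤ ∑ i, w i^4 := Finset.sum_nonneg fun i _ => by positivity
  have := mul_le_mul (cs3 x) (cs3 w) (sq_nonneg _) (mul_nonneg (Finset.sum_nonneg fun i _ => by positivity) X4n)
  rw [div_pow, div_le_div_iff₀ (by positivity) (by positivity), mul_pow]
  have e : ((∑ i, x i^2) * ∑ i, x i^4) * ((∑ i, w i^2) * ∑ i, w i^4)
     = (n-1) * ((∑ i, x i^4) * ∑ i, w i^4) := by rw [← hXW]; ring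
  rw [e] at this
  set P := (∑ i, x i^4) * ∑ i, w i^4
  have hP : 0 ≤ P := by positivity
  calc _ ≤ ((n:ℝ)-1) * P * n := by gcongr
    _ ≤ P * n^2 := by nlinarith [mul_nonneg hP (show (0:ℝ) ≤ n by linarith)]

lemma gch_hasDerivAt (l t : ℝ) : HasDerivAt (gch l)
    (-(t:ℂ) * gch l t - Complex.exp (-(t:ℂ)^2/2) * (Complex.I * t^2 * l / 2)) t := by
  have h1 : HasDerivAt (fun t : ℝ => (t : ℂ)) 1 t := Complex.ofRealCLM.hasDerivAt
  have h2 : HasDerivAt (fun t : ℝ => Complex.exp (-(t:ℂ)^2/2)) (Complex.exp (-(t:ℂ)^2/2) * (-(t:ℂ))) t := by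
    refine (((h1.fun_pow 2).neg.div_const 2).cexp).congr_deriv ?_
    simp; ring
  have h3 : HasDerivAt (fun t : ℝ => 1 - Complex.I * (t:ℂ)^3 * l / 6) (-(Complex.I * t^2 * l / 2)) t := by
    refine ((((h1.fun_pow 3).const_mul Complex.I).mul_const (l:ℂ)).div_const 6 |>.const_sub 1).congr_deriv ?_
    simp; ring
  refine (h2.mul h3).congr_deriv ?_
  unfold gch; ring

lemma gch_ode (l t : ℝ) : ‖(-(t:ℂ) * gch l t - Complex.exp (-(t:ℂ)^2/2) * (Complex.I * t^2 * l / 2))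
     + t * gch l t + Complex.I * (t^2/2) * l * gch l t‖ ≤ |t|^3 * l^2 := by
  have e : (-(t:ℂ) * gch l t - Complex.exp (-(t:ℂ)^2/2) * (Complex.I * t^2 * l / 2))
     + t * gch l t + Complex.I * (t^2/2) * l * gch l t
     = ((Real.exp (-t^2/2) * (t^5 * l^2/12) : ℝ) : ℂ) := by
    unfold gch
    push_cast
    linear_combination (-(Complex.exp (-(t:ℂ)^2/2) * (t^5 * l^2/12))) * Complex.I_sq
  rw [e, Complex.norm_real, Real.norm_eq_abs, abs_mul, abs_of_pos (Real.exp_pos _), abs_div, abs_mul,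
    abs_pow, abs_of_nonneg (sq_nonneg l)]
  have h1 : Real.exp (-t^2/2) * (t^2/2) ≤ 1 := by
    have h := Real.add_one_le_exp (t^2/2)
    have h2 : Real.exp (-t^2/2) * Real.exp (t^2/2) = 1 := by rw [← Real.exp_add]; ring_nf; simp
    nlinarith [Real.exp_pos (-t^2/2)]
  rw [← sq_abs t] at h1
  have h3 : 0 ≤ |t|^3 * l^2 := by positivity
  rw [sq_abs] at h1
  have e2 : |t|^5 = |t|^3 * t^2 := by rw [← sq_abs t]; ring
  rw [e2]
  norm_num
  calc Real.exp (-t^2/2) * (|t|^3 * t^2 * l^2 / 12) = (|t|^3 * l^2) * (Real.exp (-t^2/2) * (t^2/2)) / 6 := by ring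
    _ ≤ (|t|^3 * l^2) * 1 / 6 := by gcongr
    _ ≤ _ := by linarith

theorem small_t {n : ℕ} (hn : 2 ≤ n) (x w : Fin n → ℝ) (hx : ∑ i, x i = 0) (hw : ∑ i, w i = 0)
    (hXW : (∑ i, x i^2) * (∑ i, w i^2) = n - 1) (t : ℝ) :
    ‖fch (Tst x w) t - gch ((∑ i, x i^3) * (∑ i, w i^3) / n) t‖
      ≤ 1101 * (((∑ i, x i^4) * (∑ i, w i^4) + 1) / n) * (t^2 + t^4) := by
  have hn1 : (2:ℝ) ≤ n := by exact_mod_cast hn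
  have X4n : 0 ≤ ∑ i, x i^4 := Finset.sum_nonneg fun i _ => by positivity
  have W4n : 0 ≤ ∑ i, w i^4 := Finset.sum_nonneg fun i _ => by positivity
  set l := (∑ i, x i^3) * (∑ i, w i^3) / n with hl
  set κ := ((∑ i, x i^4) * (∑ i, w i^4) + 1) / n with hκ
  have κn : 0 ≤ κ := by positivity
  have hlκ : l^2 ≤ κ := by
    refine (lam_sq hn x w hXW).trans ?_
    rw [hκ]; gcongr; linarith
  set N := Fintype.card (Equiv.Perm (Fin n)) with hN
  have hNpos : 0 < N := Fintype.card_pos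
  have hNc : (N:ℂ) ≠ 0 := by exact_mod_cast hNpos.ne'
  have hnc : (n:ℂ) ≠ 0 := by exact_mod_cast (show n ≠ 0 by omega)
  have fode : ∀ t : ℝ, ‖(Complex.I * (∑ π, (Tst x w π : ℂ) * ph x w t π) / (N : ℂ))
      + t * fch (Tst x w) t + Complex.I * (t^2/2) * l * fch (Tst x w) t‖ ≤ 1100 * κ * (|t| + |t|^3) := by
    intro t
    have h := ode_raw hn x w hx hw hXW t
    have e : (n : ℂ) * Complex.I * (∑ π, (Tst x w π : ℂ) * ph x w t π) + n * t * ∑ π, ph x w t π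
      + Complex.I * (t^2/2) * (((∑ i, x i^3) * (∑ i, w i^3) : ℝ) : ℂ) * ∑ π, ph x w t π
      = ((n * N : ℝ) : ℂ) * ((Complex.I * (∑ π, (Tst x w π : ℂ) * ph x w t π) / (N : ℂ))
      + t * fch (Tst x w) t + Complex.I * (t^2/2) * l * fch (Tst x w) t) := by
      have e0 : ∑ π, ph x w t π = N * fch (Tst x w) t := by
        unfold fch ph; field_simp; rw [hN]
      rw [e0, hl]; push_cast; field_simp
    have hnN : (0:ℝ) < n * N := by
      have : (0:ℝ) < N := by exact_mod_cast hNpos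
      have : (0:ℝ) < n := by linarith
      positivity
    rw [e, norm_mul, Complex.norm_real, Real.norm_of_nonneg hnN.le] at h
    refine le_of_mul_le_mul_left (h.trans (le_of_eq ?_)) hnN
    rw [hκ, ← hN]; field_simp
  set H : ℝ → ℂ := fun t => Complex.exp ((t:ℂ)^2/2 + Complex.I * t^3 * l / 6) *
    (fch (Tst x w) t - gch l t) with hH
  have hHd : ∀ s : ℝ, ∃ H', HasDerivAt H H' s ∧ ‖H'‖ ≤ Real.exp (s^2/2) * (1101 * κ * (|s| + |s|^3)) := by
    intro s
    have h1 : HasDerivAt (fun t : ℝ => (t : ℂ)) 1 s := Complex.ofRealCLM.hasDerivAt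
    have h2 : HasDerivAt (fun t : ℝ => (t:ℂ)^2/2 + Complex.I * t^3 * l / 6)
        (s + Complex.I * (s^2/2) * l) s := by
      refine (((h1.fun_pow 2).div_const 2).add
        ((((h1.fun_pow 3).const_mul Complex.I).mul_const (l:ℂ)).div_const 6)).congr_deriv ?_
      simp; ring
    have h3 := h2.cexp.mul ((fch_hasDerivAt x w s).sub (gch_hasDerivAt l s))
    refine ⟨_, h3, ?_⟩
    have q := gch_ode l s
    have q2 := fode s
    set F' := (Complex.I * (∑ π, (Tst x w π : ℂ) * ph x w s π) / (N : ℂ)) with hF'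
    set G' := (-(s:ℂ) * gch l s - Complex.exp (-(s:ℂ)^2/2) * (Complex.I * s^2 * l / 2)) with hG'
    have e : Complex.exp ((s:ℂ)^2/2 + Complex.I * s^3 * l / 6) * (s + Complex.I * (s^2/2) * l)
       * (fch (Tst x w) - gch l) s + Complex.exp ((s:ℂ)^2/2 + Complex.I * s^3 * l / 6) * (F' - G')
       = Complex.exp ((s:ℂ)^2/2 + Complex.I * s^3 * l / 6) *
         ((F' + s * fch (Tst x w) s + Complex.I * (s^2/2) * l * fch (Tst x w) s)
          - (G' + s * gch l s + Complex.I * (s^2/2) * l * gch l s)) := by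
      simp only [Pi.sub_apply]; ring
    rw [e, norm_mul, Complex.norm_exp]
    have e2 : ((s:ℂ)^2/2 + Complex.I * s^3 * l / 6).re = s^2/2 := by
      have : ((s:ℂ)^2/2 + Complex.I * s^3 * l / 6) = ((s^2/2 : ℝ) : ℂ) + ((s^3 * l/6 : ℝ) : ℂ) * Complex.I := by
        push_cast; ring
      rw [this]; simp only [Complex.add_re, Complex.ofReal_re, Complex.re_ofReal_mul, Complex.I_re, mul_zero, add_zero]
    rw [e2]
    gcongr
    refine (norm_sub_le _ _).trans ((add_le_add q2 q).trans ?_)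
    have := mul_le_mul_of_nonneg_left hlκ (show 0 ≤ |s|^3 by positivity)
    nlinarith [mul_nonneg κn (abs_nonneg s)]
  choose H' hH1 hH2 using hHd
  have mv := (convex_Icc (-|t|) |t|).norm_image_sub_le_of_norm_hasDerivWithin_le
    (f := H) (f' := H') (C := Real.exp (t^2/2) * (1101 * κ * (|t| + |t|^3)))
    (fun s hs => (hH1 s).hasDerivWithinAt) (fun s hs => by
      refine (hH2 s).trans ?_
      have hs2 : |s| ≤ |t| := abs_le.2 ⟨hs.1, hs.2⟩
      have : s^2 ≤ t^2 := sq_le_sq.2 hs2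
      gcongr)
    (show (0:ℝ) ∈ _ from ⟨by simp, by simp⟩) (show t ∈ _ from ⟨neg_abs_le t, le_abs_self t⟩)
  have H0 : H 0 = 0 := by
    simp only [hH, fch, gch]
    simp [hN]
  rw [H0, sub_zero, sub_zero, Real.norm_eq_abs] at mv
  have eH : ‖H t‖ = Real.exp (t^2/2) * ‖fch (Tst x w) t - gch l t‖ := by
    simp only [hH]
    rw [norm_mul, Complex.norm_exp]
    have : ((t:ℂ)^2/2 + Complex.I * t^3 * l / 6) = ((t^2/2 : ℝ) : ℂ) + ((t^3 * l/6 : ℝ) : ℂ) * Complex.I := by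
        push_cast; ring
    rw [this]; simp only [Complex.add_re, Complex.ofReal_re, Complex.re_ofReal_mul, Complex.I_re, mul_zero, add_zero]
  rw [eH] at mv
  refine le_of_mul_le_mul_left (mv.trans (le_of_eq ?_)) (Real.exp_pos (t^2/2))
  have e4 : t^4 = |t|^4 := by rw [← abs_pow]; exact (abs_of_nonneg (by positivity)).symm
  rw [e4, ← sq_abs t]; ring

/-- factor -/
noncomputable def Zf {n M : ℕ} (x w : Fin n → ℝ) (p q : Fin M → Fin n) (t : ℝ)
    (π : Equiv.Perm (Fin n)) (l : Fin M) : ℂ :=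
  (1 + Complex.exp (((-(t * dl x w π (p l) (q l)) : ℝ) : ℂ) * Complex.I)) / 2

lemma half_exp (α : ℝ) : ‖(1 + Complex.exp ((α : ℂ) * Complex.I)) / 2‖ = |Real.cos (α/2)| := by
  have : (1 + Complex.exp ((α : ℂ) * Complex.I)) / 2
      = Complex.exp (((α/2 : ℝ) : ℂ) * Complex.I) * ((Real.cos (α/2) : ℝ) : ℂ) := by
    rw [Complex.ofReal_cos, Complex.cos, mul_div_assoc', mul_add, ← Complex.exp_add, ← Complex.exp_add]
    congr 1
    rw [show (((α/2 : ℝ) : ℂ) * Complex.I + -((α/2 : ℝ) : ℂ) * Complex.I) = 0 by ring, Complex.exp_zero, add_comm]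
    congr 2
    push_cast; ring
  rw [this, norm_mul, Complex.norm_exp_ofReal_mul_I, one_mul, Complex.norm_real, Real.norm_eq_abs]

noncomputable def cz {n M : ℕ} (x w : Fin n → ℝ) (p q : Fin M → Fin n) (t : ℝ)
    (π : Equiv.Perm (Fin n)) (l : Fin M) : ℝ :=
  |Real.cos (t * (x (p l) - x (q l)) / 2 * (w (π (p l)) - w (π (q l))))|

lemma Zf_norm {n M : ℕ} (x w : Fin n → ℝ) (p q : Fin M → Fin n) (t : ℝ)
    (π : Equiv.Perm (Fin n)) (l : Fin M) : ‖Zf x w p q t π l‖ = cz x w p q t π l := by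
  unfold Zf cz
  rw [half_exp, ← Real.cos_neg]
  congr 2; unfold dl; ring

lemma prod_insert {n M : ℕ} (x w : Fin n → ℝ) (p q : Fin M → Fin n) (t : ℝ)
    (hp : Function.Injective p) (hq : Function.Injective q) (hpq : ∀ l l', p l ≠ q l')
    (L : Finset (Fin M)) :
    ∑ π, ph x w t π * ∏ l ∈ L, Zf x w p q t π l = ∑ π, ph x w t π := by
  induction L using Finset.induction_on with
  | empty => simp
  | insert m L hm ih =>
    rw [← ih]
    have e1 : ∀ π, ph x w t π * ∏ l ∈ insert m L, Zf x w p q t π l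
       = (ph x w t π * ∏ l ∈ L, Zf x w p q t π l) / 2 +
         (ph x w t (π * Equiv.swap (p m) (q m)) *
           ∏ l ∈ L, Zf x w p q t (π * Equiv.swap (p m) (q m)) l) / 2 := by
      intro π
      rw [Finset.prod_insert hm, ph_swap]
      have : ∏ l ∈ L, Zf x w p q t (π * Equiv.swap (p m) (q m)) l = ∏ l ∈ L, Zf x w p q t π l := by
        refine Finset.prod_congr rfl fun l hl => ?_
        have hlm : l ≠ m := fun h => hm (h ▸ hl)
        unfold Zf dl
        rw [Equiv.Perm.mul_apply, Equiv.Perm.mul_apply,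
          Equiv.swap_apply_of_ne_of_ne (fun h => hlm (hp h)) (hpq _ _),
          Equiv.swap_apply_of_ne_of_ne (hpq _ _).symm (fun h => hlm (hq h))]
      rw [this, Zf]; ring
    simp_rw [e1, Finset.sum_add_distrib]
    have e2 : ∑ π, (ph x w t (π * Equiv.swap (p m) (q m)) *
           ∏ l ∈ L, Zf x w p q t (π * Equiv.swap (p m) (q m)) l) / 2
        = ∑ π, (ph x w t π * ∏ l ∈ L, Zf x w p q t π l) / 2 :=
      Fintype.sum_equiv (Equiv.mulRight (Equiv.swap (p m) (q m))) _ _ (fun π => rfl)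
    rw [e2, ← Finset.sum_add_distrib]
    exact Finset.sum_congr rfl fun π _ => by ring

lemma prod_resample {n M : ℕ} (x w : Fin n → ℝ) (p q : Fin M → Fin n) (t ρ : ℝ)
    (hp : Function.Injective p) (hq : Function.Injective q) (hpq : ∀ l l', p l ≠ q l')
    (hρ : ∀ l, ∀ B : Finset (Fin n), n ≤ B.card + 2 * M → ∀ v : ℝ,
      ∑ b ∈ B, |Real.cos (t * (x (p l) - x (q l)) / 2 * (v - w b))| ≤ ρ * B.card)
    (m : Fin M) (L : Finset (Fin M)) (hm : m ∉ L) :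
    ∑ π, ∏ l ∈ insert m L, cz x w p q t π l ≤ ρ * ∑ π, ∏ l ∈ L, cz x w p q t π l := by
  classical
  set U : Finset (Fin n) := insert (p m) (L.image p ∪ L.image q) with hU
  set B : Finset (Fin n) := Uᶜ with hB
  have hLM : L.card + 1 ≤ M := by
    have := Finset.card_le_univ (insert m L)
    rwa [Finset.card_insert_of_notMem hm, Fintype.card_fin] at this
  have hUc : U.card ≤ 2 * L.card + 1 := by
    refine (Finset.card_insert_le _ _).trans ?_
    have := Finset.card_union_le (L.image p) (L.image q)
    have h1 := Finset.card_image_le (s := L) (f := p)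
    have h2 := Finset.card_image_le (s := L) (f := q)
    omega
  have hBc : n ≤ B.card + 2 * M := by
    have : B.card = n - U.card := by rw [hB, Finset.card_compl, Fintype.card_fin]
    omega
  have hqB : q m ∈ B := by
    simp only [hB, hU, Finset.mem_compl, Finset.mem_insert, Finset.mem_union, Finset.mem_image, not_or, not_exists, not_and]
    refine ⟨(hpq _ _).symm, fun l _ => hpq _ _, fun l hl h => hm ((hq h) ▸ hl)⟩
  have hBpos : (0:ℝ) < B.card := by exact_mod_cast Finset.card_pos.2 ⟨_, hqB⟩
  have re : ∀ b ∈ B, ∑ π, ∏ l ∈ insert m L, cz x w p q t π l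
      = ∑ π : Equiv.Perm (Fin n), |Real.cos (t * (x (p m) - x (q m)) / 2 * (w (π (p m)) - w (π b)))| * ∏ l ∈ L, cz x w p q t π l := by
    intro b hb
    simp only [hB, hU, Finset.mem_compl, Finset.mem_insert, Finset.mem_union, Finset.mem_image, not_or, not_exists, not_and] at hb
    symm
    refine Fintype.sum_equiv (Equiv.mulRight (Equiv.swap (q m) b)) _ _ (fun π => ?_)
    rw [Finset.prod_insert hm]
    have : ∏ l ∈ L, cz x w p q t ((Equiv.mulRight (Equiv.swap (q m) b)) π) l = ∏ l ∈ L, cz x w p q t π l := by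
      refine Finset.prod_congr rfl fun l hl => ?_
      have hlm : l ≠ m := fun h => hm (h ▸ hl)
      unfold cz
      rw [Equiv.coe_mulRight, Equiv.Perm.mul_apply, Equiv.Perm.mul_apply,
          Equiv.swap_apply_of_ne_of_ne (hpq _ _) (hb.2.1 l hl),
          Equiv.swap_apply_of_ne_of_ne (fun h => hlm (hq h)) (hb.2.2 l hl)]
    rw [this]
    congr 1
    unfold cz
    rw [Equiv.coe_mulRight, Equiv.Perm.mul_apply, Equiv.Perm.mul_apply, Equiv.swap_apply_left,
      Equiv.swap_apply_of_ne_of_ne (hpq _ _) (Ne.symm hb.1)]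
  have s1 : (B.card : ℝ) * ∑ π, ∏ l ∈ insert m L, cz x w p q t π l
      = ∑ π : Equiv.Perm (Fin n), (∑ b ∈ B, |Real.cos (t * (x (p m) - x (q m)) / 2 * (w (π (p m)) - w (π b)))|) * ∏ l ∈ L, cz x w p q t π l := by
    have := Finset.sum_congr (rfl : B = B) re
    rw [Finset.sum_const, nsmul_eq_mul] at this
    rw [this, Finset.sum_comm]
    exact Finset.sum_congr rfl fun π _ => by rw [Finset.sum_mul]
  have s2 : (B.card : ℝ) * ∑ π, ∏ l ∈ insert m L, cz x w p q t π l
      ≤ B.card * (ρ * ∑ π, ∏ l ∈ L, cz x w p q t π l) := by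
    rw [s1, ← mul_assoc, Finset.mul_sum]
    refine Finset.sum_le_sum fun π _ => ?_
    have hz : 0 ≤ ∏ l ∈ L, cz x w p q t π l := Finset.prod_nonneg fun l _ => abs_nonneg _
    refine mul_le_mul_of_nonneg_right ?_ hz
    have := hρ m (B.map π.toEmbedding) (by rw [Finset.card_map]; exact hBc) (w (π (p m)))
    rw [Finset.sum_map, Finset.card_map] at this
    rw [mul_comm (B.card : ℝ)]; exact this
  exact le_of_mul_le_mul_left s2 hBpos

theorem decay_gen {n M : ℕ} (x w : Fin n → ℝ) (p q : Fin M → Fin n) (t ρ : ℝ) (hρ0 : 0 ≤ ρ)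
    (hp : Function.Injective p) (hq : Function.Injective q) (hpq : ∀ l l', p l ≠ q l')
    (hρ : ∀ l, ∀ B : Finset (Fin n), n ≤ B.card + 2 * M → ∀ v : ℝ,
      ∑ b ∈ B, |Real.cos (t * (x (p l) - x (q l)) / 2 * (v - w b))| ≤ ρ * B.card) :
    ‖fch (Tst x w) t‖ ≤ ρ ^ M := by
  have h1 : ∀ L : Finset (Fin M), ∑ π, ∏ l ∈ L, cz x w p q t π l
      ≤ ρ ^ L.card * Fintype.card (Equiv.Perm (Fin n)) := by
    intro L
    induction L using Finset.induction_on with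
    | empty => simp
    | insert m L hm ih =>
      refine (prod_resample x w p q t ρ hp hq hpq hρ m L hm).trans ?_
      rw [Finset.card_insert_of_notMem hm, pow_succ]
      calc _ ≤ ρ * (ρ ^ L.card * Fintype.card (Equiv.Perm (Fin n))) := by gcongr
        _ = _ := by ring
  have h2 := h1 Finset.univ
  have hN : (0:ℝ) < Fintype.card (Equiv.Perm (Fin n)) := by exact_mod_cast Fintype.card_pos
  have h3 : ‖∑ π, ph x w t π‖ ≤ ρ ^ M * Fintype.card (Equiv.Perm (Fin n)) := by
    rw [← prod_insert x w p q t hp hq hpq Finset.univ]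
    refine le_trans ((norm_sum_le _ _).trans (Finset.sum_le_sum fun π _ => ?_)) (h2.trans (by simp))
    rw [norm_mul, ph_norm, one_mul, norm_prod]
    exact le_of_eq (Finset.prod_congr rfl fun l _ => Zf_norm _ _ _ _ _ _ _)
  have h4 : fch (Tst x w) t = (∑ π, ph x w t π) / (Fintype.card (Equiv.Perm (Fin n)) : ℂ) := rfl
  rw [h4, norm_div, Complex.norm_natCast, div_le_iff₀ hN]
  exact h3

lemma sin_pair (X Y : ℝ) : Real.sin (X - Y)^2 / 2 ≤ Real.sin X^2 + Real.sin Y^2 := by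
  rw [Real.sin_sub]
  nlinarith [sq_nonneg (Real.sin X * Real.cos Y + Real.cos X * Real.sin Y), Real.sin_sq_add_cos_sq X,
    Real.sin_sq_add_cos_sq Y, mul_nonneg (sq_nonneg (Real.sin X)) (sq_nonneg (Real.sin Y)),
    mul_nonneg (sq_nonneg (Real.sin X)) (sq_nonneg (Real.cos Y)),
    mul_nonneg (sq_nonneg (Real.cos X)) (sq_nonneg (Real.sin Y))]

lemma cos_sin (X : ℝ) : |Real.cos X| ≤ 1 - Real.sin X^2/2 := by
  rw [Real.sin_sq, ← sq_abs (Real.cos X)]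
  nlinarith [sq_nonneg (|Real.cos X| - 1)]

lemma cos_window {n N0 : ℕ} (w : Fin n → ℝ) (a b : Fin N0 → Fin n) (ha : Function.Injective a)
    (hb : Function.Injective b) (θ v s0 : ℝ) (hs0 : 0 ≤ s0)
    (hy : ∀ k, s0 ≤ Real.sin (θ * (w (b k) - w (a k)))^2) (B : Finset (Fin n)) :
    ∑ i ∈ B, |Real.cos (θ * (v - w i))| ≤ B.card - s0/8 * (N0 - 2 * (n - B.card)) := by
  classical
  have h1 : ∑ i ∈ B, |Real.cos (θ * (v - w i))| ≤ ∑ i ∈ B, (1 - Real.sin (θ * (v - w i))^2/2) :=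
    Finset.sum_le_sum fun i _ => cos_sin _
  rw [Finset.sum_sub_distrib, ← Finset.sum_div] at h1
  simp only [Finset.sum_const, nsmul_eq_mul, mul_one] at h1
  set S := Finset.univ.filter (fun k => a k ∈ B ∧ b k ∈ B) with hS
  have hSa : ∑ k ∈ S, Real.sin (θ * (v - w (a k)))^2 ≤ ∑ i ∈ B, Real.sin (θ * (v - w i))^2 := by
    rw [← Finset.sum_image (s := S) (g := a) (f := fun i => Real.sin (θ * (v - w i))^2)
      (fun x _ y _ h => ha h)]
    refine Finset.sum_le_sum_of_subset_of_nonneg ?_ (fun _ _ _ => sq_nonneg _)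
    intro i hi
    obtain ⟨k, hk, rfl⟩ := Finset.mem_image.1 hi
    exact ((Finset.mem_filter.1 hk).2).1
  have hSb : ∑ k ∈ S, Real.sin (θ * (v - w (b k)))^2 ≤ ∑ i ∈ B, Real.sin (θ * (v - w i))^2 := by
    rw [← Finset.sum_image (s := S) (g := b) (f := fun i => Real.sin (θ * (v - w i))^2)
      (fun x _ y _ h => hb h)]
    refine Finset.sum_le_sum_of_subset_of_nonneg ?_ (fun _ _ _ => sq_nonneg _)
    intro i hi
    obtain ⟨k, hk, rfl⟩ := Finset.mem_image.1 hi
    exact ((Finset.mem_filter.1 hk).2).2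
  have hSs : (S.card : ℝ) * (s0/2) ≤ ∑ k ∈ S, Real.sin (θ * (v - w (a k)))^2 + ∑ k ∈ S, Real.sin (θ * (v - w (b k)))^2 := by
    rw [← Finset.sum_add_distrib, ← nsmul_eq_mul, ← Finset.sum_const]
    refine Finset.sum_le_sum fun k _ => ?_
    have := sin_pair (θ * (v - w (a k))) (θ * (v - w (b k)))
    have e : θ * (v - w (a k)) - θ * (v - w (b k)) = θ * (w (b k) - w (a k)) := by ring
    rw [e] at this
    linarith [hy k]
  have hcard : N0 ≤ S.card + 2 * (Bᶜ).card := by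
    have hc : (Sᶜ).card ≤ (Bᶜ).card + (Bᶜ).card := by
      have hsub : Sᶜ ⊆ Finset.univ.filter (fun k => a k ∈ Bᶜ) ∪ Finset.univ.filter (fun k => b k ∈ Bᶜ) := by
        intro k hk
        simp only [hS, Finset.mem_compl, Finset.mem_filter, Finset.mem_univ, true_and, not_and,
          Finset.mem_union] at hk ⊢
        tauto
      refine (Finset.card_le_card hsub).trans ((Finset.card_union_le _ _).trans (add_le_add ?_ ?_))
      · exact Finset.card_le_card_of_injOn a (fun k hk => (Finset.mem_filter.1 hk).2) (fun x _ y _ h => ha h)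
      · exact Finset.card_le_card_of_injOn b (fun k hk => (Finset.mem_filter.1 hk).2) (fun x _ y _ h => hb h)
    have := Finset.card_add_card_compl S
    rw [Fintype.card_fin] at this
    omega
  have hB := Finset.card_add_card_compl B
  rw [Fintype.card_fin] at hB
  have hB2 : ((Bᶜ).card : ℝ) = n - B.card := by have := congrArg (fun z : ℕ => (z:ℝ)) hB; push_cast at this; linarith
  have hc2 : (N0:ℝ) ≤ S.card + 2 * (n - B.card) := by rw [← hB2]; exact_mod_cast hcard
  have : s0 * (N0 - 2 * (n - B.card)) ≤ s0 * S.card := by gcongr; linarith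
  linarith

lemma Jdiff (J : ℝ → ℝ) (hJcd : ContDiffOn ℝ 1 J (Set.Ioo (0 : ℝ) 1)) (t : ℝ) (ht : t ∈ Set.Ioo (0:ℝ) 1) :
    HasDerivAt J (deriv J t) t :=
  ((hJcd.differentiableOn (by norm_num)).differentiableAt (isOpen_Ioo.mem_nhds ht)).hasDerivAt

lemma J_interval (J : ℝ → ℝ)
    (hJnc : ∃ t₁ ∈ Set.Ioo (0 : ℝ) 1, ∃ t₂ ∈ Set.Ioo (0 : ℝ) 1, J t₁ ≠ J t₂)
    (hJcd : ContDiffOn ℝ 1 J (Set.Ioo (0 : ℝ) 1)) :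
    ∃ τ η c : ℝ, 0 < η ∧ 0 < c ∧ 0 < τ ∧ τ + 2 * η < 1 ∧
      ∀ s ∈ Set.Icc τ (τ + 2 * η), ∀ s' ∈ Set.Icc τ (τ + 2 * η), s ≤ s' →
        c * (s' - s) ≤ |J s' - J s| ∧ |J s' - J s| ≤ 2 * c * (s' - s) := by
  obtain ⟨t₁, h1, t₂, h2, hne⟩ := hJnc
  have hd := Jdiff J hJcd
  have ex : ∃ t0 ∈ Set.Ioo (0:ℝ) 1, deriv J t0 ≠ 0 := by
    by_contra hcon
    push Not at hcon
    have := (convex_Ioo (0:ℝ) 1).norm_image_sub_le_of_norm_hasDerivWithin_le (f := J) (f' := deriv J) (C := 0)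
      (fun s hs => (hd s hs).hasDerivWithinAt) (fun s hs => by simp [hcon s hs]) h1 h2
    simp at this
    exact hne (by linarith)
  obtain ⟨t0, ht0, hJ0⟩ := ex
  have hcont : ContinuousAt (deriv J) t0 :=
    (hJcd.continuousOn_deriv_of_isOpen isOpen_Ioo le_rfl).continuousAt (isOpen_Ioo.mem_nhds ht0)
  set A := |deriv J t0| with hA
  have hApos : 0 < A := abs_pos.2 hJ0
  obtain ⟨δ, hδ, hball⟩ := Metric.continuousAt_iff.1 hcont (A/4) (by linarith)
  obtain ⟨ht00, ht01⟩ := ht0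
  set η := min (δ/4) ((1 - t0)/4) with hη
  have hηpos : 0 < η := by rw [hη]; apply lt_min <;> linarith
  have hη1 : η ≤ δ/4 := min_le_left _ _
  have hη2 : η ≤ (1-t0)/4 := min_le_right _ _
  refine ⟨t0, η, 3*A/4, hηpos, by linarith, ht00, by linarith, ?_⟩
  intro s hs s' hs' hss
  have mv := (convex_Icc t0 (t0 + 2*η)).norm_image_sub_le_of_norm_hasDerivWithin_le
    (f := fun u => J u - deriv J t0 * u) (f' := fun u => deriv J u - deriv J t0) (C := A/4)
    (fun u hu => by
      have hu1 : u ∈ Set.Ioo (0:ℝ) 1 := ⟨by linarith [hu.1], by linarith [hu.2]⟩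
      refine HasDerivAt.hasDerivWithinAt ?_
      exact ((hd u hu1).sub ((hasDerivAt_id u).const_mul (deriv J t0))).congr_deriv (by simp))
    (fun u hu => by
      have : dist u t0 < δ := by
        rw [Real.dist_eq, abs_lt]; constructor <;> linarith [hu.1, hu.2]
      exact (hball this).le) hs hs'
  simp only [Real.norm_eq_abs] at mv
  rw [abs_of_nonneg (sub_nonneg.2 hss)] at mv
  have e : J s' - deriv J t0 * s' - (J s - deriv J t0 * s) = (J s' - J s) - deriv J t0 * (s' - s) := by ring
  rw [e] at mv
  have e2 : |deriv J t0 * (s' - s)| = A * (s' - s) := by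
    rw [abs_mul, abs_of_nonneg (sub_nonneg.2 hss)]
  have k1 := abs_sub_abs_le_abs_sub (J s' - J s) (deriv J t0 * (s' - s))
  have k2 := abs_sub_abs_le_abs_sub (deriv J t0 * (s' - s)) (J s' - J s)
  rw [abs_sub_comm (deriv J t0 * (s' - s))] at k2
  rw [e2] at k1 k2
  have : 0 ≤ A * (s' - s) := mul_nonneg hApos.le (sub_nonneg.2 hss)
  constructor <;> nlinarith

lemma Jwin (J : ℝ → ℝ)
    (hJnc : ∃ t₁ ∈ Set.Ioo (0 : ℝ) 1, ∃ t₂ ∈ Set.Ioo (0 : ℝ) 1, J t₁ ≠ J t₂)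
    (hJcd : ContDiffOn ℝ 1 J (Set.Ioo (0 : ℝ) 1)) :
    ∃ η c : ℝ, 0 < η ∧ η ≤ 1 ∧ 0 < c ∧ ∀ n : ℕ, 2/η ≤ (n:ℝ) → ∀ h : ℕ, 1 ≤ h → (h:ℝ) ≤ (n+1) * η →
      ∃ N0 : ℕ, ∃ a b : Fin N0 → Fin n, Function.Injective a ∧ Function.Injective b ∧
        η * n / 2 ≤ N0 ∧ ∀ k,
        c * (h / (n+1)) ≤ |J ((((b k : Fin n) : ℕ) + 1 : ℝ) / ((n:ℝ)+1)) - J ((((a k : Fin n) : ℕ) + 1 : ℝ) / ((n:ℝ)+1))| ∧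
        |J ((((b k : Fin n) : ℕ) + 1 : ℝ) / ((n:ℝ)+1)) - J ((((a k : Fin n) : ℕ) + 1 : ℝ) / ((n:ℝ)+1))| ≤ 2 * c * (h / (n+1)) := by
  obtain ⟨τ, η, c, hη, hc, hτ, hτ1, hJ⟩ := J_interval J hJnc hJcd
  refine ⟨η, c, hη, by linarith, hc, ?_⟩
  intro n hn h hh1 hh2
  have hn1 : (0:ℝ) < n + 1 := by positivity
  set i0 := ⌈τ * (n+1)⌉₊ with hi0
  set N0 := ⌊(n+1:ℝ) * η⌋₊ with hN0
  have hi0a : τ * (n+1) ≤ i0 := Nat.le_ceil _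
  have hi0b : (i0:ℝ) < τ * (n+1) + 1 := Nat.ceil_lt_add_one (by positivity)
  have hi0c : 1 ≤ i0 := Nat.one_le_ceil_iff.2 (by positivity)
  have hN0a : (N0:ℝ) ≤ (n+1) * η := Nat.floor_le (by positivity)
  have hN0b : (n+1) * η < N0 + 1 := Nat.lt_floor_add_one _
  have bnd : ∀ k : Fin N0, (i0:ℝ) + k ≤ (τ + η) * (n+1) := by
    intro k
    have : ((k:ℕ):ℝ) + 1 ≤ N0 := by exact_mod_cast k.2
    nlinarith
  have bnd2 : ∀ k : Fin N0, (i0:ℝ) + k + h ≤ (τ + 2 * η) * (n+1) := by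
    intro k; have := bnd k; nlinarith
  have bnd3 : ∀ k : Fin N0, i0 + k + h < n + 1 := by
    intro k
    have h1 := bnd2 k
    have : (τ + 2 * η) * (n+1) < 1 * (n+1) := by gcongr
    have : ((i0 + k + h : ℕ) : ℝ) < ((n + 1 : ℕ) : ℝ) := by push_cast; linarith
    exact_mod_cast this
  refine ⟨N0, fun k => ⟨i0 - 1 + k, by have := bnd3 k; omega⟩, fun k => ⟨i0 - 1 + k + h, by have := bnd3 k; omega⟩,
    ?_, ?_, ?_, ?_⟩
  · intro k k' hk; simp only [Fin.mk.injEq] at hk; ext; omega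
  · intro k k' hk; simp only [Fin.mk.injEq] at hk; ext; omega
  · have : 2 ≤ n * η := by rwa [div_le_iff₀ hη] at hn
    nlinarith
  · intro k
    simp only
    have e1 : (((i0 - 1 + k : ℕ) : ℝ) + 1) = i0 + k := by
      push_cast [Nat.cast_sub hi0c]; ring
    have e2 : (((i0 - 1 + k + h : ℕ) : ℝ) + 1) = i0 + k + h := by
      push_cast [Nat.cast_sub hi0c]; ring
    rw [e1, e2]
    have hk0 : (0:ℝ) ≤ ((k:ℕ):ℝ) := Nat.cast_nonneg _
    have hh0 : (0:ℝ) ≤ (h:ℝ) := Nat.cast_nonneg _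
    have q := hJ (((i0:ℝ)+k)/(n+1)) ⟨by rw [le_div_iff₀ hn1]; linarith, by rw [div_le_iff₀ hn1]; linarith [bnd2 k]⟩
      (((i0:ℝ)+k+h)/(n+1)) ⟨by rw [le_div_iff₀ hn1]; linarith, by rw [div_le_iff₀ hn1]; linarith [bnd2 k]⟩
      (div_le_div_of_nonneg_right (by linarith) hn1.le)
    have e3 : ((i0:ℝ)+k+h)/(n+1) - ((i0:ℝ)+k)/(n+1) = h/(n+1) := by ring
    rw [e3] at q
    exact q

lemma card_win {n : ℕ} (c C : ℝ) (hc : 0 < c) (hC : 0 < C) (x : Fin n → ℝ) (hx : ∑ i, x i = 0)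
    (h1 : c * n ≤ ∑ i, |x i|) (h2 : ∑ i, x i^2 ≤ C * n) :
    c^2/(32*C) * n ≤ ((Finset.univ.filter (fun i => c/8 ≤ x i ∧ x i ≤ 8*C/c)).card : ℝ) := by
  set K := 8*C/c with hK
  have hKpos : 0 < K := by positivity
  have pt : ∀ i, (|x i| + x i)/2 ≤ c/8 + x i^2/K + K * (if c/8 ≤ x i ∧ x i ≤ K then 1 else 0) := by
    intro i
    have hq : 0 ≤ x i^2/K := by positivity
    by_cases ha : c/8 ≤ x i
    · have hxp : 0 ≤ x i := by linarith
      rw [abs_of_nonneg hxp]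
      by_cases hb : x i ≤ K
      · rw [if_pos ⟨ha, hb⟩]; linarith
      · push Not at hb
        rw [if_neg (fun h => absurd h.2 (not_le.2 hb))]
        have : x i ≤ x i^2/K := by rw [le_div_iff₀ hKpos]; nlinarith
        linarith
    · push Not at ha
      rw [if_neg (fun h => absurd h.1 (not_le.2 ha))]
      have : (|x i| + x i)/2 ≤ c/8 := by
        rcases abs_cases (x i) with h | h <;> linarith
      linarith
  have hs := Finset.sum_le_sum (s := Finset.univ) fun i _ => pt i
  rw [← Finset.sum_div, Finset.sum_add_distrib, hx, Finset.sum_add_distrib, Finset.sum_add_distrib,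
    ← Finset.mul_sum, Finset.sum_boole] at hs
  simp only [Finset.sum_const, Finset.card_univ, Fintype.card_fin, nsmul_eq_mul, ← Finset.sum_div] at hs
  set Q := ((Finset.univ.filter (fun i => c/8 ≤ x i ∧ x i ≤ K)).card : ℝ)
  have h3 : (∑ i, x i^2)/K ≤ c/8 * n := by
    rw [div_le_iff₀ hKpos, hK]
    refine h2.trans (le_of_eq ?_); field_simp
  have h4 : c/4 * n ≤ K * Q := by linarith
  have h5 : K * (c^2/(32*C) * n) ≤ K * Q := by
    refine le_trans (le_of_eq ?_) h4
    rw [hK]; field_simp; ring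
  exact le_of_mul_le_mul_left h5 hKpos

lemma sin_lower (y : ℝ) (hy : |y| ≤ 1) : y^2/4 ≤ Real.sin y^2 := by
  have key : ∀ z, 0 ≤ z → z ≤ 1 → z^2/4 ≤ Real.sin z^2 := by
    intro z h0 h1
    rcases h0.eq_or_lt with h | h
    · rw [← h]; simp
    have := Real.sin_gt_sub_cube h
    have h2 : z/2 ≤ Real.sin z := by nlinarith [pow_pos h 2, pow_pos h 3, mul_le_one₀ h1 h0 h1]
    calc z^2/4 = (z/2)^2 := by ring
      _ ≤ _ := by gcongr
  have := key |y| (abs_nonneg y) hy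
  rw [sq_abs] at this
  rcases abs_cases y with h | h
  · rwa [h.1] at this
  · rw [h.1, Real.sin_neg] at this; simpa using this

lemma fch_zero {n : ℕ} (x w : Fin n → ℝ) : ‖fch (Tst x w) 0‖ = 1 := by
  simp [fch]

set_option maxHeartbeats 1000000 in
theorem decay (J : ℝ → ℝ)
    (hJnc : ∃ t₁ ∈ Set.Ioo (0 : ℝ) 1, ∃ t₂ ∈ Set.Ioo (0 : ℝ) 1, J t₁ ≠ J t₂)
    (hJcd : ContDiffOn ℝ 1 J (Set.Ioo (0 : ℝ) 1)) (c C sl su : ℝ) (hc : 0 < c) (hC : 0 < C)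
    (hsl : 0 < sl) (hsu : 0 < su) :
    ∃ γ : ℝ, 0 < γ ∧ ∃ N1 : ℕ, ∀ n : ℕ, N1 ≤ n → ∀ x : Fin n → ℝ, ∑ i, x i = 0 →
      c * n ≤ ∑ i, |x i| → ∑ i, x i^2 ≤ C * n → ∀ σ : ℝ, 0 < σ → sl * n ≤ σ^2 → σ^2 ≤ su * n →
      ∀ μ t : ℝ, |t| ≤ n →
      ‖fch (Tst x (fun j : Fin n => (J (((j : ℕ) + 1 : ℝ) / ((n : ℝ) + 1)) - μ)/σ)) t‖
        ≤ Real.exp (-(γ * min (t^2) n)) := by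
  obtain ⟨η, c1, hη, hη1, hc1, hwin⟩ := Jwin J hJnc hJcd
  set ε := c/8 with hε
  set K := 8*C/c with hK
  have hεp : 0 < ε := by positivity
  have hKp : 0 < K := by positivity
  set c' := min (c^2/(32*C)) (η/16) with hc'
  have hc'p : 0 < c' := by rw [hc']; apply lt_min <;> positivity
  set γ1 := (1/16) * min (ε^2*c1^2*η^2/su) (1/4) with hγ1
  have hγ_pos : 0 < γ1 := by
    rw [hγ1]; apply mul_pos (by norm_num); apply lt_min <;> positivity
  have hγ_a : 16 * γ1 ≤ ε^2*c1^2*η^2/su := by rw [hγ1]; linarith [min_le_left (ε^2*c1^2*η^2/su) (1/4)]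
  have hγ_b : 16 * γ1 ≤ 1/4 := by rw [hγ1]; linarith [min_le_right (ε^2*c1^2*η^2/su) (1/4)]
  refine ⟨γ1 * η * c' / 64, by positivity, ⌈2/η⌉₊ + ⌈2/c'⌉₊ + ⌈4*c1^2*K^2/sl⌉₊ + 1, ?_⟩
  intro n hn x hx hx1 hx2 σ hσ hsl' hsu' μ t ht
  have n1 : 2/η ≤ n := (Nat.le_ceil _).trans (by exact_mod_cast (by omega : ⌈2/η⌉₊ ≤ n))
  have n2 : 2/c' ≤ n := (Nat.le_ceil _).trans (by exact_mod_cast (by omega : ⌈2/c'⌉₊ ≤ n))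
  have n3 : 4*c1^2*K^2/sl ≤ n := (Nat.le_ceil _).trans (by exact_mod_cast (by omega : ⌈4*c1^2*K^2/sl⌉₊ ≤ n))
  have n4 : (1:ℝ) ≤ n := by exact_mod_cast (by omega : 1 ≤ n)
  have n0 : (0:ℝ) < n := by linarith
  rcases eq_or_ne t 0 with ht0 | ht0
  · subst ht0
    rw [fch_zero]; simp
  set w : Fin n → ℝ := fun j => (J (((j : ℕ) + 1 : ℝ) / ((n : ℝ) + 1)) - μ)/σ with hw
  set M := ⌊c' * n⌋₊ with hM
  have hMa : (M:ℝ) ≤ c' * n := Nat.floor_le (by positivity)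
  have hMb : c' * n < M + 1 := Nat.lt_floor_add_one _
  have hc'n : 2 ≤ c' * n := by rw [div_le_iff₀ hc'p] at n2; linarith
  have hMc : c' * n / 2 ≤ M := by linarith
  -- pairs
  have hcp := card_win c C hc hC x hx hx1 hx2
  have hcq := card_win c C hc hC (fun i => - x i) (by simp [hx]) (by simpa using hx1) (by simpa using hx2)
  rw [← hε, ← hK] at hcp hcq
  have hM1 : (M:ℝ) ≤ c^2/(32*C) * n := hMa.trans (by gcongr; exact min_le_left _ _)
  have hMη : (M:ℝ) ≤ η/16 * n := hMa.trans (by gcongr; exact min_le_right _ _)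
  have hp1 : M ≤ (Finset.univ.filter (fun i => ε ≤ x i ∧ x i ≤ K)).card := by exact_mod_cast hM1.trans hcp
  have hq1 : M ≤ (Finset.univ.filter (fun i => ε ≤ -x i ∧ -x i ≤ K)).card := by exact_mod_cast hM1.trans hcq
  obtain ⟨P⟩ := Function.Embedding.nonempty_of_card_le (α := Fin M)
    (β := {i // i ∈ (Finset.univ.filter (fun i => ε ≤ x i ∧ x i ≤ K))}) (by rw [Fintype.card_coe, Fintype.card_fin]; exact hp1)
  obtain ⟨Q⟩ := Function.Embedding.nonempty_of_card_le (α := Fin M)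
    (β := {i // i ∈ (Finset.univ.filter (fun i => ε ≤ -x i ∧ -x i ≤ K))}) (by rw [Fintype.card_coe, Fintype.card_fin]; exact hq1)
  have hPp : ∀ l, ε ≤ x (P l) ∧ x (P l) ≤ K := fun l => (Finset.mem_filter.1 (P l).2).2
  have hQp : ∀ l, ε ≤ -x (Q l) ∧ -x (Q l) ≤ K := fun l => (Finset.mem_filter.1 (Q l).2).2
  set m0 := min (t^2/n) 1 with hm0
  have hm0n : 0 ≤ m0 := by rw [hm0]; apply le_min <;> positivity
  have hm01 : m0 ≤ 1 := min_le_right _ _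
  set s0 := γ1 * m0 with hs0
  have hs0n : 0 ≤ s0 := by positivity
  have hs01 : s0 ≤ 1/64 := by
    have : γ1 * m0 ≤ γ1 * 1 := by gcongr
    linarith
  set ρ := 1 - s0 * η/32 with hρ
  have hρ0 : 0 ≤ ρ := by
    have : s0 * η ≤ 1 * 1 := by gcongr; linarith
    rw [hρ]; linarith
  have main := decay_gen x w (fun l => (P l : Fin n)) (fun l => (Q l : Fin n)) t ρ hρ0
    (fun a b h => P.injective (Subtype.ext h)) (fun a b h => Q.injective (Subtype.ext h))
    (fun l l' h => by
      have h1 := (hPp l).1; have h2 := (hQp l').1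
      rw [h] at h1; linarith) ?_
  · refine main.trans ?_
    have h1 : ρ ≤ Real.exp (-(s0*η/32)) := by
      have := Real.add_one_le_exp (-(s0*η/32)); rw [hρ]; linarith
    refine (pow_le_pow_left₀ hρ0 h1 M).trans ?_
    rw [← Real.exp_nat_mul]
    apply Real.exp_le_exp.2
    have e : min (t^2) (n:ℝ) = m0 * n := by
      rw [hm0, min_mul_of_nonneg _ _ n0.le, one_mul]; congr 1; field_simp
    rw [e]
    have : c' * n/2 * (s0*η/32) ≤ M * (s0*η/32) := by gcongr
    have e2 : γ1 * η * c'/64 * (m0 * n) = c' * n/2 * (s0*η/32) := by rw [hs0]; ring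
    rw [e2]; linarith
  · intro l B hB v
    set θ := t * (x (P l) - x (Q l))/2 with hθ
    have hD1 : ε ≤ (x (P l) - x (Q l))/2 := by linarith [(hPp l).1, (hQp l).1]
    have hD2 : (x (P l) - x (Q l))/2 ≤ K := by linarith [(hPp l).2, (hQp l).2]
    have hθa : |θ| = |t| * ((x (P l) - x (Q l))/2) := by
      rw [hθ, mul_div_assoc, abs_mul, abs_of_nonneg (show 0 ≤ (x (P l) - x (Q l))/2 by linarith)]
    have htp : 0 < |t| := abs_pos.2 ht0
    set u := |θ|/σ with hu
    have hup : 0 < u := by rw [hu, hθa]; apply div_pos _ hσ; apply mul_pos htp; linarith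
    have hu2 : u^2 ≤ K^2 * n/sl := by
      rw [hu, div_pow, div_le_div_iff₀ (by positivity) hsl, hθa, mul_pow]
      calc |t|^2 * ((x (P l) - x (Q l))/2)^2 * sl ≤ n^2 * K^2 * sl := by
            gcongr
            linarith
        _ = K^2 * n * (sl * n) := by ring
        _ ≤ _ := by gcongr
    have hu3 : ε^2 * t^2/(su * n) ≤ u^2 := by
      have hσ2 : 0 < σ^2 := by positivity
      have hsun : 0 < su * n := by positivity
      rw [hu, div_pow |θ|, div_le_div_iff₀ hsun hσ2, hθa, mul_pow, sq_abs]
      calc ε^2 * t^2 * σ^2 ≤ ((x (P l) - x (Q l))/2)^2 * t^2 * (su * n) := by gcongr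
        _ = _ := by ring
    set ζ := min η (1/(2*u*c1)) with hζ
    have hζp : 0 < ζ := by rw [hζ]; apply lt_min <;> positivity
    have hζ1 : ζ ≤ η := min_le_left _ _
    have hζ2 : ζ ≤ 1/(2*u*c1) := min_le_right _ _
    have hn1 : (0:ℝ) < n + 1 := by linarith
    have hz1 : 1 ≤ (n+1) * ζ := by
      rw [hζ, mul_min_of_nonneg _ _ hn1.le]
      apply le_min
      · rw [div_le_iff₀ hη] at n1; nlinarith
      · rw [mul_one_div, le_div_iff₀ (by positivity), one_mul]
        apply le_of_sq_le_sq _ hn1.le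
        calc (2*u*c1)^2 = 4*c1^2*u^2 := by ring
          _ ≤ 4*c1^2*(K^2*n/sl) := by gcongr
          _ = (4*c1^2*K^2/sl) * n := by ring
          _ ≤ n * n := by gcongr
          _ ≤ _ := by nlinarith
    set h := ⌊(n+1:ℝ) * ζ⌋₊ with hh
    have hh1 : 1 ≤ h := by rw [hh]; exact Nat.one_le_floor_iff _ |>.2 hz1
    have hha : (h:ℝ) ≤ (n+1) * ζ := Nat.floor_le (by positivity)
    have hhb : (n+1) * ζ < h + 1 := Nat.lt_floor_add_one _
    have hh1r : (1:ℝ) ≤ h := by exact_mod_cast hh1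
    have hhc : ζ/2 ≤ h/(n+1) := by rw [le_div_iff₀ hn1]; linarith
    have hhd : h/(n+1) ≤ ζ := by rw [div_le_iff₀ hn1]; linarith
    obtain ⟨N0, a, b, hainj, hbinj, hN0, hab⟩ := hwin n n1 h hh1 (hha.trans (by gcongr))
    have hy : ∀ k, s0 ≤ Real.sin (θ * (w (b k) - w (a k)))^2 := by
      intro k
      obtain ⟨q1, q2⟩ := hab k
      set Δ := J ((((b k : Fin n) : ℕ) + 1 : ℝ) / ((n:ℝ)+1)) - J ((((a k : Fin n) : ℕ) + 1 : ℝ) / ((n:ℝ)+1)) with hΔ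
      have e : θ * (w (b k) - w (a k)) = θ/σ * Δ := by
        rw [hw, hΔ]; simp only; field_simp; ring
      have e2 : |θ/σ * Δ| = u * |Δ| := by rw [abs_mul, abs_div, abs_of_pos hσ]
      have y1 : |θ/σ * Δ| ≤ 1 := by
        rw [e2]
        calc u * |Δ| ≤ u * (2*c1*(1/(2*u*c1))) := by
              gcongr; exact q2.trans (mul_le_mul_of_nonneg_left (hhd.trans hζ2) (by positivity))
          _ = 1 := by field_simp
      rw [e]
      refine le_trans ?_ (sin_lower _ y1)
      rw [← sq_abs, e2]
      have y2 : u * (c1 * (ζ/2)) ≤ u * |Δ| := by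
        gcongr; exact le_trans (by gcongr) q1
      have y3 : (u * (c1 * (ζ/2)))^2 ≤ (u * |Δ|)^2 := by gcongr
      have y4 : 4 * s0 ≤ (u * (c1 * (ζ/2)))^2 := by
        rcases min_choice η (1/(2*u*c1)) with hch | hch
        · rw [hζ, hch]
          have : s0 ≤ γ1 * (t^2/n) := by rw [hs0]; gcongr; exact min_le_left _ _
          calc 4 * s0 ≤ (16 * γ1) * (t^2/n)/4 := by linarith
            _ ≤ (ε^2*c1^2*η^2/su) * (t^2/n)/4 := by gcongr
            _ = (ε^2*t^2/(su*n)) * (c1 * (η/2))^2 := by field_simp; ring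
            _ ≤ u^2 * (c1 * (η/2))^2 := by gcongr
            _ = _ := by ring
        · rw [hζ, hch]
          have e5 : u * (c1 * (1/(2*u*c1)/2)) = 1/4 := by field_simp; norm_num
          rw [e5]
          linarith
      linarith
    have cw := cos_window w a b hainj hbinj θ v s0 hs0n hy B
    have hBn : (B.card:ℝ) ≤ n := by exact_mod_cast (Finset.card_le_univ B).trans (by simp)
    have hBm : (n:ℝ) ≤ B.card + 2 * M := by exact_mod_cast hB
    refine cw.trans ?_
    rw [hρ]
    have k1 : η * n/4 ≤ N0 - 2 * (n - B.card) := by linarith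
    have k2 : s0/8 * (η * n/4) ≤ s0/8 * (N0 - 2 * (n - B.card)) := by gcongr
    have k3 : s0*η/32 * B.card ≤ s0*η/32*n := by gcongr
    have k4 : (1 - s0*η/32) * (B.card:ℝ) = B.card - s0*η/32 * B.card := by ring
    have k5 : s0/8 * (η * n/4) = s0*η/32*n := by ring
    rw [k4]
    linarith only [k2, k3, k5]

lemma sing_split (α s : ℝ) (hα : 0 < α) (hs : s ∈ Set.Ioo (0:ℝ) 1) :
    (s*(1-s)) ^ (-1-α) ≤ 2^(1+α) * (s^(-1-α) + (1-s)^(-1-α)) := by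
  obtain ⟨h0, h1⟩ := hs
  have h1' : 0 < 1 - s := by linarith
  have e2 : (2:ℝ)^(1+α) = (1/2:ℝ)^(-1-α) := by
    rw [one_div, Real.inv_rpow (by norm_num), ← Real.rpow_neg (by norm_num)]; congr 1; ring
  have key : ∀ y : ℝ, 1/2 ≤ y → y^(-1-α) ≤ 2^(1+α) := by
    intro y hy; rw [e2]
    exact Real.rpow_le_rpow_of_nonpos (by norm_num) hy (by linarith)
  have a0 : 0 < s^(-1-α) := Real.rpow_pos_of_pos h0 _
  have a1 : 0 < (1-s)^(-1-α) := Real.rpow_pos_of_pos h1' _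
  have a2 : 0 < (2:ℝ)^(1+α) := by positivity
  rw [Real.mul_rpow h0.le h1'.le]
  rcases le_total (1/2) s with h | h
  · have := key s h
    nlinarith [mul_pos a2 a0, mul_le_mul_of_nonneg_right this a1.le]
  · have := key (1-s) (by linarith)
    nlinarith [mul_pos a2 a1, mul_le_mul_of_nonneg_left this a0.le]

lemma J_growth (J : ℝ → ℝ) (α : ℝ) (hα : 0 < α) (hJcd : ContDiffOn ℝ 1 J (Set.Ioo (0 : ℝ) 1))
    (hV : condV J α) : ∃ K : ℝ, 0 < K ∧ ∀ t ∈ Set.Ioo (0:ℝ) 1,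
      |J t - J (1/2)| ≤ K * (t^(-α) + (1-t)^(-α)) := by
  obtain ⟨Γ, hΓ, hJ⟩ := hV
  set K := Γ * 2^(1+α)/α with hK
  have hKp : 0 < K := by positivity
  set b : ℝ → ℝ := fun s => (1-s)^(-α) - s^(-α) with hb
  have hbd : ∀ s ∈ Set.Ioo (0:ℝ) 1, HasDerivAt b (α * (s^(-1-α) + (1-s)^(-1-α))) s := by
    intro s hs
    have h0 : 0 < s := hs.1
    have h1 : 0 < 1 - s := by linarith [hs.2]
    have d1 := (((hasDerivAt_id s).const_sub 1).rpow_const (p := -α) (Or.inl h1.ne'))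
    have d2 := ((hasDerivAt_id s).rpow_const (p := -α) (Or.inl h0.ne'))
    refine (d1.sub d2).congr_deriv ?_
    simp only [id]
    rw [show -α - 1 = -1-α by ring]; ring
  have hbound : ∀ s ∈ Set.Ioo (0:ℝ) 1, |deriv J s| ≤ K * (α * (s^(-1-α) + (1-s)^(-1-α))) := by
    intro s hs
    refine (hJ s hs).trans ?_
    calc Γ * (s*(1-s))^(-1-α) ≤ Γ * (2^(1+α) * (s^(-1-α) + (1-s)^(-1-α))) := by
          gcongr; exact sing_split α s hα hs
      _ = _ := by rw [hK]; field_simp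
  have mono : ∀ ε : ℝ, |ε| ≤ 1 → MonotoneOn (fun s => K * b s + ε * J s) (Set.Ioo (0:ℝ) 1) := by
    intro ε hε
    have hd : ∀ s ∈ Set.Ioo (0:ℝ) 1, HasDerivAt (fun s => K * b s + ε * J s)
        (K * (α * (s^(-1-α) + (1-s)^(-1-α))) + ε * deriv J s) s := fun s hs =>
      ((hbd s hs).const_mul K).add ((Jdiff J hJcd s hs).const_mul ε)
    apply monotoneOn_of_deriv_nonneg (convex_Ioo 0 1)
    · exact fun s hs => (hd s hs).continuousAt.continuousWithinAt
    · rw [interior_Ioo]; exact fun s hs => (hd s hs).differentiableAt.differentiableWithinAt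
    · rw [interior_Ioo]; intro s hs
      rw [(hd s hs).deriv]
      have h1 := hbound s hs
      have h2 : |ε * deriv J s| ≤ |deriv J s| := by
        rw [abs_mul]; exact mul_le_of_le_one_left (abs_nonneg _) hε
      linarith [neg_abs_le (ε * deriv J s)]
  have hhalf : (1/2:ℝ) ∈ Set.Ioo (0:ℝ) 1 := by constructor <;> norm_num
  have b0 : b (1/2) = 0 := by simp only [hb]; norm_num
  have key : ∀ t ∈ Set.Ioo (0:ℝ) 1, |J t - J (1/2)| ≤ K * |b t| := by
    intro t ht
    have m1 := mono 1 (by norm_num)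
    have m2 := mono (-1) (by norm_num)
    rcases le_total (1/2) t with h | h
    · have q1 := m1 hhalf ht h
      have q2 := m2 hhalf ht h
      simp only [b0] at q1 q2
      have : K * b t ≤ K * |b t| := by gcongr; exact le_abs_self _
      rw [abs_le]; constructor <;> linarith
    · have q1 := m1 ht hhalf h
      have q2 := m2 ht hhalf h
      simp only [b0] at q1 q2
      have : -(K * b t) ≤ K * |b t| := by rw [← mul_neg]; gcongr; exact neg_le_abs _
      rw [abs_le]; constructor <;> linarith
  refine ⟨K, hKp, fun t ht => (key t ht).trans ?_⟩
  gcongr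
  have p1 : 0 < t^(-α) := Real.rpow_pos_of_pos ht.1 _
  have p2 : 0 < (1-t)^(-α) := Real.rpow_pos_of_pos (by linarith [ht.2]) _
  simp only [hb]
  rw [abs_le]; constructor <;> linarith

lemma sum_rpow_neg (β : ℝ) (hβ : 0 < β) (hβ1 : β < 1) (n : ℕ) :
    ∑ j ∈ Finset.range n, ((j:ℝ)+1)^(-β) ≤ (n:ℝ)^(1-β)/(1-β) := by
  have h1 : 0 < 1 - β := by linarith
  induction n with
  | zero => simp [Real.zero_rpow h1.ne']
  | succ n ih =>
    rw [Finset.sum_range_succ]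
    have hn : (0:ℝ) < n + 1 := by positivity
    have hB := rpow_one_add_le_one_add_mul_self (s := -(1/((n:ℝ)+1))) (p := 1-β)
      (by have : 1/((n:ℝ)+1) ≤ 1 := by rw [div_le_one hn]; linarith [Nat.cast_nonneg (α := ℝ) n]
          linarith) h1.le (by linarith)
    have e1 : (1 + -(1/((n:ℝ)+1))) = n/(n+1) := by field_simp; ring
    rw [e1, Real.div_rpow (Nat.cast_nonneg n) hn.le, div_le_iff₀ (Real.rpow_pos_of_pos hn _)] at hB
    have e2 : ((n:ℝ)+1)^(-β) * (n+1) = (n+1)^(1-β) := by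
      nth_rewrite 2 [← Real.rpow_one ((n:ℝ)+1)]
      rw [← Real.rpow_add hn]; congr 1; ring
    have e3 : (1 + (1-β) * -(1/((n:ℝ)+1))) * (n+1)^(1-β) = (n+1)^(1-β) - (1-β) * (n+1)^(-β) := by
      rw [← e2]; field_simp; ring
    rw [e3] at hB
    push_cast
    have : (n:ℝ)^(1-β)/(1-β) + (n+1:ℝ)^(-β) ≤ (n+1:ℝ)^(1-β)/(1-β) := by
      rw [div_add' _ _ _ h1.ne']
      apply div_le_div_of_nonneg_right _ h1.le
      linarith
    linarith

lemma sum_rpow_grid (β : ℝ) (hβ : 0 < β) (hβ1 : β < 1) (n : ℕ) (hn : 1 ≤ n) :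
    ∑ j : Fin n, (((j:ℕ)+1:ℝ)/((n:ℝ)+1))^(-β) ≤ 2/(1-β) * n := by
  have h1 : 0 < 1 - β := by linarith
  have hn0 : (1:ℝ) ≤ n := by exact_mod_cast hn
  have hnp : (0:ℝ) < n := by linarith
  rw [Fin.sum_univ_eq_sum_range (fun j : ℕ => (((j:ℕ)+1:ℝ)/((n:ℝ)+1))^(-β)) n]
  have e : ∀ j ∈ Finset.range n, (((j:ℕ)+1:ℝ)/((n:ℝ)+1))^(-β) = ((n:ℝ)+1)^β * ((j:ℝ)+1)^(-β) := by
    intro j _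
    rw [Real.div_rpow (by positivity) (by positivity), Real.rpow_neg (by positivity : (0:ℝ) ≤ n+1), div_inv_eq_mul, mul_comm]
  rw [Finset.sum_congr rfl e, ← Finset.mul_sum]
  have a := sum_rpow_neg β hβ hβ1 n
  have b : ((n:ℝ)+1)^β ≤ 2 * (n:ℝ)^β := by
    calc ((n:ℝ)+1)^β ≤ (2*n)^β := Real.rpow_le_rpow (by positivity) (by linarith) hβ.le
      _ = 2^β * (n:ℝ)^β := Real.mul_rpow (by norm_num) hnp.le
      _ ≤ 2^(1:ℝ) * (n:ℝ)^β := by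
          gcongr; norm_num
      _ = _ := by rw [Real.rpow_one]
  calc ((n:ℝ)+1)^β * ∑ j ∈ Finset.range n, ((j:ℝ)+1)^(-β) ≤ (2 * (n:ℝ)^β) * ((n:ℝ)^(1-β)/(1-β)) := by
        apply mul_le_mul b a (Finset.sum_nonneg fun j _ => by positivity) (by positivity)
    _ = 2/(1-β) * ((n:ℝ)^β * (n:ℝ)^(1-β)) := by ring
    _ = _ := by rw [← Real.rpow_add hnp]; norm_num

lemma grid_mem {n : ℕ} (j : Fin n) : (((j:ℕ)+1:ℝ)/((n:ℝ)+1)) ∈ Set.Ioo (0:ℝ) 1 := by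
  have : ((j:ℕ):ℝ) + 1 ≤ n := by exact_mod_cast j.2
  constructor
  · positivity
  · rw [div_lt_one (by positivity)]; linarith

lemma scores_s (J : ℝ → ℝ) (α : ℝ) (s : ℕ) (hs : 3 ≤ s) (hα : 0 < α) (hαs : α < 1 / (s : ℝ))
    (hJcd : ContDiffOn ℝ 1 J (Set.Ioo (0 : ℝ) 1)) (hV : condV J α) :
    ∃ C : ℝ, 0 < C ∧ ∀ n : ℕ, 1 ≤ n →
      ∑ j : Fin n, |J (((j:ℕ)+1:ℝ)/((n:ℝ)+1)) - J (1/2)|^s ≤ C * n := by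
  obtain ⟨K, hK, hg⟩ := J_growth J α hα hJcd hV
  have hs0 : (0:ℝ) < s := by exact_mod_cast (by omega : 0 < s)
  set β := α * s with hβ
  have hβ0 : 0 < β := by positivity
  have hβ1 : β < 1 := by rw [lt_div_iff₀ hs0] at hαs; exact hαs
  have h1 : 0 < 1 - β := by linarith
  refine ⟨K^s * 2^(s-1) * (2 * (2/(1-β))), by positivity, fun n hn => ?_⟩
  have pt : ∀ j : Fin n, |J (((j:ℕ)+1:ℝ)/((n:ℝ)+1)) - J (1/2)|^s ≤
      K^s * 2^(s-1) * ((((j:ℕ)+1:ℝ)/((n:ℝ)+1))^(-β) + ((((Fin.rev j:Fin n):ℕ)+1:ℝ)/((n:ℝ)+1))^(-β)) := by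
    intro j
    have hm := grid_mem j
    set u := (((j:ℕ)+1:ℝ)/((n:ℝ)+1)) with hu
    have er : ((((Fin.rev j:Fin n):ℕ)+1:ℝ)/((n:ℝ)+1)) = 1 - u := by
      have : (((Fin.rev j:Fin n):ℕ):ℝ) = n - (j+1) := by
        rw [Fin.val_rev, Nat.cast_sub j.2]; push_cast; ring
      rw [this, hu]; field_simp; ring
    rw [er]
    have hu1 : 0 < 1 - u := by linarith [hm.2]
    have p1 : 0 < u^(-α) := Real.rpow_pos_of_pos hm.1 _
    have p2 : 0 < (1-u)^(-α) := Real.rpow_pos_of_pos hu1 _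
    have e1 : ∀ y : ℝ, 0 < y → (y^(-α))^s = y^(-β) := by
      intro y hy
      rw [← Real.rpow_natCast, ← Real.rpow_mul hy.le, hβ]; congr 1; ring
    calc |J u - J (1/2)|^s ≤ (K * (u^(-α) + (1-u)^(-α)))^s := by
          gcongr; exact hg u hm
      _ = K^s * (u^(-α) + (1-u)^(-α))^s := mul_pow _ _ _
      _ ≤ K^s * (2^(s-1) * ((u^(-α))^s + ((1-u)^(-α))^s)) := by
          gcongr; exact add_pow_le p1.le p2.le s
      _ = _ := by rw [e1 u hm.1, e1 _ hu1]; ring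
  refine (Finset.sum_le_sum fun j _ => pt j).trans ?_
  rw [← Finset.mul_sum, Finset.sum_add_distrib]
  have er : ∑ j : Fin n, ((((Fin.rev j:Fin n):ℕ)+1:ℝ)/((n:ℝ)+1))^(-β) = ∑ j : Fin n, (((j:ℕ)+1:ℝ)/((n:ℝ)+1))^(-β) :=
    Equiv.sum_comp Fin.revPerm (fun j : Fin n => (((j:ℕ)+1:ℝ)/((n:ℝ)+1))^(-β))
  rw [er]
  have g := sum_rpow_grid β hβ0 hβ1 n hn
  calc _ ≤ K^s * 2^(s-1) * (2/(1-β)*n + 2/(1-β)*n) := by gcongr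
    _ = _ := by ring

lemma fourth_mom (p C : ℝ) (hp : 2 < p) (hC : 0 < C) : ∃ C', 0 < C' ∧ ∀ n : ℕ, 1 ≤ n →
    ∀ x : Fin n → ℝ, ∑ i, |x i|^p ≤ C * n → ∑ i, x i^4 ≤ C' * (n:ℝ)^(1 + max (4/p-1) 0) := by
  refine ⟨1 + C + C^(4/p), by positivity, fun n hn x hx => ?_⟩
  have hn0 : (1:ℝ) ≤ n := by exact_mod_cast hn
  have hnp : (0:ℝ) < n := by linarith
  have hCp : 0 < C^(4/p) := by positivity
  have hp0 : 0 < p := by linarith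
  have x4 : ∀ i, x i^4 = |x i|^(4:ℝ) := by
    intro i
    rw [show (4:ℝ) = ((4:ℕ):ℝ) by norm_num, Real.rpow_natCast, ← abs_pow, abs_of_nonneg (by positivity)]
  rcases le_or_gt 4 p with h | h
  · rw [max_eq_right (by rw [sub_nonpos, div_le_one hp0]; exact h), add_zero, Real.rpow_one]
    have pt : ∀ i, x i^4 ≤ 1 + |x i|^p := by
      intro i
      rw [x4]
      rcases le_total (|x i|) 1 with hi | hi
      · have : |x i|^(4:ℝ) ≤ 1 := Real.rpow_le_one (abs_nonneg _) hi (by norm_num)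
        have : 0 ≤ |x i|^p := Real.rpow_nonneg (abs_nonneg _) _
        linarith
      · have := Real.rpow_le_rpow_of_exponent_le hi h
        linarith
    refine (Finset.sum_le_sum fun i _ => pt i).trans ?_
    rw [Finset.sum_add_distrib]
    simp only [Finset.sum_const, Finset.card_univ, Fintype.card_fin, nsmul_eq_mul, mul_one]
    nlinarith [mul_pos hCp hnp]
  · have h4 : 1 + max (4/p-1) 0 = 4/p := by
      rw [max_eq_left (by rw [sub_nonneg, one_le_div hp0]; exact h.le)]; ring
    rw [h4]
    have hCn : 0 < C * n := by positivity
    have pt : ∀ i, x i^4 ≤ (C*n)^((4-p)/p) * |x i|^p := by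
      intro i
      rw [x4]
      have hi : |x i|^p ≤ C * n := (Finset.single_le_sum (f := fun i => |x i|^p)
        (fun j _ => Real.rpow_nonneg (abs_nonneg _) _) (Finset.mem_univ i)).trans hx
      have e1 : |x i|^(4:ℝ) = (|x i|^p)^((4-p)/p) * |x i|^p := by
        rw [← Real.rpow_mul (abs_nonneg _), ← Real.rpow_add_of_nonneg (abs_nonneg _)]
        · congr 1; field_simp; ring
        · have : 0 ≤ (4-p)/p := div_nonneg (by linarith) hp0.le
          positivity
        · exact hp0.le
      rw [e1]
      gcongr
    refine (Finset.sum_le_sum fun i _ => pt i).trans ?_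
    rw [← Finset.mul_sum]
    calc (C*n)^((4-p)/p) * ∑ i, |x i|^p ≤ (C*n)^((4-p)/p) * (C*n)^(1:ℝ) := by
          rw [Real.rpow_one]; gcongr
      _ = (C*n)^(4/p) := by
          rw [← Real.rpow_add hCn]; congr 1; field_simp; ring
      _ = C^(4/p) * (n:ℝ)^(4/p) := Real.mul_rpow hC.le hnp.le
      _ ≤ _ := by gcongr; linarith

lemma second_mom (p C : ℝ) (hp : 2 < p) (n : ℕ) (x : Fin n → ℝ) (hx : ∑ i, |x i|^p ≤ C * n) :
    ∑ i, x i^2 ≤ (1+C) * n := by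
  have pt : ∀ i, x i^2 ≤ 1 + |x i|^p := by
    intro i
    have x2 : x i^2 = |x i|^(2:ℝ) := by
      rw [show (2:ℝ) = ((2:ℕ):ℝ) by norm_num, Real.rpow_natCast, sq_abs]
    rw [x2]
    rcases le_total (|x i|) 1 with hi | hi
    · have : |x i|^(2:ℝ) ≤ 1 := Real.rpow_le_one (abs_nonneg _) hi (by norm_num)
      have : 0 ≤ |x i|^p := Real.rpow_nonneg (abs_nonneg _) _
      linarith
    · have := Real.rpow_le_rpow_of_exponent_le hi hp.le
      linarith
  refine (Finset.sum_le_sum fun i _ => pt i).trans ?_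
  rw [Finset.sum_add_distrib]
  simp only [Finset.sum_const, Finset.card_univ, Fintype.card_fin, nsmul_eq_mul, mul_one]
  linarith

/-- Lower bound for the first absolute moment. -/
lemma first_mom (e E r k : ℝ) (he : 0 < e) (hE : 0 < E) (hr : 0 < r) (hrk : r < k) :
    ∃ c, 0 < c ∧ ∀ n : ℕ, ∀ x : Fin n → ℝ, e * n ≤ ∑ i, |x i|^r → ∑ i, |x i|^k ≤ E * n →
      c * n ≤ ∑ i, |x i| := by
  set δ := (e/4)^(1/r) with hδ
  have hδp : 0 < δ := by positivity
  have hδr : δ^r = e/4 := by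
    rw [hδ, ← Real.rpow_mul (by positivity), one_div_mul_cancel hr.ne', Real.rpow_one]
  set M := (4*E/e)^(1/(k-r)) with hM
  have hMp : 0 < M := by positivity
  have hkr : 0 < k - r := by linarith
  have hMr : M^(k-r) = 4*E/e := by
    rw [hM, ← Real.rpow_mul (by positivity), one_div_mul_cancel hkr.ne', Real.rpow_one]
  have hMr' : M^(r-k) = e/(4*E) := by
    rw [show r - k = -(k-r) by ring, Real.rpow_neg hMp.le, hMr, inv_div]
  have hMrp : 0 < M^r := by positivity
  refine ⟨e/2 * δ/M^r, by positivity, fun n x h1 h2 => ?_⟩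
  have pt : ∀ i, |x i|^r ≤ e/4 + M^r/δ * |x i| + e/(4*E) * |x i|^k := by
    intro i
    have a0 := abs_nonneg (x i)
    have a1 : 0 ≤ M^r/δ * |x i| := by positivity
    have a2 : 0 ≤ e/(4*E) * |x i|^k := by positivity
    rcases le_total (|x i|) δ with hi | hi
    · have : |x i|^r ≤ δ^r := Real.rpow_le_rpow a0 hi hr.le
      linarith
    · rcases le_total (|x i|) M with hm | hm
      · have b1 : |x i|^r ≤ M^r := Real.rpow_le_rpow a0 hm hr.le
        have b2 : M^r ≤ M^r/δ * |x i| := by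
          rw [div_mul_eq_mul_div, le_div_iff₀ hδp]; gcongr
        linarith
      · have hxp : 0 < |x i| := by linarith
        have b1 : |x i|^(r-k) ≤ M^(r-k) := Real.rpow_le_rpow_of_nonpos hMp hm (by linarith)
        have b2 : |x i|^r = |x i|^(r-k) * |x i|^k := by
          rw [← Real.rpow_add hxp]; congr 1; ring
        have b3 : |x i|^r ≤ e/(4*E) * |x i|^k := by
          rw [b2, ← hMr']; gcongr
        linarith
  have hs := Finset.sum_le_sum (s := Finset.univ) fun i _ => pt i
  rw [Finset.sum_add_distrib, Finset.sum_add_distrib, ← Finset.mul_sum, ← Finset.mul_sum] at hs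
  simp only [Finset.sum_const, Finset.card_univ, Fintype.card_fin, nsmul_eq_mul] at hs
  have h3 : e/(4*E) * ∑ i, |x i|^k ≤ e/4 * n := by
    calc _ ≤ e/(4*E) * (E*n) := by gcongr
      _ = _ := by field_simp
  have h4 : e/2 * n ≤ M^r/δ * ∑ i, |x i| := by linarith
  have h5 := mul_le_mul_of_nonneg_right h4 hδp.le
  have e5 : M^r/δ * (∑ i, |x i|) * δ = M^r * ∑ i, |x i| := by field_simp
  rw [e5] at h5
  rw [div_mul_eq_mul_div, div_le_iff₀ hMrp]
  linarith

lemma center2 {n : ℕ} (hn : 1 ≤ n) (d : Fin n → ℝ) (c : ℝ) :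
    ∑ j, (d j - (∑ i, d i)/n)^2 ≤ ∑ j, (d j - c)^2 := by
  have hn0 : (0:ℝ) < n := by exact_mod_cast hn
  set m := (∑ i, d i)/n with hm
  have hs : ∑ j, (d j - m) = 0 := by
    rw [Finset.sum_sub_distrib]; simp [hm]; field_simp; simp
  have e : ∑ j, (d j - c)^2 = ∑ j, (d j - m)^2 + n * (m-c)^2 := by
    have : ∀ j, (d j - c)^2 = (d j - m)^2 + (2*(m-c)) * (d j - m) + (m-c)^2 := fun j => by ring
    simp only [this]
    rw [Finset.sum_add_distrib, Finset.sum_add_distrib, ← Finset.mul_sum, hs]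
    simp
  rw [e]
  have : 0 ≤ n * (m-c)^2 := by positivity
  linarith

lemma center4 {n : ℕ} (hn : 1 ≤ n) (d : Fin n → ℝ) (c : ℝ) :
    ∑ j, (d j - (∑ i, d i)/n)^4 ≤ 16 * ∑ j, (d j - c)^4 := by
  have hn0 : (0:ℝ) < n := by exact_mod_cast hn
  set m := (∑ i, d i)/n with hm
  set y : Fin n → ℝ := fun j => d j - c with hy
  have hs : ∑ j, y j = n * (m - c) := by
    simp only [hy]
    rw [Finset.sum_sub_distrib]; simp [hm]; field_simp
  have c1 := sq_sum_le_card_mul_sum_sq (s := Finset.univ) (f := y)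
  have c2 := sq_sum_le_card_mul_sum_sq (s := Finset.univ) (f := fun j => y j^2)
  simp only [Finset.card_univ, Fintype.card_fin, ← pow_mul] at c1 c2
  norm_num at c2
  rw [hs] at c1
  have c3 : n^2 * (m-c)^2 * n^2 * (m-c)^2 ≤ n^2 * (n * ∑ j, y j^4) := by
    calc (n:ℝ)^2 * (m-c)^2 * n^2 * (m-c)^2 = ((n*(m-c))^2)^2 := by ring
      _ ≤ (n * ∑ j, y j^2)^2 := by gcongr
      _ = n^2 * (∑ j, y j^2)^2 := by ring
      _ ≤ _ := by gcongr
  have c4 : n * (m-c)^4 ≤ ∑ j, y j^4 := by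
    have hp : (0:ℝ) < n^3 := by positivity
    apply le_of_mul_le_mul_left _ hp
    calc (n:ℝ)^3 * (n * (m-c)^4) = n^2 * (m-c)^2 * n^2 * (m-c)^2 := by ring
      _ ≤ _ := c3
      _ = _ := by ring
  have pt : ∀ j, (d j - m)^4 ≤ 8 * y j^4 + 8 * (m-c)^4 := by
    intro j
    have : d j - m = y j - (m - c) := by simp only [hy]; ring
    rw [this]
    nlinarith [sq_nonneg (y j + (m-c)), sq_nonneg (y j^2 - (m-c)^2), sq_nonneg (y j - (m-c)), sq_nonneg (y j^2+(m-c)^2 + 2 * (y j)*(m-c)), mul_nonneg (sq_nonneg (y j + (m-c))) (sq_nonneg (y j - (m-c))), mul_nonneg (sq_nonneg (y j + (m-c))) (sq_nonneg (y j + (m-c))), sq_nonneg (y j * (m-c))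
      , mul_nonneg (sq_nonneg (y j + (m-c))) (sq_nonneg (y j)), mul_nonneg (sq_nonneg (y j + (m-c))) (sq_nonneg (m-c))]
  refine (Finset.sum_le_sum fun j _ => pt j).trans ?_
  rw [Finset.sum_add_distrib, ← Finset.mul_sum]
  simp only [Finset.sum_const, Finset.card_univ, Fintype.card_fin, nsmul_eq_mul]
  linarith

lemma scores_lower (J : ℝ → ℝ)
    (hJnc : ∃ t₁ ∈ Set.Ioo (0 : ℝ) 1, ∃ t₂ ∈ Set.Ioo (0 : ℝ) 1, J t₁ ≠ J t₂)
    (hJcd : ContDiffOn ℝ 1 J (Set.Ioo (0 : ℝ) 1)) :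
    ∃ c : ℝ, 0 < c ∧ ∃ N1 : ℕ, ∀ n : ℕ, N1 ≤ n → ∀ μ : ℝ,
      c * n ≤ ∑ j : Fin n, (J (((j:ℕ)+1:ℝ)/((n:ℝ)+1)) - μ)^2 := by
  obtain ⟨η, c1, hη, hη1, hc1, hwin⟩ := Jwin J hJnc hJcd
  refine ⟨(c1*(η/2))^2 * (η/2)/4, by positivity, ⌈2/η⌉₊ , fun n hn μ => ?_⟩
  have n1 : 2/η ≤ n := (Nat.le_ceil _).trans (by exact_mod_cast hn)
  have n1' : 2 ≤ n * η := by rwa [div_le_iff₀ hη] at n1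
  have n0 : (0:ℝ) < n := lt_of_lt_of_le (by positivity) n1
  have hn1 : (0:ℝ) < n + 1 := by linarith
  set h := ⌊((n:ℝ)+1) * η⌋₊ with hh
  have hz1 : 1 ≤ ((n:ℝ)+1)*η := by nlinarith
  have hh1 : 1 ≤ h := by rw [hh]; exact Nat.one_le_floor_iff _ |>.2 hz1
  have hha : (h:ℝ) ≤ (n+1) * η := Nat.floor_le (by positivity)
  have hhb : (n+1) * η < h + 1 := Nat.lt_floor_add_one _
  have hh1r : (1:ℝ) ≤ h := by exact_mod_cast hh1
  have hhc : η/2 ≤ h/(n+1) := by rw [le_div_iff₀ hn1]; linarith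
  obtain ⟨N0, a, b, hainj, hbinj, hN0, hab⟩ := hwin n n1 h hh1 hha
  set f : Fin n → ℝ := fun j => (J (((j:ℕ)+1:ℝ)/((n:ℝ)+1)) - μ)^2 with hf
  have sub : ∀ g : Fin N0 → Fin n, Function.Injective g → ∑ k, f (g k) ≤ ∑ j, f j := by
    intro g hg
    rw [← Finset.sum_image (s := Finset.univ) (g := g) (f := f) (fun x _ y _ hxy => hg hxy)]
    exact Finset.sum_le_sum_of_subset_of_nonneg (Finset.subset_univ _) (fun j _ _ => sq_nonneg _)
  have s1 := sub a hainj
  have s2 := sub b hbinj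
  have s3 : ∑ k : Fin N0, (c1*(η/2))^2/2 ≤ ∑ k, (f (a k) + f (b k)) := by
    apply Finset.sum_le_sum
    intro k _
    obtain ⟨q1, -⟩ := hab k
    have q2 : c1*(η/2) ≤ |J ((((b k : Fin n) : ℕ) + 1 : ℝ) / ((n:ℝ)+1)) - J ((((a k : Fin n) : ℕ) + 1 : ℝ) / ((n:ℝ)+1))| :=
      (mul_le_mul_of_nonneg_left hhc hc1.le).trans q1
    have q3 := pow_le_pow_left₀ (by positivity) q2 2
    rw [sq_abs] at q3
    simp only [hf]
    set A := J ((((a k : Fin n) : ℕ) + 1 : ℝ) / ((n:ℝ)+1))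
    set B := J ((((b k : Fin n) : ℕ) + 1 : ℝ) / ((n:ℝ)+1))
    nlinarith [sq_nonneg (A - μ + (B - μ))]
  rw [Finset.sum_add_distrib] at s3
  simp only [Finset.sum_const, Finset.card_univ, Fintype.card_fin, nsmul_eq_mul] at s3
  have s4 : η*n/2 * ((c1*(η/2))^2/2) ≤ N0 * ((c1*(η/2))^2/2) := by gcongr
  have : (c1*(η/2))^2 * (η/2)/4 * n = (η*n/2 * ((c1*(η/2))^2/2))/2 := by ring
  rw [this]; linarith

lemma nOne_pos (J : ℝ → ℝ)
    (hJnc : ∃ t₁ ∈ Set.Ioo (0 : ℝ) 1, ∃ t₂ ∈ Set.Ioo (0 : ℝ) 1, J t₁ ≠ J t₂)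
    (hJcd : ContDiffOn ℝ 1 J (Set.Ioo (0 : ℝ) 1)) : 1 ≤ nOne J := by
  obtain ⟨c, hc, N1, hN⟩ := scores_lower J hJnc hJcd
  unfold nOne
  apply le_csSup
  · refine ⟨N1 + 1, fun n hn => ?_⟩
    by_contra hcon
    push Not at hcon
    have h := hN n (by omega) ((∑ j' ∈ Finset.Icc 1 n, J ((j' : ℝ) / ((n : ℝ) + 1))) / (n : ℝ))
    simp only [Set.mem_setOf_eq] at hn
    rw [← Finset.Ico_add_one_right_eq_Icc, Finset.sum_Ico_eq_sum_range] at hn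
    rw [Finset.Ico_add_one_right_eq_Icc, Nat.add_sub_cancel, ← Fin.sum_univ_eq_sum_range (fun k : ℕ => (J (((1+k:ℕ) : ℝ) / ((n : ℝ) + 1))
      - (∑ j' ∈ Finset.Icc 1 n, J ((j' : ℝ) / ((n : ℝ) + 1))) / (n : ℝ)) ^ 2)] at hn
    have e : ∀ j : Fin n, (((1 + (j:ℕ) : ℕ)):ℝ) = ((j:ℕ):ℝ) + 1 := fun j => by push_cast; ring
    simp only [e] at hn
    rw [hn] at h
    have : (0:ℝ) < n := by exact_mod_cast (by omega : 0 < n)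
    have : 0 < c * n := by positivity
    linarith
  · simp

lemma gch_bd (l t : ℝ) (hl : |l| ≤ 1) : ‖gch l t‖ ≤ 3 * Real.exp (-(t^2)/4) := by
  rw [gch_eq, norm_mul, Complex.norm_real, Real.norm_eq_abs, abs_of_pos (Real.exp_pos _)]
  have h1 : ‖(1:ℂ) - Complex.I * ((t^3*l/6:ℝ):ℂ)‖ ≤ 1 + |t|^3/6 := by
    refine (norm_sub_le _ _).trans ?_
    rw [norm_one, norm_mul, Complex.norm_I, one_mul, Complex.norm_real, Real.norm_eq_abs, abs_div, abs_mul, abs_pow]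
    rw [show |(6:ℝ)| = 6 by norm_num]
    have : |t|^3 * |l| ≤ |t|^3 * 1 := by gcongr
    linarith
  have h2 : 1 + |t|^3/6 ≤ 3 * Real.exp (t^2/4) := by
    have := Real.quadratic_le_exp_of_nonneg (x := t^2/4) (by positivity)
    have e2 : t^2 = |t|^2 := (sq_abs t).symm
    rw [e2] at this ⊢
    have a0 := abs_nonneg t
    nlinarith [mul_nonneg a0 (sq_nonneg (|t| - 1)), sq_nonneg (|t|^2), mul_nonneg (sq_nonneg (|t|)) (sq_nonneg (|t|-1))]
  calc Real.exp (-t^2/2) * _ ≤ Real.exp (-t^2/2) * (3 * Real.exp (t^2/4)) := by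
        gcongr; exact h1.trans h2
    _ = 3 * (Real.exp (-t^2/2) * Real.exp (t^2/4)) := by ring
    _ = _ := by rw [← Real.exp_add]; congr 2; ring

lemma fch_le_one {n : ℕ} (x w : Fin n → ℝ) (t : ℝ) : ‖fch (Tst x w) t‖ ≤ 1 := by
  unfold fch
  rw [norm_div, Complex.norm_natCast]
  have hc : (0:ℝ) < Fintype.card (Equiv.Perm (Fin n)) := by exact_mod_cast Fintype.card_pos
  rw [div_le_one hc]
  refine (norm_sum_le _ _).trans ?_
  have : ∀ ω : Equiv.Perm (Fin n), ‖Complex.exp (Complex.I * t * (Tst x w ω : ℂ))‖ = 1 := by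
    intro ω
    rw [show Complex.I * t * (Tst x w ω : ℂ) = ((t * Tst x w ω : ℝ):ℂ) * Complex.I by push_cast; ring]
    exact Complex.norm_exp_ofReal_mul_I _
  simp [this]

set_option maxHeartbeats 1000000 in
theorem edge_est (γ : ℝ) (hγ : 0 < γ) : ∃ C : ℝ, 0 < C ∧ ∃ N2 : ℕ, ∀ n : ℕ, N2 ≤ n →
    ∀ x w : Fin n → ℝ, ∑ i, x i = 0 → ∑ i, w i = 0 → (∑ i, x i^2)*(∑ i, w i^2) = n - 1 →
    |(∑ i, x i^3)*(∑ i, w i^3)/n| ≤ 1 →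
    (∀ t : ℝ, |t| ≤ n → ‖fch (Tst x w) t‖ ≤ Real.exp (-(γ * min (t^2) n))) →
    ∀ z : ℝ, |(∑ ω, if Tst x w ω ≤ z then (1:ℝ) else 0)/(Fintype.card (Equiv.Perm (Fin n)):ℝ)
      - Gedge ((∑ i, x i^3)*(∑ i, w i^3)/n) z|
      ≤ C * Real.log n^2 * (((∑ i, x i^4)*(∑ i, w i^4)+1)/n) := by
  set γ' := min γ (1/4) with hγ'
  have hγ'p : 0 < γ' := lt_min hγ (by norm_num)
  have hγ'a : γ' ≤ γ := min_le_left _ _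
  have hγ'b : γ' ≤ 1/4 := min_le_right _ _
  set K := 2/γ' with hK
  have hK8 : 8 ≤ K := by rw [hK, le_div_iff₀ hγ'p]; linarith
  have hlog : ∃ N : ℕ, ∀ n : ℕ, N ≤ n → K * Real.log n ≤ n := by
    have h := Real.isLittleO_log_id_atTop.bound (c := 1/K) (by positivity)
    have h2 := (tendsto_natCast_atTop_atTop (R := ℝ)).eventually h
    obtain ⟨N, hN⟩ := Filter.eventually_atTop.1 h2
    refine ⟨max N 1, fun n hn => ?_⟩
    have h3 := hN n (le_of_max_le_left hn)
    simp only [id, Real.norm_eq_abs, Nat.abs_cast] at h3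
    have h4 := (le_abs_self _).trans h3
    have : K * Real.log n ≤ K * (1/K * n) := by gcongr
    refine this.trans (le_of_eq ?_)
    field_simp
  obtain ⟨N, hN⟩ := hlog
  refine ⟨4404*K^2 + 78, by positivity, N + 3, ?_⟩
  intro n hn x w hx hw hXW hl hf z
  have hn3 : (3:ℝ) ≤ n := by exact_mod_cast (by omega : 3 ≤ n)
  have n0 : (0:ℝ) < n := by linarith
  have hKn := hN n (by omega)
  set lg := Real.log n with hlg
  have hlg1 : 1 ≤ lg := by
    rw [hlg, Real.le_log_iff_exp_le n0]
    linarith [Real.exp_one_lt_d9]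
  have hexp : Real.exp lg = n := Real.exp_log n0
  have hlgn : lg ≤ n - 1 := Real.log_le_sub_one_of_pos n0
  set l := (∑ i, x i^3)*(∑ i, w i^3)/n with hldef
  set κ := (((∑ i, x i^4)*(∑ i, w i^4)+1)/n) with hκ
  have hκn : 1/n ≤ κ := by
    rw [hκ]
    apply div_le_div_of_nonneg_right _ n0.le
    have : 0 ≤ (∑ i, x i^4)*(∑ i, w i^4) :=
      mul_nonneg (Finset.sum_nonneg fun i _ => by positivity) (Finset.sum_nonneg fun i _ => by positivity)
    linarith
  have hκ0 : 0 < κ := lt_of_lt_of_le (by positivity) hκn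
  set q := Real.sqrt lg with hq
  have hq2 : q^2 = lg := Real.sq_sqrt (by linarith)
  have hq1 : 1 ≤ q := by rw [hq]; exact Real.one_le_sqrt.2 hlg1
  have hqlg : q ≤ lg := by nlinarith
  set L := Real.sqrt (K*lg) with hL
  have hKlg : 8 ≤ K * lg := by nlinarith
  have hL2 : L^2 = K * lg := Real.sq_sqrt (by linarith)
  have hL1 : 1 ≤ L := by rw [hL]; exact Real.one_le_sqrt.2 (by linarith)
  set ε := 2*q/n with hε
  have hεp : 0 < ε := by positivity
  have hε1 : ε ≤ 1 := by
    rw [hε, div_le_one n0]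
    nlinarith [sq_nonneg ((n:ℝ) - 2)]
  have hεn : ε^2/4 * n^2 = lg := by rw [hε, ← hq2]; field_simp; ring
  have hexpm : Real.exp (-lg) = 1/n := by rw [Real.exp_neg, hexp, one_div]
  have hexpm2 : Real.exp (-(2*lg)) = 1/n^2 := by
    rw [show -(2*lg) = -lg + -lg by ring, Real.exp_add, hexpm]; field_simp
  have dn : ∀ t, ‖fch (Tst x w) t - gch l t‖ ≤ ‖fch (Tst x w) t‖ + ‖gch l t‖ := fun t => norm_sub_le _ _
  set b : ℝ → ℝ := fun t => (Set.Icc (-L) L).indicator (fun _ => 2202*κ*L^3) t +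
    (Set.Icc (-(n:ℝ)) n).indicator (fun _ => 4/(n:ℝ)^2) t + 4/(n:ℝ)^2 * Real.exp (-(ε^2/4) * t^2) with hb
  have i1 : Integrable ((Set.Icc (-L) L).indicator (fun _ => 2202*κ*L^3)) :=
    (integrable_indicator_iff measurableSet_Icc).2 (integrableOn_const (by simp))
  have i2 : Integrable ((Set.Icc (-(n:ℝ)) n).indicator (fun _ => 4/(n:ℝ)^2)) :=
    (integrable_indicator_iff measurableSet_Icc).2 (integrableOn_const (by simp))
  have hε4 : 0 < ε^2/4 := by positivity
  have i3 : Integrable (fun t : ℝ => 4/(n:ℝ)^2 * Real.exp (-(ε^2/4) * t^2)) :=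
    (integrable_exp_neg_mul_sq hε4).const_mul _
  have hbint : Integrable b := (i1.add i2).add i3
  have ib : ∫ t, b t = 2*L*(2202*κ*L^3) + 2*n*(4/(n:ℝ)^2) + 4/(n:ℝ)^2 * Real.sqrt (Real.pi/(ε^2/4)) := by
    have s1 : ∫ t, b t = (∫ t, (Set.Icc (-L) L).indicator (fun _ => 2202*κ*L^3) t) +
      (∫ t, (Set.Icc (-(n:ℝ)) n).indicator (fun _ => 4/(n:ℝ)^2) t) + ∫ t, 4/(n:ℝ)^2 * Real.exp (-(ε^2/4) * t^2) := by
      have := integral_add (i1.add i2) i3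
      have := integral_add i1 i2
      simp only [Pi.add_apply] at *
      simp only [hb]
      linarith
    rw [s1, integral_indicator measurableSet_Icc, integral_indicator measurableSet_Icc, integral_const_mul (4/(n:ℝ)^2) (fun t : ℝ => Real.exp (-(ε^2/4) * t^2)), integral_gaussian]
    simp only [setIntegral_const, smul_eq_mul]
    rw [Real.volume_real_Icc_of_le (by linarith), Real.volume_real_Icc_of_le (by linarith)]
    ring
  have hsq : Real.sqrt (Real.pi/(ε^2/4)) ≤ 2 * n := by
    rw [Real.sqrt_le_left (by positivity), div_le_iff₀ hε4]
    have : (2*(n:ℝ))^2 * (ε^2/4) = 4 * (ε^2/4*n^2) := by ring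
    rw [this, hεn]
    linarith [Real.pi_le_four]
  have hbd : ∀ t ≠ 0, Real.exp (-(ε^2/2)*t^2) * ‖fch (Tst x w) t - gch l t‖ / |t| ≤ b t := by
    intro t ht
    have htp : 0 < |t| := abs_pos.2 ht
    have b1 : 0 ≤ (Set.Icc (-L) L).indicator (fun _ => 2202*κ*L^3) t :=
      Set.indicator_nonneg (fun _ _ => by positivity) _
    have b2 : 0 ≤ (Set.Icc (-(n:ℝ)) n).indicator (fun _ => 4/(n:ℝ)^2) t :=
      Set.indicator_nonneg (fun _ _ => by positivity) _
    have b3 : 0 ≤ 4/(n:ℝ)^2 * Real.exp (-(ε^2/4) * t^2) := by positivity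
    have ex1 : Real.exp (-(ε^2/2)*t^2) ≤ 1 := Real.exp_le_one_iff.2 (by nlinarith [mul_nonneg (sq_nonneg ε) (sq_nonneg t)])
    have ht2 : t^2 = |t|^2 := (sq_abs t).symm
    rcases le_or_gt |t| L with hc1 | hc1
    · have e1 : (Set.Icc (-L) L).indicator (fun _ => 2202*κ*L^3) t = 2202*κ*L^3 :=
        Set.indicator_of_mem (Set.mem_Icc.2 (abs_le.1 hc1)) _
      have hst := small_t (by omega) x w hx hw hXW t
      rw [← hldef, ← hκ] at hst
      have key : Real.exp (-(ε^2/2)*t^2) * ‖fch (Tst x w) t - gch l t‖ / |t| ≤ 2202*κ*L^3 := by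
        rw [div_le_iff₀ htp]
        calc Real.exp (-(ε^2/2)*t^2) * ‖fch (Tst x w) t - gch l t‖
            ≤ 1 * ‖fch (Tst x w) t - gch l t‖ := by gcongr
          _ ≤ 1101 * κ * (t^2+t^4) := by rw [one_mul]; exact hst
          _ = 1101 * κ * (|t| + |t|^3) * |t| := by
              rw [show t^4 = (t^2)^2 by ring, ht2]; ring
          _ ≤ 1101 * κ * (L^3 + L^3) * |t| := by
              have : |t| ≤ L^3 := hc1.trans (by nlinarith [sq_nonneg L])
              gcongr
          _ = _ := by ring
      simp only [hb]
      linarith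
    · have h1t : 1 ≤ |t| := by linarith
      rcases le_or_gt |t| n with hc2 | hc2
      · have e2 : (Set.Icc (-(n:ℝ)) n).indicator (fun _ => 4/(n:ℝ)^2) t = 4/(n:ℝ)^2 :=
          Set.indicator_of_mem (Set.mem_Icc.2 (abs_le.1 hc2)) _
        have hLt : K * lg ≤ t^2 := by
          rw [← hL2, ht2]; gcongr
        have hγK : γ' * K = 2 := by rw [hK]; field_simp
        have f1 : ‖fch (Tst x w) t‖ ≤ 1/(n:ℝ)^2 := by
          refine (hf t hc2).trans ?_
          rw [← hexpm2]
          apply Real.exp_le_exp.2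
          have m1 : K * lg ≤ min (t^2) n := le_min hLt hKn
          have : γ' * (K*lg) ≤ γ * min (t^2) n := by gcongr
          have e : γ' * (K*lg) = 2*lg := by rw [← mul_assoc, hγK]
          linarith
        have g1 : ‖gch l t‖ ≤ 3/(n:ℝ)^2 := by
          refine (gch_bd l t hl).trans ?_
          rw [show 3/(n:ℝ)^2 = 3 * (1/(n:ℝ)^2) by ring, ← hexpm2]
          gcongr
          have : 8 * lg ≤ K * lg := by gcongr
          linarith
        have key : Real.exp (-(ε^2/2)*t^2) * ‖fch (Tst x w) t - gch l t‖ / |t| ≤ 4/(n:ℝ)^2 := by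
          rw [div_le_iff₀ htp]
          calc Real.exp (-(ε^2/2)*t^2) * ‖fch (Tst x w) t - gch l t‖
              ≤ 1 * ‖fch (Tst x w) t - gch l t‖ := by gcongr
            _ ≤ 4/(n:ℝ)^2 * 1 := by
                have e4 : 4/(n:ℝ)^2 = 1/(n:ℝ)^2 + 3/(n:ℝ)^2 := by ring
                rw [e4]; linarith [dn t]
            _ ≤ _ := by gcongr
        simp only [hb]
        linarith
      · have hnt : (n:ℝ)^2 ≤ t^2 := by rw [ht2]; gcongr
        have g1 : ‖gch l t‖ ≤ 3 := by
          refine (gch_bd l t hl).trans ?_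
          have : Real.exp (-(t^2)/4) ≤ 1 := Real.exp_le_one_iff.2 (by nlinarith [sq_nonneg t])
          linarith
        have f1 := fch_le_one x w t
        have ex2 : Real.exp (-(ε^2/2)*t^2) ≤ 1/n * Real.exp (-(ε^2/4)*t^2) := by
          rw [← hexpm, ← Real.exp_add]
          apply Real.exp_le_exp.2
          have : ε^2/4 * n^2 ≤ ε^2/4 * t^2 := by gcongr
          rw [hεn] at this
          linarith
        have key : Real.exp (-(ε^2/2)*t^2) * ‖fch (Tst x w) t - gch l t‖ / |t| ≤ 4/(n:ℝ)^2 * Real.exp (-(ε^2/4) * t^2) := by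
          rw [div_le_iff₀ htp]
          calc Real.exp (-(ε^2/2)*t^2) * ‖fch (Tst x w) t - gch l t‖
              ≤ (1/n * Real.exp (-(ε^2/4)*t^2)) * 4 := by
                gcongr
                linarith [dn t]
            _ = 4/(n:ℝ)^2 * Real.exp (-(ε^2/4)*t^2) * n := by field_simp
            _ ≤ _ := by gcongr
        simp only [hb]
        linarith
  have main := smoothing_ineq (Tst x w) l ε (2*q) z hl hεp hε1 (by positivity) b hbint hbd
  refine main.trans ?_
  rw [ib]
  have t1 : Real.exp (-((2*q)^2)/4) = 1/n := by
    rw [← hexpm]; congr 1; rw [← hq2]; ring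
  rw [t1]
  have t2 : 2*q*ε = 4*(lg * (1/n)) := by rw [hε, ← hq2]; ring
  have t3 : ε ≤ 2 * (lg * (1/n)) := by
    rw [hε]
    calc 2*q/n = 2*(q*(1/n)) := by ring
      _ ≤ _ := by gcongr
  have t4 : 2*(n:ℝ)*(4/(n:ℝ)^2) = 8 * (1/n) := by field_simp; norm_num
  have t5 : 4/(n:ℝ)^2 * Real.sqrt (Real.pi/(ε^2/4)) ≤ 8 * (1/n) := by
    calc _ ≤ 4/(n:ℝ)^2 * (2*n) := by gcongr
      _ = _ := by field_simp; norm_num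
  have t6 : 2*L*(2202*κ*L^3) = 4404 * K^2 * lg^2 * κ := by
    calc _ = 4404 * κ * (L^2)^2 := by ring
      _ = _ := by rw [hL2]; ring
  have t7 : 1/(n:ℝ) ≤ lg * (1/n) := by
    have : 0 < 1/(n:ℝ) := by positivity
    nlinarith
  have t8 : lg * (1/n) ≤ lg^2 * κ := by
    have : lg ≤ lg^2 := by nlinarith
    gcongr
  rw [t2, t4, t6]
  have : (4404*K^2+78)*lg^2*κ = 4404*K^2*lg^2*κ + 78*(lg^2*κ) := by ring
  rw [this]
  linarith

section Assembly
variable {n : ℕ}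

lemma sum_center (hn : 1 ≤ n) (d : Fin n → ℝ) : ∑ j, (d j - (∑ i, d i)/n) = 0 := by
  have hn0 : (0:ℝ) < n := by exact_mod_cast hn
  rw [Finset.sum_sub_distrib]
  simp only [Finset.sum_const, Finset.card_univ, Fintype.card_fin, nsmul_eq_mul]
  field_simp
  ring

lemma ctr_prod (hn : 1 ≤ n) (ev d : Fin n → ℝ) (A : Matrix (Fin n) (Fin n) ℝ)
    (hA : ∀ i j, A i j = ev i * d j) (i j : Fin n) :
    ctr A i j = (ev i - (∑ i', ev i')/n) * (d j - (∑ j', d j')/n) := by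
  have hn0 : (0:ℝ) < n := by exact_mod_cast hn
  unfold ctr rowMean colMean totMean
  simp only [hA, ← Finset.mul_sum, ← Finset.sum_mul]
  field_simp
  ring

lemma sigma2_prod (hn : 1 ≤ n) (ev d : Fin n → ℝ) (A : Matrix (Fin n) (Fin n) ℝ)
    (hA : ∀ i j, A i j = ev i * d j) :
    sigma2 A = (∑ i, (ev i - (∑ i', ev i')/n)^2) * (∑ j, (d j - (∑ j', d j')/n)^2) / ((n:ℝ) - 1) := by
  unfold sigma2
  simp only [ctr_prod hn ev d A hA, mul_pow, ← Finset.mul_sum, ← Finset.sum_mul]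

lemma rankTstd_prod (hn : 1 ≤ n) (ev d : Fin n → ℝ) (A : Matrix (Fin n) (Fin n) ℝ)
    (hA : ∀ i j, A i j = ev i * d j) (π : Equiv.Perm (Fin n)) :
    rankTstd A π = Tst (fun i => ev i - (∑ i', ev i')/n)
      (fun j => (d j - (∑ j', d j')/n)/sdev A) π := by
  have hn0 : (0:ℝ) < n := by exact_mod_cast hn
  unfold rankTstd Tst
  simp only [← mul_div_assoc, ← Finset.sum_div]
  congr 1
  unfold rankT muM totMean
  simp only [hA, ← Finset.mul_sum, ← Finset.sum_mul]
  set m := (∑ j', d j')/n with hm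
  have h1 := sum_center hn ev
  have h2 : ∑ i, d (π i) = ∑ j, d j := Equiv.sum_comp π d
  have h3 : ∑ i, (ev i - (∑ i', ev i')/n) * (d (π i) - m)
      = ∑ i, ev i * d (π i) - (∑ i', ev i')/n * ∑ i, d (π i) - (∑ i, (ev i - (∑ i', ev i')/n)) * m := by
    rw [Finset.mul_sum, Finset.sum_mul, ← Finset.sum_sub_distrib, ← Finset.sum_sub_distrib]
    exact Finset.sum_congr rfl fun i _ => by ring
  rw [h3, h1, h2]
  field_simp
  ring

lemma lam1_prod (hn : 1 ≤ n) (ev d : Fin n → ℝ) (A : Matrix (Fin n) (Fin n) ℝ)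
    (hA : ∀ i j, A i j = ev i * d j) :
    lam1 A = (∑ i, (ev i - (∑ i', ev i')/n)^3) * (∑ j, ((d j - (∑ j', d j')/n)/sdev A)^3) / n := by
  unfold lam1 hatM
  simp only [ctr_prod hn ev d A hA, mul_div_assoc, mul_pow, ← Finset.mul_sum, ← Finset.sum_mul]

lemma Fstd_prod (hn : 1 ≤ n) (ev d : Fin n → ℝ) (A : Matrix (Fin n) (Fin n) ℝ)
    (hA : ∀ i j, A i j = ev i * d j) (z : ℝ) :
    Fstd A z = (∑ ω, if Tst (fun i => ev i - (∑ i', ev i')/n)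
      (fun j => (d j - (∑ j', d j')/n)/sdev A) ω ≤ z then (1:ℝ) else 0)/(Fintype.card (Equiv.Perm (Fin n)):ℝ) := by
  unfold Fstd permExp
  simp only [rankTstd_prod hn ev d A hA]
  rw [Fintype.card_perm, Fintype.card_fin]

lemma edge1_Gedge (A : Matrix (Fin n) (Fin n) ℝ) (z : ℝ) : edge1 A z = Gedge (lam1 A) z := by
  unfold edge1 Gedge; rfl

lemma Fstd_mem (A : Matrix (Fin n) (Fin n) ℝ) (z : ℝ) : 0 ≤ Fstd A z ∧ Fstd A z ≤ 1 := by
  unfold Fstd permExp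
  have hp : (0:ℝ) < (Nat.factorial n : ℝ) := by exact_mod_cast Nat.factorial_pos n
  constructor
  · apply div_nonneg _ hp.le
    exact Finset.sum_nonneg fun π _ => by split_ifs <;> norm_num
  · rw [div_le_one hp]
    calc _ ≤ ∑ π : Equiv.Perm (Fin n), (1:ℝ) := Finset.sum_le_sum fun π _ => by split_ifs <;> norm_num
      _ = _ := by simp [Fintype.card_perm]

lemma trivial_bd (A : Matrix (Fin n) (Fin n) ℝ) (z : ℝ) : |Fstd A z - edge1 A z| ≤ 1 + |lam1 A| := by
  rw [edge1_Gedge, Gedge_eq]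
  obtain ⟨h1, h2⟩ := Fstd_mem A z
  have h3 := gaussCDF_nonneg z
  have h4 := gaussCDF_le_one z
  have h5 : |lam1 A/6 * gP z| ≤ |lam1 A| := by
    rw [abs_mul, abs_div, show |(6:ℝ)| = 6 by norm_num]
    have := gP_bd z
    have h0 := abs_nonneg (lam1 A)
    calc |lam1 A|/6 * |gP z| ≤ |lam1 A|/6 * 2 := by gcongr
      _ ≤ _ := by linarith
  obtain ⟨h6, h7⟩ := abs_le.1 h5
  rw [abs_le]; constructor <;> linarith

lemma sum4_le (y : Fin n → ℝ) : ∑ i, y i^4 ≤ (∑ i, y i^2)^2 := by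
  have : ∀ i, y i^4 ≤ y i^2 * ∑ j, y j^2 := by
    intro i
    have : y i^2 ≤ ∑ j, y j^2 := Finset.single_le_sum (f := fun j => y j^2) (fun j _ => sq_nonneg _) (Finset.mem_univ i)
    calc y i^4 = y i^2 * y i^2 := by ring
      _ ≤ _ := by gcongr
  refine (Finset.sum_le_sum fun i _ => this i).trans (le_of_eq ?_)
  rw [← Finset.sum_mul, sq]

end Assembly

set_option maxHeartbeats 1000000 in
theorem main_thm
    (J : ℝ → ℝ) (α : ℝ) (s : ℕ) (hs : 3 ≤ s) (hα : 0 < α) (hαs : α < 1 / (s : ℝ))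
    (hJnc : ∃ t₁ ∈ Set.Ioo (0 : ℝ) 1, ∃ t₂ ∈ Set.Ioo (0 : ℝ) 1, J t₁ ≠ J t₂)
    (hJcd : ContDiffOn ℝ 1 J (Set.Ioo (0 : ℝ) 1))
    (hV : condV J α)
    (e E r k : ℝ) (he : 0 < e) (hE : 0 < E) (hk : 2 < k) (hr : 0 < r) (hrk : r < k) :
    ∃ E5 : ℝ, 0 < E5 ∧
      ∀ n : ℕ, nOne J < n → ∀ ev : Fin n → ℝ,
        e * (n : ℝ) ≤ (∑ i, |ev i - (∑ i', ev i') / (n : ℝ)| ^ r) →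
        (∑ i, |ev i - (∑ i', ev i') / (n : ℝ)| ^ k) ≤ E * (n : ℝ) →
        ∀ A : Matrix (Fin n) (Fin n) ℝ,
          (∀ i j : Fin n, A i j = ev i * J (((j : ℕ) + 1 : ℝ) / ((n : ℝ) + 1))) →
          ∀ z : ℝ, |Fstd A z - edge1 A z| ≤
            E5 * Real.log n ^ 2 *
              (n : ℝ) ^ (-1 + max (4 / k - 1) 0 + max (4 / (s : ℝ) - 1) 0) := by
  have hsr : (2:ℝ) < s := by exact_mod_cast (by omega : 2 < s)
  obtain ⟨c, hc, hfirst⟩ := first_mom e E r k he hE hr hrk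
  obtain ⟨Cs, hCs, hscores⟩ := scores_s J α s hs hα hαs hJcd hV
  obtain ⟨Cx4, hCx4, hx4⟩ := fourth_mom k E hk hE
  obtain ⟨Cd4, hCd4, hd4⟩ := fourth_mom s Cs hsr hCs
  obtain ⟨cd, hcd, N1, hlow⟩ := scores_lower J hJnc hJcd
  set sl := c^2 * cd with hsl
  set su := 2 * ((1+E)*(1+Cs)) with hsu
  have hslp : 0 < sl := by positivity
  have hsup : 0 < su := by positivity
  obtain ⟨γ, hγ, N2, hdecay⟩ := decay J hJnc hJcd c (1+E) sl su hc (by positivity) hslp hsup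
  obtain ⟨C0, hC0, N3, hedge⟩ := edge_est γ hγ
  set N := N1 + N2 + N3 + 3 with hN
  set P := Cx4 * (16*Cd4)/sl^2 with hP
  have hPp : 0 < P := by positivity
  have hl2 : 0 < Real.log 2 := Real.log_pos (by norm_num)
  set T := (1+(N:ℝ))*N/(Real.log 2)^2 with hT
  have hT0 : 0 ≤ T := by positivity
  refine ⟨T + 2*P + C0 * (P+1), by positivity, ?_⟩
  intro n hn ev hev1 hev2 A hA z
  have hn2 : 2 ≤ n := by have := nOne_pos J hJnc hJcd; omega
  have hn1 : 1 ≤ n := by omega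
  have hn2r : (2:ℝ) ≤ n := by exact_mod_cast hn2
  have n0 : (0:ℝ) < n := by linarith
  have nm1 : (0:ℝ) < (n:ℝ) - 1 := by linarith
  set d : Fin n → ℝ := fun j => J (((j : ℕ) + 1 : ℝ) / ((n : ℝ) + 1)) with hd
  have hA' : ∀ i j, A i j = ev i * d j := hA
  set x : Fin n → ℝ := fun i => ev i - (∑ i', ev i')/n with hx
  set dm := (∑ j', d j')/n with hdm
  set D : Fin n → ℝ := fun j => d j - dm with hD
  set σ := sdev A with hσ
  set w : Fin n → ℝ := fun j => (d j - dm)/σ with hw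
  have hlam : lam1 A = (∑ i, x i^3)*(∑ j, w j^3)/n := lam1_prod hn1 ev d A hA'
  have hF := Fstd_prod hn1 ev d A hA' z
  rw [← hσ, ← hdm, ← hx, ← hw] at hF
  have hσ2 := sigma2_prod hn1 ev d A hA'
  set a := max (4/k-1) 0 with ha
  set b := max (4/(s:ℝ)-1) 0 with hb
  have ha0 : 0 ≤ a := le_max_right _ _
  have hb0 : 0 ≤ b := le_max_right _ _
  set Q := (n:ℝ)^(-1+a+b) with hQ
  have hQp : 0 < Q := Real.rpow_pos_of_pos n0 _
  have hQn : 1/n ≤ Q := by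
    rw [one_div, ← Real.rpow_neg_one]
    exact Real.rpow_le_rpow_of_exponent_le (by linarith) (by linarith)
  have hX2n : 0 ≤ ∑ i, x i^2 := Finset.sum_nonneg fun i _ => sq_nonneg _
  have hD2n : 0 ≤ ∑ j, D j^2 := Finset.sum_nonneg fun i _ => sq_nonneg _
  have hσ2' : sigma2 A = (∑ i, x i^2)*(∑ j, D j^2)/((n:ℝ)-1) := hσ2
  have hσ_nn : 0 ≤ sigma2 A := by rw [hσ2']; positivity
  have hσsq : σ^2 = sigma2 A := Real.sq_sqrt hσ_nn
  have hσ0 : 0 ≤ σ := Real.sqrt_nonneg _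
  have hW : ∀ m : ℕ, ∑ j, w j^m = (∑ j, D j^m)/σ^m := by
    intro m
    simp only [hw, hD, div_pow, Finset.sum_div]
  have hlogn : Real.log 2 ≤ Real.log n := Real.log_le_log (by norm_num) hn2r
  have hlogn0 : 0 < Real.log n := by linarith
  have hXWof : 0 < σ → (∑ i, x i^2)*(∑ j, w j^2) = n - 1 := by
    intro hs0
    rw [hW, ← mul_div_assoc, hσsq, div_eq_iff (by rw [← hσsq]; positivity), hσ2']
    field_simp
  have hX4n : 0 ≤ ∑ i, x i^4 := Finset.sum_nonneg fun i _ => by positivity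
  have hW4n : 0 ≤ ∑ j, w j^4 := Finset.sum_nonneg fun i _ => by positivity
  rcases lt_or_ge n N with hnN | hnN
  · have hlb : |lam1 A| ≤ n := by
      rcases hσ0.eq_or_lt with h0 | h0
      · have : ∑ j, w j^3 = 0 := by rw [hW, ← h0]; simp
        rw [hlam, this]; simp
      · have hXW := hXWof h0
        have h1 := lam_sq hn2 x w hXW
        rw [← hlam] at h1
        have h2 : (∑ i, x i^4)*(∑ j, w j^4) ≤ ((n:ℝ)-1)^2 := by
          rw [← hXW, mul_pow]
          exact mul_le_mul (sum4_le x) (sum4_le w) hW4n (by positivity)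
        have h3 : lam1 A^2 ≤ n^2 := by
          refine h1.trans ?_
          rw [div_le_iff₀ n0]
          nlinarith
        exact abs_le_of_sq_le_sq h3 n0.le
    have hnNr : (n:ℝ) ≤ N := by exact_mod_cast hnN.le
    have hN0 : (0:ℝ) < N := by linarith
    refine (trivial_bd A z).trans ?_
    have hQN : 1/(N:ℝ) ≤ Q := (one_div_le_one_div_of_le n0 hnNr).trans hQn
    calc 1 + |lam1 A| ≤ 1 + N := by linarith
      _ = T * Real.log 2^2 * (1/N) := by rw [hT]; field_simp
      _ ≤ T * Real.log n^2 * Q := by gcongr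
      _ ≤ _ := by
          gcongr
          have : 0 ≤ C0 * (P+1) := by positivity
          linarith
  · have n3 : (3:ℝ) ≤ n := by exact_mod_cast (by omega : 3 ≤ n)
    have hlg1 : 1 ≤ Real.log n := by
      rw [Real.le_log_iff_exp_le n0]
      linarith [Real.exp_one_lt_d9]
    have hx0 : ∑ i, x i = 0 := sum_center hn1 ev
    have hD0 : ∑ j, D j = 0 := sum_center hn1 d
    have hX1 : c * n ≤ ∑ i, |x i| := hfirst n x hev1 hev2
    have hX2u : ∑ i, x i^2 ≤ (1+E)*n := second_mom k E hk n x hev2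
    have hX2l : c^2 * n ≤ ∑ i, x i^2 := by
      have cs := sq_sum_le_card_mul_sum_sq (s := Finset.univ) (f := fun i => |x i|)
      simp only [Finset.card_univ, Fintype.card_fin, sq_abs] at cs
      have h1 : (c*n)^2 ≤ (∑ i, |x i|)^2 := by gcongr
      have h2 : n * (c^2 * n) ≤ n * ∑ i, x i^2 := by
        calc n * (c^2*n) = (c*n)^2 := by ring
          _ ≤ _ := h1.trans cs
      exact le_of_mul_le_mul_left h2 n0
    have hdp : ∑ j, |d j - J (1/2)|^(s:ℝ) ≤ Cs * n := by
      simp only [Real.rpow_natCast]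
      exact hscores n hn1
    have hD2u : ∑ j, D j^2 ≤ (1+Cs)*n := (center2 hn1 d (J (1/2))).trans (second_mom s Cs hsr n _ hdp)
    have hD2l : cd * n ≤ ∑ j, D j^2 := hlow n (by omega) dm
    have hX4u : ∑ i, x i^4 ≤ Cx4 * (n:ℝ)^(1+a) := hx4 n hn1 x hev2
    have hD4u : ∑ j, D j^4 ≤ 16 * (Cd4 * (n:ℝ)^(1+b)) :=
      (center4 hn1 d (J (1/2))).trans (by
        have := hd4 n hn1 _ hdp
        linarith)
    have hsl1 : sl * n ≤ σ^2 := by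
      rw [hσsq, hσ2', le_div_iff₀ nm1]
      calc sl * n * (n-1) ≤ sl * n * n := by gcongr; linarith
        _ = (c^2*n)*(cd*n) := by rw [hsl]; ring
        _ ≤ _ := by gcongr
    have hsu1 : σ^2 ≤ su * n := by
      rw [hσsq, hσ2', div_le_iff₀ nm1]
      calc (∑ i, x i^2)*(∑ j, D j^2) ≤ ((1+E)*n)*((1+Cs)*n) := by gcongr
        _ = (1+E)*(1+Cs)*n * n := by ring
        _ ≤ (1+E)*(1+Cs)*n * (2*(n-1)) := by gcongr; linarith
        _ = _ := by rw [hsu]; ring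
    have hσp : 0 < σ := by
      rcases hσ0.eq_or_lt with h0 | h0
      · rw [← h0] at hsl1
        have : 0 < sl * n := by positivity
        norm_num at hsl1
        linarith
      · exact h0
    have hXW := hXWof hσp
    have hw0 : ∑ j, w j = 0 := by
      have := hW 1
      simp only [pow_one] at this
      rw [this, hD0, zero_div]
    have hdec : ∀ t : ℝ, |t| ≤ n → ‖fch (Tst x w) t‖ ≤ Real.exp (-(γ * min (t^2) n)) := fun t ht =>
      hdecay n (by omega) x hx0 hX1 hX2u σ hσp hsl1 hsu1 dm t ht
    set V := (∑ i, x i^4)*(∑ j, w j^4)/n with hV'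
    have hV0 : 0 ≤ V := by rw [hV']; positivity
    have hVQ : V ≤ P * Q := by
      have h4 : (sl*n)^2 ≤ σ^4 := by
        rw [show σ^4 = (σ^2)^2 by ring]; gcongr
      have hD4n : 0 ≤ ∑ j, D j^4 := Finset.sum_nonneg fun i _ => by positivity
      have hw4 : ∑ j, w j^4 ≤ 16*(Cd4*(n:ℝ)^(1+b))/(sl*n)^2 := by
        rw [hW]
        gcongr
      have ep : (n:ℝ)^(1+a) * (n:ℝ)^(1+b) = Q * n^3 := by
        rw [hQ, ← Real.rpow_natCast, ← Real.rpow_add n0, ← Real.rpow_add n0]; congr 1; push_cast; ring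
      calc V ≤ (Cx4 * (n:ℝ)^(1+a)) * (16*(Cd4*(n:ℝ)^(1+b))/(sl*n)^2)/n := by
            rw [hV']; gcongr
        _ = P * ((n:ℝ)^(1+a) * (n:ℝ)^(1+b))/n^3 := by rw [hP]; field_simp
        _ = P * Q := by rw [ep]; field_simp
    have hlV : lam1 A^2 ≤ V := by
      have h1 := lam_sq hn2 x w hXW
      rw [← hlam] at h1
      exact h1
    have hlg2 : 1 ≤ Real.log n^2 := one_le_pow₀ hlg1
    rcases le_or_gt V 1 with hV1 | hV1
    · have hl1 : |lam1 A| ≤ 1 := by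
        rw [← sq_le_one_iff_abs_le_one]; linarith
      have hl1' := hl1
      rw [hlam] at hl1
      have := hedge n (by omega) x w hx0 hw0 hXW hl1 hdec z
      rw [edge1_Gedge, hF, hlam]
      refine this.trans ?_
      have hκ : ((∑ i, x i^4)*(∑ i, w i^4)+1)/n ≤ (P+1)*Q := by
        rw [add_div]
        have : (P+1)*Q = P*Q + Q := by ring
        rw [this]
        linarith
      calc _ ≤ C0 * Real.log n^2 * ((P+1)*Q) := by gcongr
        _ = (C0*(P+1)) * Real.log n^2 * Q := by ring
        _ ≤ _ := by gcongr; linarith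
    · have hlV2 : |lam1 A| ≤ V := by
        have : lam1 A^2 ≤ V^2 := hlV.trans (by nlinarith)
        exact abs_le_of_sq_le_sq this hV0
      refine (trivial_bd A z).trans ?_
      calc 1 + |lam1 A| ≤ 2 * (P*Q) := by linarith
        _ = (2*P) * 1 * Q := by ring
        _ ≤ (2*P) * Real.log n^2 * Q := by gcongr
        _ ≤ _ := by
          gcongr
          have : 0 ≤ C0 * (P+1) := by positivity
          linarith

/-- first-order Edgeworth expansion for simple linear rank statistics with
approximating scores `d_j = J(j/(n+1))`, under condition `V_α` on `J`. -/
theorem approximating_scores_first_order_edgeworth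
    (J : ℝ → ℝ) (α : ℝ) (s : ℕ) (hs : 3 ≤ s) (hα : 0 < α) (hαs : α < 1 / (s : ℝ))
    (hJnc : ∃ t₁ ∈ Set.Ioo (0 : ℝ) 1, ∃ t₂ ∈ Set.Ioo (0 : ℝ) 1, J t₁ ≠ J t₂)
    (hJcd : ContDiffOn ℝ 1 J (Set.Ioo (0 : ℝ) 1))
    (hV : condV J α)
    (e E r k : ℝ) (he : 0 < e) (hE : 0 < E) (hk : 2 < k) (hr : 0 < r) (hrk : r < k) :
    ∃ E5 : ℝ, 0 < E5 ∧
      ∀ n : ℕ, nOne J < n → ∀ ev : Fin n → ℝ,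
        e * (n : ℝ) ≤ (∑ i, |ev i - (∑ i', ev i') / (n : ℝ)| ^ r) →
        (∑ i, |ev i - (∑ i', ev i') / (n : ℝ)| ^ k) ≤ E * (n : ℝ) →
        ∀ A : Matrix (Fin n) (Fin n) ℝ,
          (∀ i j : Fin n, A i j = ev i * J (((j : ℕ) + 1 : ℝ) / ((n : ℝ) + 1))) →
          ∀ z : ℝ, |Fstd A z - edge1 A z| ≤
            E5 * Real.log n ^ 2 *
              (n : ℝ) ^ (-1 + max (4 / k - 1) 0 + max (4 / (s : ℝ) - 1) 0) := by
  exact main_thm J α s hs hα hαs hJnc hJcd hV e E r k he hE hk hr hrk
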